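/- arXiv:1012.3844 — 4 statements merged into one kernel-verified Lean document; each statement's English description precedes it below -/
import Mathlib

section
/- Let 0 < φ < 1, let f be the density of an absolutely continuous nonnegative random variable Z with distribution function F satisfying F(0) = 0, let v : [0,∞) → ℝ be locally bounded, and let m be the locally bounded solution of the defective renewal equation m(u) = φ ∫₀^u m(u−y) f(y) dy + v(u) for u ≥ 0. Assume F and v belong to C²₀([0,∞)). Define w₁(u) := φ m(0) f(u) + v'(u) and w₂(u) := φ m'(0) f(u) + w₁'(u), where m(0) = v(0) and m'(0) = φ v(0) f(0) + v'(0). Then for all u > 0: m'(u) = φ ∫₀^u m'(u−y) f(y) dy + w₁(u), and m''(u) = φ ∫₀^u m''(u−y) f(y) dy + w₂(u). -/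
open MeasureTheory Filter Topology

lemma conv_cont (m k : ℝ → ℝ) (hm : ∀ a b, IntervalIntegrable m volume a b)
    (hk : Continuous k) : Continuous fun u => ∫ s in (0:ℝ)..u, m s * k (u - s) := by
  rw [continuous_iff_continuousAt]
  intro u₀
  set R : ℝ := |u₀| + 1 with hR
  have hR0 : 0 < R := by positivity
  obtain ⟨B, hB⟩ := (isCompact_Icc (a := -(2*R)) (b := 2*R)).exists_bound_of_continuousOn hk.continuousOn
  have h := intervalIntegral.continuousAt_parametric_primitive_of_dominated (μ := volume)
    (F := fun u s => m s * k (u - s)) (fun s => |m s| * B) (-R) R (a₀ := 0) (b₀ := u₀) (x₀ := u₀)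
    ?_ ?_ ?_ ?_ ?_ ?_ ?_
  · exact ContinuousAt.comp (f := fun u : ℝ => (u, u)) h (by fun_prop)
  · intro x
    refine AEStronglyMeasurable.mul (hm _ _).aestronglyMeasurable_restrict_uIoc ?_
    exact (by fun_prop : Continuous fun s => k (x - s)).aestronglyMeasurable
  · have : ∀ᶠ x in 𝓝 u₀, x ∈ Set.Icc (-R) R := by
      apply Icc_mem_nhds
      · linarith [neg_abs_le u₀]
      · linarith [le_abs_self u₀]
    filter_upwards [this] with x hx
    refine (ae_restrict_iff' measurableSet_uIoc).2 (Eventually.of_forall fun t ht => ?_)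
    rw [Set.uIoc_of_le (by linarith)] at ht
    rw [norm_mul]
    refine mul_le_mul_of_nonneg_left (hB _ ⟨?_, ?_⟩) (norm_nonneg _)
    · linarith [hx.1, ht.2]
    · linarith [hx.2, ht.1]
  · exact ((hm _ _).abs).mul_const _
  · exact Eventually.of_forall fun t => by fun_prop
  · constructor <;> linarith
  · constructor
    · linarith [neg_abs_le u₀]
    · linarith [le_abs_self u₀]
  · simp

lemma conv_swap (A B : ℝ → ℝ) (u : ℝ) :
    ∫ s in (0:ℝ)..u, A (u - s) * B s = ∫ s in (0:ℝ)..u, A s * B (u - s) := by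
  have := intervalIntegral.integral_comp_sub_left (a := 0) (b := u) (fun s => A s * B (u - s)) u
  simpa using this

lemma conv_deriv (A A' B : ℝ → ℝ) (hA : ∀ x, HasDerivAt A (A' x) x) (hA' : Continuous A')
    (hB : Continuous B) (u : ℝ) :
    HasDerivAt (fun u => ∫ s in (0:ℝ)..u, A (u - s) * B s)
      (A 0 * B u + ∫ s in (0:ℝ)..u, A' (u - s) * B s) u := by
  have hAc : Continuous A := continuous_iff_continuousAt.2 fun x => (hA x).continuousAt
  have h := hasStrictFDerivAt_uncurry_coprod (𝕜 := ℝ) (u := (u, u))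
    (f := fun x b => ∫ s in (0:ℝ)..b, A (x - s) * B s)
    (f₁ := fun x b => ContinuousLinearMap.toSpanSingleton ℝ (∫ s in (0:ℝ)..b, A' (x - s) * B s))
    (f₂ := fun x b => ContinuousLinearMap.toSpanSingleton ℝ (A (x - b) * B b)) ?_ ?_ ?_ ?_
  · have h2 := h.hasFDerivAt.comp_hasDerivAt (f := fun u : ℝ => (u, u)) u
      ((hasDerivAt_id u).prodMk (hasDerivAt_id u))
    have e : A 0 * B u + ∫ s in (0:ℝ)..u, A' (u - s) * B s =
        (∫ s in (0:ℝ)..u, A' (u - s) * B s) * 1 + (A (u - u) * B u) * 1 := by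
      rw [sub_self]; ring
    rw [e]
    refine h2.congr_deriv ?_
    change (1:ℝ) • (∫ s in (0:ℝ)..u, A' (u - s) * B s) + (1:ℝ) • (A (u - u) * B u) = _
    simp
  · refine Eventually.of_forall fun p => ?_
    obtain ⟨x, b⟩ := p
    refine HasDerivAt.hasFDerivAt ?_
    have hc : Continuous fun q : ℝ × ℝ => A' (q.1 - q.2) * B q.2 := by fun_prop
    obtain ⟨C, hC⟩ := ((isCompact_Icc (a := x - 1) (b := x + 1)).prod
      (isCompact_uIcc (a := 0) (b := b))).exists_bound_of_continuousOn hc.continuousOn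
    refine (intervalIntegral.hasDerivAt_integral_of_dominated_loc_of_deriv_le (s := Set.Icc (x-1) (x+1))
      (bound := fun _ => C) (F' := fun x s => A' (x - s) * B s)
      (Icc_mem_nhds (by linarith) (by linarith)) ?_ ?_ ?_ ?_ ?_ ?_).2
    · exact Eventually.of_forall fun y =>
        (by fun_prop : Continuous fun s => A (y - s) * B s).aestronglyMeasurable
    · exact (by fun_prop : Continuous fun s => A (x - s) * B s).intervalIntegrable _ _
    · exact (by fun_prop : Continuous fun s => A' (x - s) * B s).aestronglyMeasurable
    · exact Eventually.of_forall fun t ht y hy => hC (y, t) ⟨hy, Set.uIoc_subset_uIcc ht⟩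
    · simp
    · refine Eventually.of_forall fun t ht y hy => ?_
      exact ((hA (y - t)).comp_sub_const y t).mul_const _
  · refine Eventually.of_forall fun p => ?_
    obtain ⟨x, b⟩ := p
    refine HasDerivAt.hasFDerivAt ?_
    have hc : Continuous fun s => A (x - s) * B s := by fun_prop
    exact intervalIntegral.integral_hasDerivAt_right (hc.intervalIntegrable _ _)
      (hc.stronglyMeasurableAtFilter _ _) hc.continuousAt
  · have hc : Continuous fun p : ℝ × ℝ => ∫ s in (0:ℝ)..p.2, A' (p.1 - s) * B s :=
      intervalIntegral.continuous_parametric_primitive_of_continuous (f := fun x s => A' (x - s) * B s)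
        (by simp only [Function.uncurry_def]; fun_prop)
    exact ((ContinuousLinearMap.toSpanSingletonCLE (𝕜 := ℝ) (E := ℝ)).continuous.comp hc).continuousAt
  · have hc : Continuous fun p : ℝ × ℝ => A (p.1 - p.2) * B p.2 := by fun_prop
    exact ((ContinuousLinearMap.toSpanSingletonCLE (𝕜 := ℝ) (E := ℝ)).continuous.comp hc).continuousAt

lemma ext_cont (k : ℝ → ℝ) (L : ℝ) (hk : ContinuousOn k (Set.Ioi 0))
    (hL : Tendsto k (𝓝[>] 0) (𝓝 L)) :
    ∃ g : ℝ → ℝ, Continuous g ∧ (∀ x, 0 < x → g x = k x) ∧ g 0 = L := by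
  refine ⟨fun x => if x ≤ 0 then L else k x, ?_, fun x hx => by simp [hx], by simp⟩
  rw [continuous_iff_continuousAt]
  intro x
  rcases lt_trichotomy x 0 with h | h | h
  · refine (continuousAt_const (y := L)).congr ?_
    filter_upwards [Iio_mem_nhds h] with y hy
    simp [le_of_lt (Set.mem_Iio.1 hy)]
  · subst h
    rw [continuousAt_iff_continuous_left'_right']
    constructor
    · refine (continuousWithinAt_const (b := L)).congr (fun y hy => ?_) ?_
      · simp [le_of_lt (Set.mem_Iio.1 hy)]
      · simp
    · unfold ContinuousWithinAt
      simp only [le_refl, if_true]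
      refine hL.congr' ?_
      filter_upwards [self_mem_nhdsWithin] with y hy
      simp [not_le.2 (Set.mem_Ioi.1 hy)]
  · refine (hk.continuousAt (Ioi_mem_nhds h)).congr ?_
    filter_upwards [Ioi_mem_nhds h] with y hy
    simp [not_le.2 (Set.mem_Ioi.1 hy)]

lemma ext_prim (h g : ℝ → ℝ) (h0 : ℝ) (hg : Continuous g)
    (hd : ∀ x, 0 < x → HasDerivAt h (g x) x) (hL : Tendsto h (𝓝[>] 0) (𝓝 h0)) :
    ∃ H : ℝ → ℝ, (∀ x, HasDerivAt H (g x) x) ∧ (∀ x, 0 < x → H x = h x) ∧ H 0 = h0 := by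
  have hH : ∀ x, HasDerivAt (fun x => h0 + ∫ t in (0:ℝ)..x, g t) (g x) x := fun x =>
    (intervalIntegral.integral_hasDerivAt_right (hg.intervalIntegrable _ _)
      (hg.stronglyMeasurableAtFilter _ _) hg.continuousAt).const_add _
  refine ⟨_, hH, fun x hx => ?_, by simp⟩
  have hF : ContinuousOn (Function.update h 0 h0) (Set.Icc 0 x) := by
    intro y hy
    rcases hy.1.eq_or_lt with e | e
    · subst e
      rw [continuousWithinAt_update_same]
      refine hL.mono_left (nhdsWithin_mono _ ?_)
      intro z hz
      exact lt_of_le_of_ne hz.1.1 (Ne.symm hz.2)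
    · refine ContinuousAt.continuousWithinAt ?_
      refine (hd y e).continuousAt.congr ?_
      filter_upwards [Ioi_mem_nhds e] with z hz
      rw [Function.update_of_ne (ne_of_gt hz)]
  have := intervalIntegral.integral_eq_sub_of_hasDerivAt_of_le hx.le hF (f' := g) (fun y hy => by
    refine (hd y hy.1).congr_of_eventuallyEq ?_
    filter_upwards [Ioi_mem_nhds hy.1] with z hz
    rw [Function.update_of_ne (ne_of_gt hz)]) (hg.intervalIntegrable _ _)
  simp only [this, Function.update_self, Function.update_of_ne hx.ne']
  ring

lemma conv_congr (A A' B B' : ℝ → ℝ) (u : ℝ) (hu : 0 ≤ u) (hA : ∀ s, 0 < s → A s = A' s)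
    (hB : ∀ s, 0 < s → B s = B' s) :
    ∫ s in (0:ℝ)..u, A (u - s) * B s = ∫ s in (0:ℝ)..u, A' (u - s) * B' s := by
  refine intervalIntegral.integral_congr_ae ?_
  have h2 : ∀ᵐ y : ℝ, y ≠ u := by simp [ae_iff]
  filter_upwards [h2] with y hy hy2
  rw [Set.uIoc_of_le hu] at hy2
  rw [hA _ (sub_pos.2 (lt_of_le_of_ne hy2.2 hy)), hB _ hy2.1]

lemma c2_facts (h : ℝ → ℝ) (hh : ContDiffOn ℝ 2 h (Set.Ioi 0)) :
    (∀ x, 0 < x → HasDerivAt h (deriv h x) x) ∧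
    (∀ x, 0 < x → HasDerivAt (deriv h) (iteratedDeriv 2 h x) x) ∧
    ContinuousOn (iteratedDeriv 2 h) (Set.Ioi 0) := by
  have h1 := (contDiffOn_succ_iff_deriv_of_isOpen (n := 1) isOpen_Ioi).1 (by simpa using! hh)
  have h2 := (contDiffOn_succ_iff_deriv_of_isOpen (n := 0) isOpen_Ioi).1 (by simpa using! h1.2.2)
  have e : iteratedDeriv 2 h = deriv (deriv h) := by
    rw [iteratedDeriv_succ, iteratedDeriv_one]
  rw [e]
  refine ⟨fun x hx => ?_, fun x hx => ?_, h2.2.2.continuousOn⟩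
  · exact (h1.1.differentiableAt (Ioi_mem_nhds hx)).hasDerivAt
  · exact (h2.1.differentiableAt (Ioi_mem_nhds hx)).hasDerivAt


lemma meas_m (φ : ℝ) (f v m : ℝ → ℝ) (hf : ContinuousOn f (Set.Ioi 0))
    (hfi : IntegrableOn f (Set.Ioi 0))
    (hm_loc : ∀ x : ℝ, 0 < x → ∃ M, ∀ u ∈ Set.Icc (0:ℝ) x, |m u| ≤ M)
    (hm_eq : ∀ u : ℝ, 0 ≤ u →
      m u = φ * (∫ y in (0:ℝ)..u, m (u - y) * f y) + v u)
    (hv_c : ContinuousOn v (Set.Ici 0)) :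
    AEMeasurable m (volume.restrict (Set.Ioi 0)) := by
  classical
  have hfm : Measurable ((Set.Ioi (0:ℝ)).indicator f) := by
    rw [← Set.piecewise_eq_indicator]
    exact hf.measurable_piecewise continuousOn_const measurableSet_Ioi
  have hvm : Measurable ((Set.Ici (0:ℝ)).indicator v) := by
    rw [← Set.piecewise_eq_indicator]
    exact hv_c.measurable_piecewise continuousOn_const measurableSet_Ici
  set fi := (Set.Ioi (0:ℝ)).indicator f with hfi_def
  set P : Set ℝ := {y | 0 < y ∧ f y ≠ 0} with hP
  have hPo : IsOpen P := hf.isOpen_inter_preimage isOpen_Ioi isOpen_ne (t := {x : ℝ | x ≠ 0})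
  set G : Set ℝ := {u | 0 < u ∧ IntervalIntegrable (fun y => m (u - y) * f y) volume 0 u} with hG
  set S : ℝ → Set ℝ := fun u => {s | 0 < s ∧ u - s ∈ P} with hS
  have hSo : ∀ u, IsOpen (S u) := fun u =>
    isOpen_Ioi.inter (hPo.preimage (by fun_prop : Continuous fun s => u - s))
  have hSm : ∀ u ∈ G, AEMeasurable m (volume.restrict (S u)) := by
    intro u hu
    have h1 : AEMeasurable (fun y => m (u - y)) (volume.restrict (P ∩ Set.Iio u)) := by
      have h2 : AEMeasurable (fun y => m (u - y) * f y) (volume.restrict (P ∩ Set.Iio u)) := by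
        refine hu.2.1.aestronglyMeasurable.aemeasurable.mono_measure (Measure.restrict_mono ?_ le_rfl)
        intro y hy
        exact ⟨hy.1.1, le_of_lt hy.2⟩
      refine (h2.div hfm.aemeasurable).congr ?_
      refine ae_restrict_of_forall_mem (hPo.inter isOpen_Iio).measurableSet ?_
      intro y hy
      have : fi y = f y := Set.indicator_of_mem (s := Set.Ioi (0:ℝ)) hy.1.1 f
      simp only [Pi.div_apply, this]
      exact mul_div_cancel_right₀ _ hy.1.2
    have hmp := (Measure.measurePreserving_sub_left volume u).restrict_preimage
      (hPo.inter isOpen_Iio : IsOpen (P ∩ Set.Iio u)).measurableSet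
    have h3 := h1.comp_quasiMeasurePreserving hmp.quasiMeasurePreserving
    have e1 : (fun y => m (u - y)) ∘ (fun x => u - x) = m := by ext x; simp
    have e2 : (fun x => u - x) ⁻¹' (P ∩ Set.Iio u) = S u := by
      ext x; simp [hS, and_comm]
    rwa [e1, e2] at h3
  obtain ⟨T, hTG, hTc, hTU⟩ := TopologicalSpace.isOpen_biUnion_countable G S (fun u _ => hSo u)
  set O := ⋃ u ∈ G, S u with hO
  have hOm : AEMeasurable m (volume.restrict O) := by
    rw [← hTU]
    have := hTc.to_subtype
    rw [Set.biUnion_eq_iUnion, aemeasurable_iUnion_iff]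
    exact fun i => hSm i (hTG i.2)
  have hOo : IsOpen O := isOpen_biUnion fun u _ => hSo u
  have hOpos : ∀ s ∈ O, 0 < s := by
    intro s hs
    simp only [hO, Set.mem_iUnion] at hs
    obtain ⟨u, hu, hs⟩ := hs
    exact hs.1
  set mt := O.indicator (hOm.mk m) with hmt
  have hmtm : Measurable mt := hOm.measurable_mk.indicator hOo.measurableSet
  have hae : ∀ᵐ s, s ∈ O → m s = mt s := by
    have := (ae_restrict_iff' hOo.measurableSet).1 hOm.ae_eq_mk
    filter_upwards [this] with s hs h
    rw [hs h, hmt, Set.indicator_of_mem h]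
  have key : ∀ u, 0 < u → S u ⊆ O →
      ∀ᵐ y, (Set.Ioc 0 u).indicator (fun y => m (u - y) * f y) y = mt (u - y) * fi y := by
    intro u hu hSu
    have h1 := (Measure.measurePreserving_sub_left volume u).quasiMeasurePreserving.ae hae
    have h2 : ∀ᵐ y : ℝ, y ≠ u := by simp [ae_iff]
    filter_upwards [h1, h2] with y hy1 hy2
    by_cases hy : y ∈ Set.Ioc 0 u
    · have hf1 : fi y = f y := Set.indicator_of_mem (s := Set.Ioi (0:ℝ)) hy.1 f
      rw [Set.indicator_of_mem hy, hf1]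
      by_cases h0 : f y = 0
      · simp [h0]
      · rw [hy1 (hSu ⟨by linarith [lt_of_le_of_ne hy.2 hy2], by simpa [hP] using ⟨hy.1, h0⟩⟩)]
    · rw [Set.indicator_of_notMem hy]
      by_cases h0 : 0 < y
      · have : u < y := by
          by_contra h
          exact hy ⟨h0, not_lt.1 h⟩
        have h3 : u - y ∉ O := fun h => by linarith [hOpos _ h]
        rw [hmt, Set.indicator_of_notMem h3]; simp
      · have : fi y = 0 := Set.indicator_of_notMem (s := Set.Ioi (0:ℝ)) h0 f
        simp [this]
  have hGS : ∀ u ∈ G, S u ⊆ O := fun u hu => Set.subset_biUnion_of_mem (u := S) hu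
  have hGiff : G = Set.Ioi 0 ∩ (⋃ k ∈ {k | 0 < k ∧ k ∉ O}, {u | u - k ∈ P})ᶜ := by
    ext u
    constructor
    · intro hu
      refine ⟨hu.1, ?_⟩
      simp only [Set.mem_compl_iff, Set.mem_iUnion, not_exists]
      intro k hk hk2
      exact hk.2 (hGS u hu ⟨hk.1, hk2⟩)
    · rintro ⟨hu, hu2⟩
      have hSu : S u ⊆ O := by
        intro s hs
        by_contra h
        apply hu2
        simp only [Set.mem_iUnion]
        exact ⟨s, ⟨hs.1, h⟩, hs.2⟩
      refine ⟨hu, ?_⟩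
      rw [intervalIntegrable_iff_integrableOn_Ioc_of_le (le_of_lt hu)]
      obtain ⟨M, hM⟩ := hm_loc u hu
      refine Integrable.mono' (g := fun y => M * |f y|)
        (((hfi.mono_set Set.Ioc_subset_Ioi_self).abs).const_mul M) ?_ ?_
      · have h1 : Measurable fun y => mt (u - y) * fi y :=
          (hmtm.comp (measurable_const.sub measurable_id)).mul hfm
        refine (h1.aemeasurable.congr ?_).aestronglyMeasurable
        refine (ae_restrict_iff' measurableSet_Ioc).2 ?_
        filter_upwards [key u hu hSu] with y hy hy2
        rw [← hy, Set.indicator_of_mem hy2]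
      · refine ae_restrict_of_forall_mem measurableSet_Ioc fun y hy => ?_
        rw [norm_mul]
        exact mul_le_mul_of_nonneg_right (hM _ ⟨by linarith [hy.2], by linarith [hy.1]⟩) (norm_nonneg _)
  have hGm : MeasurableSet G := by
    rw [hGiff]
    refine measurableSet_Ioi.inter (IsOpen.measurableSet ?_).compl
    exact isOpen_biUnion fun k _ => hPo.preimage (by fun_prop : Continuous fun u => u - k)
  have hcm : Measurable fun u => ∫ y, mt (u - y) * fi y := by
    refine StronglyMeasurable.measurable ?_
    refine StronglyMeasurable.integral_prod_right (f := fun u y => mt (u - y) * fi y) ?_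
    refine Measurable.stronglyMeasurable ?_
    exact (hmtm.comp (measurable_fst.sub measurable_snd)).mul (hfm.comp measurable_snd)
  have hfin : Measurable fun u => (if u ∈ G then φ * (∫ y, mt (u - y) * fi y) else 0) +
      (Set.Ici (0:ℝ)).indicator v u :=
    (Measurable.ite hGm (hcm.const_mul φ) measurable_const).add hvm
  refine hfin.aemeasurable.congr ?_
  refine ae_restrict_of_forall_mem measurableSet_Ioi fun u hu => ?_
  have hu' : (0:ℝ) < u := hu
  beta_reduce
  rw [Set.indicator_of_mem (show u ∈ Set.Ici (0:ℝ) from hu'.le), hm_eq u hu'.le]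
  by_cases h : u ∈ G
  · simp only [h, if_true]
    rw [intervalIntegral.integral_of_le hu'.le, ← integral_indicator measurableSet_Ioc,
      integral_congr_ae (key u hu' (hGS u h))]
  · simp only [h, if_false]
    rw [intervalIntegral.integral_undef (fun h2 => h ⟨hu', h2⟩)]
    simp


/-- under the same renewal hypotheses as Statement 2, with
`w₁(u) = φ m(0) f(u) + v'(u)` and `w₂(u) = φ m'(0) f(u) + w₁'(u)`, where
`m(0) = v(0)` and `m'(0) = φ v(0) f(0) + v'(0)`: for all `u > 0`,
`m'(u) = φ ∫₀^u m'(u-y) f(y) dy + w₁(u)` and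
`m''(u) = φ ∫₀^u m''(u-y) f(y) dy + w₂(u)`. -/
theorem stmt_4 (φ : ℝ) (hφ0 : 0 < φ) (hφ1 : φ < 1)
    (f F v m : ℝ → ℝ)
    (hf_nonneg : ∀ u : ℝ, 0 < u → 0 ≤ f u)
    (hf_integrable : MeasureTheory.IntegrableOn f (Set.Ioi 0))
    (hf_total : ∫ y in Set.Ioi (0:ℝ), f y = 1)
    (hF_def : ∀ u : ℝ, 0 ≤ u → F u = ∫ y in (0:ℝ)..u, f y)
    (hFf : ∀ u : ℝ, 0 < u → HasDerivAt F (f u) u)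
    (hv_loc : ∀ x : ℝ, 0 < x → ∃ M, ∀ u ∈ Set.Icc (0:ℝ) x, |v u| ≤ M)
    (hm_loc : ∀ x : ℝ, 0 < x → ∃ M, ∀ u ∈ Set.Icc (0:ℝ) x, |m u| ≤ M)
    (hm_eq : ∀ u : ℝ, 0 ≤ u →
      m u = φ * (∫ y in (0:ℝ)..u, m (u - y) * f y) + v u)
    (hF_c : ContinuousOn F (Set.Ici 0)) (hF_cd : ContDiffOn ℝ 2 F (Set.Ioi 0))
    (hF_lim : ∀ k ≤ 2, ∃ L, Tendsto (iteratedDeriv k F) (𝓝[>] (0:ℝ)) (𝓝 L))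
    (hv_c : ContinuousOn v (Set.Ici 0)) (hv_cd : ContDiffOn ℝ 2 v (Set.Ioi 0))
    (hv_lim : ∀ k ≤ 2, ∃ L, Tendsto (iteratedDeriv k v) (𝓝[>] (0:ℝ)) (𝓝 L))
    (f0 v'0 : ℝ)
    (hf0 : Tendsto f (𝓝[>] (0:ℝ)) (𝓝 f0))
    (hv'0 : Tendsto (deriv v) (𝓝[>] (0:ℝ)) (𝓝 v'0))
    (w₁ w₂ : ℝ → ℝ)
    (hw₁ : ∀ u : ℝ, w₁ u = φ * v 0 * f u + deriv v u)
    (hw₂ : ∀ u : ℝ, w₂ u = φ * (φ * v 0 * f0 + v'0) * f u + deriv w₁ u) :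
    ∀ u : ℝ, 0 < u →
      (deriv m u = φ * (∫ y in (0:ℝ)..u, deriv m (u - y) * f y) + w₁ u) ∧
      (iteratedDeriv 2 m u
        = φ * (∫ y in (0:ℝ)..u, iteratedDeriv 2 m (u - y) * f y) + w₂ u) := by
  have hder2 : ∀ h : ℝ → ℝ, iteratedDeriv 2 h = deriv (deriv h) := fun h => by
    rw [iteratedDeriv_succ, iteratedDeriv_one]
  obtain ⟨-, hF2, hF2c⟩ := c2_facts F hF_cd
  obtain ⟨hv1, hv2, hv2c⟩ := c2_facts v hv_cd
  have hf1 : ∀ x, 0 < x → HasDerivAt f (iteratedDeriv 2 F x) x := by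
    intro x hx
    refine (hF2 x hx).congr_of_eventuallyEq ?_
    filter_upwards [Ioi_mem_nhds hx] with y hy
    exact (hFf y hy).deriv.symm
  have hfc : ContinuousOn f (Set.Ioi 0) := fun x hx => (hf1 x hx).continuousAt.continuousWithinAt
  -- extensions
  obtain ⟨LF, hLF⟩ := hF_lim 2 le_rfl
  obtain ⟨Lv, hLv⟩ := hv_lim 2 le_rfl
  obtain ⟨g, hgc, hg, -⟩ := ext_cont _ _ hF2c hLF
  obtain ⟨fb, hfbd, hfb, hfb0⟩ := ext_prim f g f0 hgc
    (fun x hx => by rw [hg x hx]; exact hf1 x hx) hf0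
  obtain ⟨v2, hv2c', hv2e, -⟩ := ext_cont _ _ hv2c hLv
  obtain ⟨v1, hv1d, hv1e, hv10⟩ := ext_prim (deriv v) v2 v'0 hv2c'
    (fun x hx => by rw [hv2e x hx]; exact hv2 x hx) hv'0
  have hv1c : Continuous v1 := continuous_iff_continuousAt.2 fun x => (hv1d x).continuousAt
  have hvt : Tendsto v (𝓝[>] 0) (𝓝 (v 0)) :=
    (hv_c 0 (by simp)).mono_left (nhdsWithin_mono _ Set.Ioi_subset_Ici_self)
  obtain ⟨vb, hvbd, hvb, hvb0⟩ := ext_prim v v1 (v 0) hv1c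
    (fun x hx => by rw [hv1e x hx]; exact hv1 x hx) hvt
  have hfbc : Continuous fb := continuous_iff_continuousAt.2 fun x => (hfbd x).continuousAt
  have hvbc : Continuous vb := continuous_iff_continuousAt.2 fun x => (hvbd x).continuousAt
  have hvb' : ∀ u, 0 ≤ u → vb u = v u := by
    intro u hu
    rcases hu.eq_or_lt with e | e
    · rw [← e, hvb0]
    · exact hvb u e
  have core : ∀ n : ℝ → ℝ, (∀ s, 0 < s → n s = m s) → ∀ u, 0 ≤ u →
      φ * (∫ s in (0:ℝ)..u, n (u - s) * fb s) + vb u = m u := by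
    intro n hn u hu
    rw [hm_eq u hu, conv_congr n m fb f u hu hn hfb, hvb' u hu]
  -- measurability and integrability of `m`
  have hmeas := meas_m φ f v m hfc hf_integrable hm_loc hm_eq hv_c
  set mm := (Set.Ioi (0:ℝ)).indicator m with hmm
  have hmmi : ∀ a b, IntervalIntegrable mm volume a b := by
    intro a b
    obtain ⟨M, hM⟩ := hm_loc (|a| + |b| + 1) (by positivity)
    have hmmm : AEMeasurable mm volume := (aemeasurable_indicator_iff measurableSet_Ioi).2 hmeas
    refine IntervalIntegrable.mono_fun' (g := fun _ => |M|) (by simp)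
      hmmm.aestronglyMeasurable.restrict ?_
    refine ae_restrict_of_forall_mem measurableSet_uIoc fun y hy => ?_
    beta_reduce
    by_cases h : 0 < y
    · rw [hmm, Set.indicator_of_mem (show y ∈ Set.Ioi (0:ℝ) from h)]
      refine (hM y ⟨h.le, ?_⟩).trans (le_abs_self M)
      have : y ≤ max a b := hy.2
      rcases le_max_iff.1 this with h | h
      · linarith [le_abs_self a, abs_nonneg b]
      · linarith [le_abs_self b, abs_nonneg a]
    · rw [hmm, Set.indicator_of_notMem (show y ∉ Set.Ioi (0:ℝ) from h)]
      simp
  -- bootstrapping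
  set n0 : ℝ → ℝ := fun u => φ * (∫ s in (0:ℝ)..u, mm (u - s) * fb s) + vb u with hn0
  have hn0e : ∀ u, 0 ≤ u → n0 u = m u :=
    core mm fun s hs => Set.indicator_of_mem (show s ∈ Set.Ioi (0:ℝ) from hs) m
  have hn0c : Continuous n0 := by
    simp only [hn0, conv_swap]
    exact (continuous_const.mul (conv_cont mm fb hmmi hfbc)).add hvbc
  have step : ∀ n : ℝ → ℝ, Continuous n → ∀ u,
      HasDerivAt (fun u => φ * (∫ s in (0:ℝ)..u, n (u - s) * fb s) + vb u)
        (φ * (fb 0 * n u + ∫ s in (0:ℝ)..u, g (u - s) * n s) + v1 u) u := by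
    intro n hn u
    have h := ((conv_deriv fb g n hfbd hgc hn u).const_mul φ).add (hvbd u)
    refine h.congr_of_eventuallyEq (Eventually.of_forall fun x => ?_)
    simp only [Pi.add_apply]
    rw [conv_swap fb n x]
    simp only [mul_comm]
  set n1 : ℝ → ℝ := fun u => φ * (∫ s in (0:ℝ)..u, n0 (u - s) * fb s) + vb u with hn1
  have hn1e : ∀ u, 0 ≤ u → n1 u = m u := core n0 fun s hs => hn0e s hs.le
  set d1 : ℝ → ℝ := fun u => φ * (fb 0 * n0 u + ∫ s in (0:ℝ)..u, g (u - s) * n0 s) + v1 u with hd1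
  have hn1d : ∀ u, HasDerivAt n1 (d1 u) u := step n0 hn0c
  have hn1c : Continuous n1 := continuous_iff_continuousAt.2 fun x => (hn1d x).continuousAt
  have hii : ∀ n : ℝ → ℝ, Continuous n → ∀ a b, IntervalIntegrable n volume a b :=
    fun n hn a b => hn.intervalIntegrable a b
  have hd1c : Continuous d1 := by
    have := conv_cont g n0 (hii g hgc) hn0c
    simp only [hd1, conv_swap]
    fun_prop
  set n2 : ℝ → ℝ := fun u => φ * (∫ s in (0:ℝ)..u, n1 (u - s) * fb s) + vb u with hn2
  have hn2e : ∀ u, 0 ≤ u → n2 u = m u := core n1 fun s hs => hn1e s hs.le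
  set m1 : ℝ → ℝ := fun u => φ * (fb 0 * n1 u + ∫ s in (0:ℝ)..u, g (u - s) * n1 s) + v1 u with hm1
  have hn2d : ∀ u, HasDerivAt n2 (m1 u) u := step n1 hn1c
  have hn2c : Continuous n2 := continuous_iff_continuousAt.2 fun x => (hn2d x).continuousAt
  set m2 : ℝ → ℝ := fun u => φ * (fb 0 * d1 u +
    (n1 0 * g u + ∫ s in (0:ℝ)..u, d1 (u - s) * g s)) + v2 u with hm2
  have hm1d : ∀ u, HasDerivAt m1 (m2 u) u := by
    intro u
    have h := ((((hn1d u).const_mul (fb 0)).add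
      (conv_deriv n1 d1 g hn1d hd1c hgc u)).const_mul φ).add (hv1d u)
    refine h.congr_of_eventuallyEq (Eventually.of_forall fun x => ?_)
    simp only [Pi.add_apply, hm1]
    rw [conv_swap n1 g x]
    simp only [mul_comm]
  have hm1c : Continuous m1 := continuous_iff_continuousAt.2 fun x => (hm1d x).continuousAt
  have hm2c : Continuous m2 := by
    have := conv_cont d1 g (hii d1 hd1c) hgc
    simp only [hm2, conv_swap]
    fun_prop
  -- derivatives of `m`
  have hmd : ∀ u, 0 < u → HasDerivAt m (m1 u) u := by
    intro u hu
    refine (hn2d u).congr_of_eventuallyEq ?_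
    filter_upwards [Ioi_mem_nhds hu] with y hy
    exact (hn2e y (le_of_lt hy)).symm
  have hmd2 : ∀ u, 0 < u → HasDerivAt (deriv m) (m2 u) u := by
    intro u hu
    refine (hm1d u).congr_of_eventuallyEq ?_
    filter_upwards [Ioi_mem_nhds hu] with y hy
    exact (hmd y hy).deriv
  have hn20 : n2 0 = v 0 := by simp [hn2, hvb0]
  have hm10 : m1 0 = φ * v 0 * f0 + v'0 := by
    simp only [hm1, hn1, hfb0, hv10]
    simp [hvb0]
    ring
  -- first equation
  have eq1 : ∀ u, 0 < u → m1 u =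
      φ * (∫ s in (0:ℝ)..u, m1 (u - s) * fb s) + (φ * v 0 * fb u + v1 u) := by
    intro u hu
    have h := ((conv_deriv n2 m1 fb hn2d hm1c hfbc u).const_mul φ).add (hvbd u)
    have h2 : HasDerivAt m _ u := h.congr_of_eventuallyEq (by
      filter_upwards [Ioi_mem_nhds hu] with y hy
      exact (core n2 (fun s hs => hn2e s hs.le) y (le_of_lt hy)).symm)
    rw [(hmd u hu).unique h2, hn20]
    ring
  have eq2 : ∀ u, 0 < u → m2 u =
      φ * (∫ s in (0:ℝ)..u, m2 (u - s) * fb s) +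
        (φ * (φ * v 0 * f0 + v'0) * fb u + (φ * v 0 * g u + v2 u)) := by
    intro u hu
    have h := ((conv_deriv m1 m2 fb hm1d hm2c hfbc u).const_mul φ).add
      (((hfbd u).const_mul (φ * v 0)).add (hv1d u))
    have h2 : HasDerivAt m1 _ u := h.congr_of_eventuallyEq (by
      filter_upwards [Ioi_mem_nhds hu] with y hy
      exact eq1 y hy)
    rw [(hm1d u).unique h2, hm10]
    ring
  intro u hu
  have hdw : deriv w₁ u = φ * v 0 * g u + v2 u := by
    refine HasDerivAt.deriv ?_
    refine (((hfbd u).const_mul (φ * v 0)).add (hv1d u)).congr_of_eventuallyEq ?_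
    filter_upwards [Ioi_mem_nhds hu] with y hy
    rw [hw₁ y]
    simp only [Pi.add_apply, hfb y hy, hv1e y hy]
  constructor
  · rw [(hmd u hu).deriv, hw₁ u, ← hv1e u hu,
      conv_congr (deriv m) m1 f fb u hu.le (fun s hs => (hmd s hs).deriv)
        (fun s hs => (hfb s hs).symm), ← hfb u hu]
    exact eq1 u hu
  · rw [hder2 m, (hmd2 u hu).deriv, hw₂ u, hdw,
      conv_congr (deriv (deriv m)) m2 f fb u hu.le (fun s hs => (hmd2 s hs).deriv)
        (fun s hs => (hfb s hs).symm), ← hfb u hu]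
    exact eq2 u hu
end

section
/- Let 0 < φ < 1, let f be the density of an absolutely continuous nonnegative random variable Z with distribution function F satisfying F(0) = 0 and with finite variance, let v : [0,∞) → ℝ be locally bounded, assume F and v belong to C²₀([0,∞)), and let m be the locally bounded solution of m(u) = φ ∫₀^u m(u−y) f(y) dy + v(u). Define w₁(u) := φ v(0) f(u) + v'(u). Then: (i) sup_{u>0} |m'(u)| ≤ ‖w₁‖/(1−φ); (ii) sup_{u>0} |u m'(u)| ≤ ( φ E[Z] ‖m'‖ + sup_{u>0} |u w₁(u)| )/(1−φ); (iii) sup_{u>0} |u² m'(u)| ≤ ( φ ( 2 E[Z] · sup_{u>0}|u m'(u)| + E[Z²] ‖m'‖ ) + sup_{u>0} |u² w₁(u)| )/(1−φ). (The right-hand sides may be infinite.) -/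
open MeasureTheory Filter Topology
open scoped ENNReal

/-- The function `w₁(u) = φ m(0) f(u) + v'(u)` (with `m(0) = v(0)`). -/
noncomputable def w1 (φ : ℝ) (v f : ℝ → ℝ) : ℝ → ℝ :=
  fun u => φ * v 0 * f u + deriv v u

theorem aux_ext (g : ℝ → ℝ) (hg : ContDiffOn ℝ 1 g (Set.Ioi 0))
    (h0 : ∃ L, Tendsto g (𝓝[>] (0:ℝ)) (𝓝 L))
    (h1 : ∃ L, Tendsto (deriv g) (𝓝[>] (0:ℝ)) (𝓝 L)) :
    ∃ G : ℝ → ℝ, ContDiff ℝ 1 G ∧ ∀ u, 0 < u → G u = g u := by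
  obtain ⟨L0, h0⟩ := h0
  obtain ⟨L1, h1⟩ := h1
  have hdc : ContinuousOn (deriv g) (Set.Ioi 0) :=
    hg.continuousOn_deriv_of_isOpen isOpen_Ioi le_rfl
  have hgd : DifferentiableOn ℝ g (Set.Ioi 0) := hg.differentiableOn (by norm_num)
  set q : ℝ → ℝ := Function.update (deriv g) 0 L1 with hq
  have hqc : ContinuousOn q (Set.Ici 0) := by
    intro x hx
    rcases eq_or_lt_of_le (show (0:ℝ) ≤ x from hx) with h | h
    · subst h
      rw [hq, continuousWithinAt_update_same]
      rwa [show Set.Ici (0:ℝ) \ {0} = Set.Ioi 0 from Set.Ici_sdiff_left]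
    · have : ContinuousAt (deriv g) x := hdc.continuousAt (Ioi_mem_nhds h)
      have h2 : q =ᶠ[𝓝 x] deriv g := by
        filter_upwards [Ioi_mem_nhds h] with y hy
        exact Function.update_of_ne (ne_of_gt hy) _ _
      exact (this.congr h2.symm).continuousWithinAt
  set p : ℝ → ℝ := fun x => q (max x 0) with hp
  have hpc : Continuous p :=
    hqc.comp_continuous (by fun_prop) (fun x => Set.mem_Ici.2 (le_max_right _ _))
  have hpe : ∀ x, 0 < x → p x = deriv g x := by
    intro x hx
    simp only [hp, max_eq_left hx.le, hq]
    exact Function.update_of_ne (ne_of_gt hx) _ _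
  set G : ℝ → ℝ := fun x => L0 + ∫ y in (0:ℝ)..x, p y with hG
  have hGd : ∀ x, HasDerivAt G (p x) x := fun x =>
    (intervalIntegral.integral_hasDerivAt_right (hpc.intervalIntegrable _ _)
      hpc.stronglyMeasurable.stronglyMeasurableAtFilter hpc.continuousAt).const_add L0
  have hGdiff : Differentiable ℝ G := fun x => (hGd x).differentiableAt
  refine ⟨G, contDiff_one_iff_deriv.2 ⟨hGdiff, ?_⟩, ?_⟩
  · rwa [show deriv G = p from funext fun x => (hGd x).deriv]
  · have hd : DifferentiableOn ℝ (fun x => G x - g x) (Set.Ioi 0) :=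
      hGdiff.differentiableOn.sub hgd
    obtain ⟨a, ha⟩ := isOpen_Ioi.exists_is_const_of_deriv_eq_zero isPreconnected_Ioi hd (by
      intro x hx
      have h1 : DifferentiableAt ℝ g x := (hgd x hx).differentiableAt (Ioi_mem_nhds hx)
      have : deriv (fun x => G x - g x) x = deriv G x - deriv g x :=
        deriv_fun_sub (hGdiff x) h1
      rw [this, (hGd x).deriv, hpe x hx]; simp)
    have hG0 : Tendsto G (𝓝[>] 0) (𝓝 L0) := by
      have := (hGdiff.continuous.tendsto 0)
      have e : G 0 = L0 := by simp [hG]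
      rw [e] at this
      exact this.mono_left nhdsWithin_le_nhds
    have ht : Tendsto (fun x => G x - g x) (𝓝[>] 0) (𝓝 (L0 - L0)) := hG0.sub h0
    have ht2 : Tendsto (fun x => G x - g x) (𝓝[>] 0) (𝓝 a) := by
      refine tendsto_const_nhds.congr' ?_
      filter_upwards [self_mem_nhdsWithin] with x hx using (ha x hx).symm
    have := tendsto_nhds_unique ht ht2
    intro u hu
    have := ha u hu
    linarith

theorem aux_meas (φ : ℝ) (f k V m : ℝ → ℝ) (hk : Continuous k) (hV : Continuous V)
    (hfk : ∀ u, 0 < u → k u = f u)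
    (hm_eq : ∀ u : ℝ, 0 < u → m u = φ * (∫ y in (0:ℝ)..u, m (u - y) * f y) + V u) :
    AEStronglyMeasurable m (volume.restrict (Set.Ioi 0)) := by
  -- the maximal open set on which `m` is a.e. measurable
  set 𝒮 : Set (Set ℝ) := {O | IsOpen O ∧ AEStronglyMeasurable m (volume.restrict O)} with h𝒮
  set B : Set ℝ := ⋃₀ 𝒮 with hB
  have hBo : IsOpen B := isOpen_sUnion fun O hO => hO.1
  have hBm : AEStronglyMeasurable m (volume.restrict B) := by
    obtain ⟨T, hTc, hTS, hTU⟩ := TopologicalSpace.isOpen_sUnion_countable 𝒮 (fun O hO => hO.1)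
    rw [hB, ← hTU, Set.sUnion_eq_iUnion]
    have := hTc.to_subtype
    exact aestronglyMeasurable_iUnion_iff.2 fun i => (hTS i.2).2
  set mB : ℝ → ℝ := B.indicator m with hmB
  have hmBm : AEStronglyMeasurable mB volume :=
    (aestronglyMeasurable_indicator_iff hBo.measurableSet).2 hBm
  set n : ℝ → ℝ := hmBm.mk mB with hn
  have hnm : StronglyMeasurable n := hmBm.stronglyMeasurable_mk
  have hne : mB =ᵐ[volume] n := hmBm.ae_eq_mk
  set S : Set ℝ := {y | 0 < y ∧ k y ≠ 0} with hS
  have hSo : IsOpen S := (isOpen_lt continuous_const continuous_id).inter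
    (isOpen_ne_fun hk continuous_const)
  set A : Set ℝ := {u | ∀ y ∈ S, y < u → u - y ∈ B} with hA
  have hAc : IsClosed A := by
    have : A = (⋃ x ∈ {x : ℝ | 0 < x ∧ x ∉ B}, (fun u => u - x) ⁻¹' S)ᶜ := by
      ext u
      simp only [hA, Set.mem_ofPred_eq, Set.mem_compl_iff, Set.mem_iUnion, Set.mem_preimage,
        exists_prop, not_exists, not_and]
      constructor
      · rintro h x ⟨hx, hxB⟩ hu
        have := h (u - x) hu (by linarith)
        rw [sub_sub_cancel] at this
        exact hxB this
      · intro h y hy hyu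
        by_contra hc
        exact h (u - y) ⟨by linarith, hc⟩ (by rwa [sub_sub_cancel])
    rw [this, isClosed_compl_iff]
    exact isOpen_biUnion fun x _ => hSo.preimage (by fun_prop)
  set g : ℝ → ℝ := fun u => ∫ y, (Set.Ioc (0:ℝ) u).indicator (fun y => n (u - y) * k y) y with hg
  have hgm : StronglyMeasurable g := by
    have hms : MeasurableSet {z : ℝ × ℝ | 0 < z.2 ∧ z.2 ≤ z.1} :=
      (measurableSet_lt measurable_const measurable_snd).inter
        (measurableSet_le measurable_snd measurable_fst)
    have : StronglyMeasurable (({z : ℝ × ℝ | 0 < z.2 ∧ z.2 ≤ z.1}).indicator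
        (fun z => n (z.1 - z.2) * k z.2)) := by
      refine StronglyMeasurable.indicator ?_ hms
      exact (hnm.comp_measurable (measurable_fst.sub measurable_snd)).mul
        (hk.stronglyMeasurable.comp_measurable measurable_snd)
    exact this.integral_prod_right'
  have key : ∀ u, 0 < u → m u = φ * A.indicator g u + V u := by
    intro u hu
    rw [hm_eq u hu]
    congr 2
    by_cases huA : u ∈ A
    · rw [Set.indicator_of_mem huA, hg]
      simp only
      rw [intervalIntegral.integral_of_le hu.le, integral_indicator measurableSet_Ioc]
      apply setIntegral_congr_ae measurableSet_Ioc
      have h1 : ∀ᵐ y, mB (u - y) = n (u - y) :=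
        (Measure.measurePreserving_sub_left volume u).quasiMeasurePreserving.ae_eq_comp hne
      have h2 : ∀ᵐ y : ℝ, y ≠ u := by
        simp [ae_iff, measure_singleton]
      filter_upwards [h1, h2] with y h1 h2 hy
      rw [hfk y hy.1]
      by_cases hf : k y = 0
      · rw [← hfk y hy.1, hf]; simp
      · have : u - y ∈ B := huA y ⟨hy.1, hf⟩ (lt_of_le_of_ne hy.2 h2)
        rw [← h1, hmB, Set.indicator_of_mem this]
    · rw [Set.indicator_of_notMem huA]
      apply intervalIntegral.integral_undef
      intro hIntg
      apply huA
      intro y hy hyu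
      have hU : IsOpen (S ∩ Set.Iio u) := hSo.inter isOpen_Iio
      have h1 : AEStronglyMeasurable (fun y => m (u - y) * f y)
          (volume.restrict (S ∩ Set.Iio u)) := by
        refine hIntg.1.aestronglyMeasurable.mono_set ?_
        rintro z ⟨hz, hz2⟩
        exact ⟨hz.1, le_of_lt hz2⟩
      have h2 : AEStronglyMeasurable (fun y => m (u - y)) (volume.restrict (S ∩ Set.Iio u)) := by
        have h3 : AEStronglyMeasurable (fun y => m (u - y) * f y * (k y)⁻¹)
          (volume.restrict (S ∩ Set.Iio u)) :=
          h1.mul (hk.measurable.inv.aestronglyMeasurable)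
        refine h3.congr ?_
        filter_upwards [ae_restrict_mem hU.measurableSet] with z hz
        rw [← hfk z hz.1.1, mul_assoc, mul_inv_cancel₀ hz.1.2, mul_one]
      have hmp : MeasurePreserving (fun x => u - x)
          (volume.restrict ((fun x => u - x) ⁻¹' (S ∩ Set.Iio u)))
          (volume.restrict (S ∩ Set.Iio u)) :=
        (Measure.measurePreserving_sub_left volume u).restrict_preimage hU.measurableSet
      have h4 := h2.comp_measurePreserving hmp
      refine Set.mem_sUnion.2 ⟨(fun x => u - x) ⁻¹' (S ∩ Set.Iio u),
        ⟨hU.preimage (by fun_prop), ?_⟩, ?_⟩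
      · refine h4.congr (Eventually.of_forall fun x => ?_)
        simp
      · simpa using ⟨hy, hyu⟩
  have hfin : AEStronglyMeasurable (fun u => φ * A.indicator g u + V u)
      (volume.restrict (Set.Ioi 0)) := by
    have : StronglyMeasurable (A.indicator g) := hgm.indicator hAc.measurableSet
    exact ((this.const_mul φ).add hV.stronglyMeasurable).aestronglyMeasurable
  refine hfin.congr ?_
  filter_upwards [ae_restrict_mem measurableSet_Ioi] with u hu
  exact (key u hu).symm

theorem aux_lip (T : ℝ) (k : ℝ → ℝ) (hk : ContDiff ℝ 1 k) :
    ∃ P : ℝ, 0 ≤ P ∧ (∀ x ∈ Set.Icc 0 T, |deriv k x| ≤ P) ∧ (∀ x ∈ Set.Icc 0 T, |k x| ≤ P) ∧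
      ∀ x ∈ Set.Icc 0 T, ∀ y ∈ Set.Icc 0 T, |k x - k y| ≤ P * |x - y| := by
  have hd : Continuous (deriv k) := hk.continuous_deriv le_rfl
  obtain ⟨P, hP⟩ := isCompact_Icc.exists_bound_of_continuousOn (s := Set.Icc 0 T) hd.continuousOn
  obtain ⟨Q, hQ⟩ := isCompact_Icc.exists_bound_of_continuousOn (s := Set.Icc 0 T)
    hk.continuous.continuousOn
  have hP' : ∀ x ∈ Set.Icc 0 T, ‖deriv k x‖ ≤ |P| + |Q| := fun x hx =>
    (hP x hx).trans (by linarith [le_abs_self P, abs_nonneg Q])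
  have hQ' : ∀ x ∈ Set.Icc 0 T, ‖k x‖ ≤ |P| + |Q| := fun x hx =>
    (hQ x hx).trans (by linarith [le_abs_self Q, abs_nonneg P])
  refine ⟨|P| + |Q|, by positivity, hP', hQ', ?_⟩
  intro x hx y hy
  exact (convex_Icc 0 T).norm_image_sub_le_of_norm_deriv_le
    (fun z _ => (hk.differentiable (by norm_num)) z) hP' hy hx

theorem aux_deriv (T M : ℝ) (k m : ℝ → ℝ) (hT : 0 < T) (hk : ContDiff ℝ 1 k)
    (hM : ∀ u ∈ Set.Icc (0:ℝ) T, |m u| ≤ M)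
    (hm : IntervalIntegrable m volume 0 T) (u : ℝ) (hu : u < T) :
    HasDerivAt (fun u => ∫ x in (0:ℝ)..T, m x * (k (max (u - x) 0) - k 0))
      (∫ x in (0:ℝ)..T, ({x | x ≤ u}).indicator (fun x => m x * deriv k (u - x)) x) u := by
  have hM0 : 0 ≤ M := (abs_nonneg _).trans (hM 0 ⟨le_rfl, hT.le⟩)
  obtain ⟨P, hP0, hP, -, hL⟩ := aux_lip T k hk
  have hd : Continuous (deriv k) := hk.continuous_deriv le_rfl
  have hkc : Continuous k := hk.continuous
  have hIntg : ∀ u, IntervalIntegrable (fun x => m x * (k (max (u - x) 0) - k 0)) volume 0 T :=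
    fun u => hm.mul_continuousOn (Continuous.continuousOn (by fun_prop))
  refine (intervalIntegral.hasDerivAt_integral_of_dominated_loc_of_lip
    (s := Set.Iio T) (bound := fun _ => M * P) (Iio_mem_nhds hu) ?_ (hIntg u) ?_ ?_ ?_ ?_).2
  · exact Eventually.of_forall fun u => (hIntg u).aestronglyMeasurable_restrict_uIoc
  · refine AEStronglyMeasurable.indicator ?_ measurableSet_Iic
    exact (hm.mul_continuousOn (g := fun x => deriv k (u - x))
      (Continuous.continuousOn (by fun_prop))).aestronglyMeasurable_restrict_uIoc
  · refine Eventually.of_forall fun x hx => ?_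
    rw [Set.uIoc_of_le hT.le] at hx
    refine LipschitzOnWith.of_dist_le_mul fun a ha b hb => ?_
    have ha' : max (a - x) 0 ∈ Set.Icc 0 T :=
      ⟨le_max_right _ _, max_le (by linarith [hx.1, Set.mem_Iio.1 ha]) hT.le⟩
    have hb' : max (b - x) 0 ∈ Set.Icc 0 T :=
      ⟨le_max_right _ _, max_le (by linarith [hx.1, Set.mem_Iio.1 hb]) hT.le⟩
    have h1 := hL _ ha' _ hb'
    have h2 : |max (a - x) 0 - max (b - x) 0| ≤ |a - b| := by
      have := abs_max_sub_max_le_abs (a - x) (b - x) 0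
      rwa [sub_sub_sub_cancel_right] at this
    have h3 := hM x ⟨hx.1.le, hx.2⟩
    rw [Real.dist_eq, Real.dist_eq, Real.coe_nnabs, abs_of_nonneg (mul_nonneg hM0 hP0), ← mul_sub,
      sub_sub_sub_cancel_right, abs_mul, mul_assoc]
    exact mul_le_mul h3 (h1.trans (by gcongr)) (abs_nonneg _) hM0
  · exact intervalIntegrable_const
  · have h2 : ∀ᵐ x : ℝ, x ≠ u := by
      simp [ae_iff, measure_singleton]
    filter_upwards [h2] with x hx _
    rcases lt_or_gt_of_ne hx with h | h
    · rw [Set.indicator_of_mem (show x ∈ {x | x ≤ u} from h.le)]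
      have h3 : HasDerivAt (fun u => m x * (k (u - x) - k 0)) (m x * deriv k (u - x)) u := by
        have := ((hk.differentiable (by norm_num)) (u - x)).hasDerivAt
        have := (this.comp_sub_const u x)
        exact (this.sub_const _).const_mul _
      refine h3.congr_of_eventuallyEq ?_
      filter_upwards [Ioi_mem_nhds h] with y hy
      rw [max_eq_left (by linarith [Set.mem_Ioi.1 hy])]
    · rw [Set.indicator_of_notMem (show x ∉ {x | x ≤ u} from not_le.2 h)]
      refine (hasDerivAt_const u (0:ℝ)).congr_of_eventuallyEq ?_
      filter_upwards [Iio_mem_nhds h] with y hy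
      rw [max_eq_right (by linarith [Set.mem_Iio.1 hy])]
      simp

theorem aux_core (φ : ℝ) (k V m : ℝ → ℝ) (hk : ContDiff ℝ 1 k) (hV : ContDiff ℝ 1 V)
    (hmm : AEStronglyMeasurable m (volume.restrict (Set.Ioi 0)))
    (hm_loc : ∀ x : ℝ, 0 < x → ∃ M, ∀ u ∈ Set.Icc (0:ℝ) x, |m u| ≤ M)
    (hm_eq : ∀ u : ℝ, 0 ≤ u → m u = φ * (∫ y in (0:ℝ)..u, m (u - y) * k y) + V u) :
    (∀ T, 0 < T → ∃ C, ∀ u ∈ Set.Ioc 0 T, |deriv m u| ≤ C) ∧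
    ∀ u, 0 < u → deriv m u = φ * (∫ y in (0:ℝ)..u, deriv m (u - y) * k y)
      + (φ * V 0 * k u + deriv V u) := by
  have hd : Continuous (deriv k) := hk.continuous_deriv le_rfl
  have hdV : Continuous (deriv V) := hV.continuous_deriv le_rfl
  have hkc : Continuous k := hk.continuous
  have hIntg : ∀ T, 0 < T → IntervalIntegrable m volume 0 T := by
    intro T hT
    obtain ⟨M, hM⟩ := hm_loc T hT
    rw [intervalIntegrable_iff_integrableOn_Ioc_of_le hT.le]
    refine IntegrableOn.of_bound (by simp)
      (hmm.mono_set Set.Ioc_subset_Ioi_self) M ?_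
    filter_upwards [ae_restrict_mem measurableSet_Ioc] with x hx
    exact hM x ⟨hx.1.le, hx.2⟩
  have hind : ∀ T u, 0 ≤ u → u ≤ T → ∀ h : ℝ → ℝ,
      ∫ x in (0:ℝ)..T, ({x | x ≤ u}).indicator h x = ∫ x in (0:ℝ)..u, h x :=
    fun T u h0 h1 h => intervalIntegral.integral_indicator ⟨h0, h1⟩
  have hrep : ∀ T u, 0 < T → 0 ≤ u → u ≤ T → m u = φ * (k 0 * (∫ x in (0:ℝ)..u, m x) +
      ∫ x in (0:ℝ)..T, m x * (k (max (u - x) 0) - k 0)) + V u := by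
    intro T u hT h0 h1
    rw [hm_eq u h0]
    congr 2
    have e1 : (∫ y in (0:ℝ)..u, m (u - y) * k y) = ∫ x in (0:ℝ)..u, m x * k (u - x) := by
      have := intervalIntegral.integral_comp_sub_left (a := 0) (b := u)
        (fun x => m x * k (u - x)) u
      simpa using this
    have e2 : (∫ x in (0:ℝ)..T, m x * (k (max (u - x) 0) - k 0)) =
        ∫ x in (0:ℝ)..u, m x * (k (u - x) - k 0) := by
      rw [← hind T u h0 h1]
      congr 1
      ext x
      by_cases hx : x ≤ u
      · rw [Set.indicator_of_mem (show x ∈ {x | x ≤ u} from hx), max_eq_left (by linarith)]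
      · rw [Set.indicator_of_notMem (show x ∉ {x | x ≤ u} from hx),
          max_eq_right (by linarith)]
        simp
    have hmu : IntervalIntegrable m volume 0 u :=
      (hIntg T hT).mono_set (by
        rw [Set.uIcc_of_le h0, Set.uIcc_of_le hT.le]; exact Set.Icc_subset_Icc_right h1)
    rw [e1, e2, ← intervalIntegral.integral_const_mul, ← intervalIntegral.integral_add]
    · congr 1; ext x; ring
    · exact hmu.const_mul _
    · exact hmu.mul_continuousOn (Continuous.continuousOn (by fun_prop))
  have hcont : ContinuousOn m (Set.Ici 0) := by
    intro u hu
    have hu : 0 ≤ u := hu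
    have hT : 0 < u + 1 := by linarith
    obtain ⟨M, hM⟩ := hm_loc _ hT
    have h1 : ContinuousWithinAt (fun u => ∫ x in (0:ℝ)..u, m x) (Set.Icc 0 (u + 1)) u := by
      have := intervalIntegral.continuousOn_primitive_interval
        ((intervalIntegrable_iff' (by simp)).1 (hIntg _ hT))
      rw [Set.uIcc_of_le hT.le] at this
      exact this u ⟨hu, by linarith⟩
    have h2 := (aux_deriv _ M k m hT hk hM (hIntg _ hT) u (by linarith)).continuousAt
    have h3 : ContinuousWithinAt (fun u' => φ * (k 0 * (∫ x in (0:ℝ)..u', m x) +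
      ∫ x in (0:ℝ)..(u+1), m x * (k (max (u' - x) 0) - k 0)) + V u') (Set.Icc 0 (u + 1)) u :=
      ((((h1.const_mul (k 0)).add h2.continuousWithinAt).const_mul φ).add
        hV.continuous.continuousWithinAt)
    have h4 : ContinuousWithinAt m (Set.Icc 0 (u + 1)) u :=
      h3.congr (fun y hy => hrep _ y hT hy.1 hy.2) (hrep _ u hT hu (by linarith))
    refine h4.mono_of_mem_nhdsWithin ?_
    rw [← Set.Ici_inter_Iic]
    exact inter_mem_nhdsWithin _ (Iic_mem_nhds (by linarith))
  have hderiv : ∀ u, 0 < u → HasDerivAt m (φ * (k 0 * m u +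
      ∫ x in (0:ℝ)..u, m x * deriv k (u - x)) + deriv V u) u := by
    intro u hu
    have hT : 0 < u + 1 := by linarith
    obtain ⟨M, hM⟩ := hm_loc _ hT
    have hcI : ContinuousOn m (Set.Ioi 0) := hcont.mono Set.Ioi_subset_Ici_self
    have h1 : HasDerivAt (fun u => ∫ x in (0:ℝ)..u, m x) (m u) u :=
      intervalIntegral.integral_hasDerivAt_right (hIntg u hu)
        (hcI.stronglyMeasurableAtFilter isOpen_Ioi u hu) (hcI.continuousAt (Ioi_mem_nhds hu))
    have h2 := aux_deriv _ M k m hT hk hM (hIntg _ hT) u (by linarith)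
    rw [hind _ u hu.le (by linarith)] at h2
    have h3 := (((h1.const_mul (k 0)).add h2).const_mul φ).add
      ((hV.differentiable (by norm_num)) u).hasDerivAt
    refine h3.congr_of_eventuallyEq ?_
    filter_upwards [Ioo_mem_nhds hu (show u < u + 1 by linarith)] with y hy
    exact hrep _ y hT hy.1.le hy.2.le
  have hbd : ∀ T, 0 < T → ∃ C, ∀ u ∈ Set.Ioc 0 T, |deriv m u| ≤ C := by
    intro T hT
    obtain ⟨M, hM⟩ := hm_loc T hT
    obtain ⟨P, hP0, hP, -, -⟩ := aux_lip T k hk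
    obtain ⟨Q, hQ0, hQ, -, -⟩ := aux_lip T V hV
    have hM0 : 0 ≤ M := (abs_nonneg _).trans (hM 0 ⟨le_rfl, hT.le⟩)
    refine ⟨|φ| * (|k 0| * M + M * P * T) + Q, fun u hu => ?_⟩
    rw [(hderiv u hu.1).deriv]
    have h1 : |∫ x in (0:ℝ)..u, m x * deriv k (u - x)| ≤ M * P * T := by
      have := intervalIntegral.norm_integral_le_of_norm_le_const (a := 0) (b := u) (C := M * P)
        (f := fun x => m x * deriv k (u - x)) (by
          intro x hx
          rw [Set.uIoc_of_le hu.1.le] at hx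
          rw [Real.norm_eq_abs, abs_mul]
          exact mul_le_mul (hM x ⟨hx.1.le, hx.2.trans hu.2⟩)
            (hP _ ⟨by linarith [hx.2], by linarith [hx.1, hu.2]⟩) (abs_nonneg _) hM0)
      rw [sub_zero, abs_of_pos hu.1] at this
      exact this.trans (mul_le_mul_of_nonneg_left hu.2 (by positivity))
    have h2 : |k 0 * m u| ≤ |k 0| * M := by
      rw [abs_mul]
      exact mul_le_mul_of_nonneg_left (hM u ⟨hu.1.le, hu.2⟩) (abs_nonneg _)
    refine (abs_add_le _ _).trans (add_le_add ?_ (hQ u ⟨hu.1.le, hu.2⟩))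
    rw [abs_mul]
    exact mul_le_mul_of_nonneg_left ((abs_add_le _ _).trans (add_le_add h2 h1)) (abs_nonneg _)
  refine ⟨hbd, fun u hu => ?_⟩
  have hm' : IntervalIntegrable (deriv m) volume 0 u := by
    obtain ⟨C, hC⟩ := hbd u hu
    rw [intervalIntegrable_iff_integrableOn_Ioc_of_le hu.le]
    refine Measure.integrableOn_of_bounded (M := C) (by simp)
      (measurable_deriv m).aestronglyMeasurable ?_
    filter_upwards [ae_restrict_mem measurableSet_Ioc] with x hx
    exact hC x hx
  have hparts := intervalIntegral.integral_mul_deriv_eq_deriv_mul_of_hasDerivAt (a := 0) (b := u)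
    (u := m) (u' := deriv m) (v := fun x => k (u - x)) (v' := fun x => - deriv k (u - x))
    (hcont.mono (by rw [Set.uIcc_of_le hu.le]; exact Set.Icc_subset_Ici_self))
    (Continuous.continuousOn (by fun_prop))
    (by
      intro x hx
      rw [min_eq_left hu.le] at hx
      exact (hderiv x hx.1).differentiableAt.hasDerivAt)
    (by
      intro x hx
      exact ((hk.differentiable (by norm_num)) (u - x)).hasDerivAt.comp_const_sub u x)
    hm' (Continuous.intervalIntegrable (by fun_prop) _ _)
  have e1 : (∫ y in (0:ℝ)..u, deriv m (u - y) * k y) =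
      ∫ x in (0:ℝ)..u, deriv m x * k (u - x) := by
    have := intervalIntegral.integral_comp_sub_left (a := 0) (b := u)
      (fun x => deriv m x * k (u - x)) u
    simpa using this
  have e0 : m 0 = V 0 := by
    have := hm_eq 0 le_rfl
    simpa using this
  have e2 : (∫ x in (0:ℝ)..u, m x * -deriv k (u - x)) =
      - ∫ x in (0:ℝ)..u, m x * deriv k (u - x) := by
    rw [← intervalIntegral.integral_neg]
    congr 1; ext x; ring
  simp only [e2, sub_self, sub_zero, e0] at hparts
  rw [(hderiv u hu).deriv, e1]
  have : (∫ x in (0:ℝ)..u, m x * deriv k (u - x)) =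
    -(m u * k 0 - V 0 * k u - ∫ x in (0:ℝ)..u, deriv m x * k (u - x)) := by linarith
  rw [this]; ring

theorem aux_close (φ : ℝ) (hφ0 : 0 < φ) (hφ1 : φ < 1) (X W : ℝ≥0∞) (hX : X ≠ ∞)
    (h : X ≤ ENNReal.ofReal φ * X + W) : X ≤ W / ENNReal.ofReal (1 - φ) := by
  have h1 : ENNReal.ofReal (1 - φ) ≠ 0 := by simpa using hφ1
  rw [ENNReal.le_div_iff_mul_le (Or.inl h1) (Or.inl ENNReal.ofReal_ne_top),
    ENNReal.ofReal_sub _ hφ0.le, ENNReal.mul_sub (fun _ _ => hX), ENNReal.ofReal_one, mul_one,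
    tsub_le_iff_left, mul_comm X]
  exact h

theorem aux_bound (φ : ℝ) (hφ0 : 0 < φ) (f k D w : ℝ → ℝ) (hfk : ∀ u, 0 < u → k u = f u)
    (hf_nonneg : ∀ u : ℝ, 0 < u → 0 ≤ f u) (u : ℝ) (hu : 0 < u)
    (hD : D u = φ * (∫ y in (0:ℝ)..u, D (u - y) * k y) + w u) (c : ℝ) (h : ℝ → ℝ≥0∞)
    (hh : ∀ y ∈ Set.Ioo 0 u, ‖c * D (u - y)‖ₑ * ENNReal.ofReal (f y) ≤ h y) :
    ‖c * D u‖ₑ ≤ ENNReal.ofReal φ * (∫⁻ y in Set.Ioi (0:ℝ), h y) + ‖c * w u‖ₑ := by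
  have e : c * D u = φ * (∫ y in Set.Ioo (0:ℝ) u, c * D (u - y) * k y) + c * w u := by
    rw [hD, intervalIntegral.integral_of_le hu.le, integral_Ioc_eq_integral_Ioo]
    simp_rw [mul_assoc c]
    rw [integral_const_mul]
    ring
  rw [e]
  refine (enorm_add_le _ _).trans (add_le_add_left ?_ _)
  rw [enorm_mul, Real.enorm_of_nonneg hφ0.le]
  refine mul_le_mul_right ?_ _
  refine (enorm_integral_le_lintegral_enorm _).trans ?_
  refine le_trans ?_ (lintegral_mono_set (Set.Ioo_subset_Ioi_self (a := u)))
  refine setLIntegral_mono' measurableSet_Ioo fun y hy => ?_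
  rw [enorm_mul, hfk y hy.1, Real.enorm_of_nonneg (hf_nonneg y hy.1)]
  exact hh y hy

/-- bounds on the weighted first derivative of the solution of a
defective renewal equation whose underlying distribution has finite variance:
`‖m'‖ ≤ ‖w₁‖/(1-φ)`, `‖u m'(u)‖ ≤ (φ E[Z] ‖m'‖ + ‖u w₁(u)‖)/(1-φ)`, and
`‖u² m'(u)‖ ≤ (φ(2 E[Z] ‖u m'(u)‖ + E[Z²] ‖m'‖) + ‖u² w₁(u)‖)/(1-φ)`.
All suprema are over `(0,∞)`, computed in `ℝ≥0∞` (so they may be infinite). -/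
theorem stmt_8 (φ : ℝ) (hφ0 : 0 < φ) (hφ1 : φ < 1)
    (f F v m : ℝ → ℝ)
    (hf_nonneg : ∀ u : ℝ, 0 < u → 0 ≤ f u)
    (hf_integrable : MeasureTheory.IntegrableOn f (Set.Ioi 0))
    (hf_total : ∫ y in Set.Ioi (0:ℝ), f y = 1)
    (hF_def : ∀ u : ℝ, 0 ≤ u → F u = ∫ y in (0:ℝ)..u, f y)
    (hFf : ∀ u : ℝ, 0 < u → HasDerivAt F (f u) u)
    (hZ1 : MeasureTheory.IntegrableOn (fun y => y * f y) (Set.Ioi 0))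
    (hZ2 : MeasureTheory.IntegrableOn (fun y => y ^ 2 * f y) (Set.Ioi 0))
    (hv_loc : ∀ x : ℝ, 0 < x → ∃ M, ∀ u ∈ Set.Icc (0:ℝ) x, |v u| ≤ M)
    (hm_loc : ∀ x : ℝ, 0 < x → ∃ M, ∀ u ∈ Set.Icc (0:ℝ) x, |m u| ≤ M)
    (hm_eq : ∀ u : ℝ, 0 ≤ u →
      m u = φ * (∫ y in (0:ℝ)..u, m (u - y) * f y) + v u)
    (hF_c : ContinuousOn F (Set.Ici 0)) (hF_cd : ContDiffOn ℝ 2 F (Set.Ioi 0))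
    (hF_lim : ∀ k ≤ 2, ∃ L, Tendsto (iteratedDeriv k F) (𝓝[>] (0:ℝ)) (𝓝 L))
    (hv_c : ContinuousOn v (Set.Ici 0)) (hv_cd : ContDiffOn ℝ 2 v (Set.Ioi 0))
    (hv_lim : ∀ k ≤ 2, ∃ L, Tendsto (iteratedDeriv k v) (𝓝[>] (0:ℝ)) (𝓝 L)) :
    ((⨆ u ∈ Set.Ioi (0:ℝ), (‖deriv m u‖₊ : ℝ≥0∞)) ≤
        (⨆ u ∈ Set.Ioi (0:ℝ), (‖w1 φ v f u‖₊ : ℝ≥0∞)) / ENNReal.ofReal (1 - φ)) ∧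
    ((⨆ u ∈ Set.Ioi (0:ℝ), (‖u * deriv m u‖₊ : ℝ≥0∞)) ≤
        (ENNReal.ofReal (φ * ∫ y in Set.Ioi (0:ℝ), y * f y)
            * (⨆ u ∈ Set.Ioi (0:ℝ), (‖deriv m u‖₊ : ℝ≥0∞))
          + ⨆ u ∈ Set.Ioi (0:ℝ), (‖u * w1 φ v f u‖₊ : ℝ≥0∞))
          / ENNReal.ofReal (1 - φ)) ∧
    ((⨆ u ∈ Set.Ioi (0:ℝ), (‖u ^ 2 * deriv m u‖₊ : ℝ≥0∞)) ≤
        (ENNReal.ofReal φ *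
            (2 * ENNReal.ofReal (∫ y in Set.Ioi (0:ℝ), y * f y)
                * (⨆ u ∈ Set.Ioi (0:ℝ), (‖u * deriv m u‖₊ : ℝ≥0∞))
              + ENNReal.ofReal (∫ y in Set.Ioi (0:ℝ), y ^ 2 * f y)
                * (⨆ u ∈ Set.Ioi (0:ℝ), (‖deriv m u‖₊ : ℝ≥0∞)))
          + ⨆ u ∈ Set.Ioi (0:ℝ), (‖u ^ 2 * w1 φ v f u‖₊ : ℝ≥0∞))
          / ENNReal.ofReal (1 - φ)) := by
  -- smooth extensions
  have hF1 : ContDiffOn ℝ 1 (deriv F) (Set.Ioi 0) :=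
    hF_cd.deriv_of_isOpen isOpen_Ioi (by norm_num)
  obtain ⟨k, hk, hkF⟩ := aux_ext (deriv F) hF1
    (by simpa [iteratedDeriv_one] using hF_lim 1 (by norm_num))
    (by simpa [iteratedDeriv_succ, iteratedDeriv_zero] using hF_lim 2 (by norm_num))
  have hkf : ∀ u, 0 < u → k u = f u := fun u hu => by rw [hkF u hu, (hFf u hu).deriv]
  obtain ⟨V, hV, hVv⟩ := aux_ext v (hv_cd.of_le (by norm_num))
    (by simpa [iteratedDeriv_zero] using hv_lim 0 (by norm_num))
    (by simpa [iteratedDeriv_one] using hv_lim 1 (by norm_num))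
  have hV0 : V 0 = v 0 := by
    have h1 : Tendsto V (𝓝[>] 0) (𝓝 (V 0)) :=
      (hV.continuous.tendsto 0).mono_left nhdsWithin_le_nhds
    have h2 : Tendsto v (𝓝[>] 0) (𝓝 (v 0)) :=
      (hv_c 0 Set.self_mem_Ici).mono_left (nhdsWithin_mono _ Set.Ioi_subset_Ici_self)
    refine tendsto_nhds_unique h1 (h2.congr' ?_)
    filter_upwards [self_mem_nhdsWithin] with x hx using (hVv x hx).symm
  have hVv' : ∀ u, 0 ≤ u → V u = v u := fun u hu => by
    rcases eq_or_lt_of_le hu with h | h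
    · rw [← h, hV0]
    · exact hVv u h
  have hmm : AEStronglyMeasurable m (volume.restrict (Set.Ioi 0)) :=
    aux_meas φ f k V m hk.continuous hV.continuous hkf fun u hu => by
      rw [hVv u hu]; exact hm_eq u hu.le
  have hm_eq' : ∀ u : ℝ, 0 ≤ u → m u = φ * (∫ y in (0:ℝ)..u, m (u - y) * k y) + V u := by
    intro u hu
    rw [hVv' u hu, hm_eq u hu]
    congr 2
    rw [intervalIntegral.integral_of_le hu, intervalIntegral.integral_of_le hu]
    refine setIntegral_congr_fun measurableSet_Ioc fun y hy => ?_
    simp only [hkf y hy.1]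
  obtain ⟨hbd, hD'⟩ := aux_core φ k V m hk hV hmm hm_loc hm_eq'
  have hD : ∀ u, 0 < u → deriv m u = φ * (∫ y in (0:ℝ)..u, deriv m (u - y) * k y)
      + w1 φ v f u := by
    intro u hu
    have : deriv V u = deriv v u := by
      apply EventuallyEq.deriv_eq
      filter_upwards [Ioi_mem_nhds hu] with y hy using hVv y hy
    rw [hD' u hu, w1, hkf u hu, hV0, this]
  clear hD'
  have hae : ∀ᵐ y ∂(volume.restrict (Set.Ioi (0:ℝ))), 0 < y := ae_restrict_mem measurableSet_Ioi
  -- moments as lower integrals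
  have I0 : ∫⁻ y in Set.Ioi (0:ℝ), ENNReal.ofReal (f y) = 1 := by
    rw [← ofReal_integral_eq_lintegral_ofReal hf_integrable, hf_total, ENNReal.ofReal_one]
    filter_upwards [hae] with y hy using hf_nonneg y hy
  have I1 : ∫⁻ y in Set.Ioi (0:ℝ), ENNReal.ofReal (y * f y) =
      ENNReal.ofReal (∫ y in Set.Ioi (0:ℝ), y * f y) := by
    rw [← ofReal_integral_eq_lintegral_ofReal hZ1]
    filter_upwards [hae] with y hy using mul_nonneg hy.le (hf_nonneg y hy)
  have I2 : ∫⁻ y in Set.Ioi (0:ℝ), ENNReal.ofReal (y ^ 2 * f y) =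
      ENNReal.ofReal (∫ y in Set.Ioi (0:ℝ), y ^ 2 * f y) := by
    rw [← ofReal_integral_eq_lintegral_ofReal hZ2]
    filter_upwards [hae] with y hy using mul_nonneg (sq_nonneg y) (hf_nonneg y hy)
  have M0 : AEMeasurable (fun y => ENNReal.ofReal (f y)) (volume.restrict (Set.Ioi (0:ℝ))) :=
    hf_integrable.aestronglyMeasurable.aemeasurable.ennreal_ofReal
  have M1 : AEMeasurable (fun y => ENNReal.ofReal (y * f y)) (volume.restrict (Set.Ioi (0:ℝ))) :=
    hZ1.aestronglyMeasurable.aemeasurable.ennreal_ofReal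
  have M2 : AEMeasurable (fun y => ENNReal.ofReal (y ^ 2 * f y))
      (volume.restrict (Set.Ioi (0:ℝ))) :=
    hZ2.aestronglyMeasurable.aemeasurable.ennreal_ofReal
  -- local suprema
  set S : ℕ → ℝ → ℝ≥0∞ := fun j T => ⨆ u ∈ Set.Ioc (0:ℝ) T, ‖u ^ j * deriv m u‖ₑ with hS
  have hSle : ∀ j T u, u ∈ Set.Ioc (0:ℝ) T → ‖u ^ j * deriv m u‖ₑ ≤ S j T := fun j T u hu =>
    le_iSup₂ (f := fun u (_ : u ∈ Set.Ioc (0:ℝ) T) => ‖u ^ j * deriv m u‖ₑ) u hu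
  have hSfin : ∀ j T, 0 < T → S j T ≠ ∞ := by
    intro j T hT
    obtain ⟨C, hC⟩ := hbd T hT
    refine ne_top_of_le_ne_top (ENNReal.ofReal_ne_top (r := T ^ j * C)) (iSup₂_le fun u hu => ?_)
    rw [← ofReal_norm, Real.norm_eq_abs, abs_mul, abs_of_nonneg (pow_nonneg hu.1.le j)]
    exact ENNReal.ofReal_le_ofReal (mul_le_mul (pow_le_pow_left₀ hu.1.le hu.2 j) (hC u hu)
      (abs_nonneg _) (pow_nonneg hT.le j))
  have hSG : ∀ j T, S j T ≤ ⨆ u ∈ Set.Ioi (0:ℝ), ‖u ^ j * deriv m u‖ₑ := fun j T =>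
    iSup₂_le fun u hu =>
      le_iSup₂ (f := fun u (_ : u ∈ Set.Ioi (0:ℝ)) => ‖u ^ j * deriv m u‖ₑ) u hu.1
  have hW : ∀ j u, 0 < u → ‖u ^ j * w1 φ v f u‖ₑ ≤
      ⨆ u ∈ Set.Ioi (0:ℝ), ‖u ^ j * w1 φ v f u‖ₑ := fun j u hu =>
      le_iSup₂ (f := fun u (_ : u ∈ Set.Ioi (0:ℝ)) => ‖u ^ j * w1 φ v f u‖ₑ) u hu
  have hfin : ∀ j (R : ℝ≥0∞), (∀ T, 0 < T → S j T ≤ R) →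
      (⨆ u ∈ Set.Ioi (0:ℝ), ‖u ^ j * deriv m u‖ₑ) ≤ R := fun j R h =>
    iSup₂_le fun u hu => (hSle j u u ⟨hu, le_rfl⟩).trans (h u hu)
  have hsub : ∀ {T u y : ℝ}, u ∈ Set.Ioc (0:ℝ) T → y ∈ Set.Ioo 0 u → u - y ∈ Set.Ioc (0:ℝ) T :=
    fun hu hy => ⟨by linarith [hy.2], by linarith [hy.1, hu.2]⟩
  have B0 : (⨆ u ∈ Set.Ioi (0:ℝ), ‖u ^ 0 * deriv m u‖ₑ) ≤
      (⨆ u ∈ Set.Ioi (0:ℝ), ‖u ^ 0 * w1 φ v f u‖ₑ) / ENNReal.ofReal (1 - φ) := by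
    refine hfin 0 _ fun T hT => aux_close φ hφ0 hφ1 _ _ (hSfin 0 T hT) (iSup₂_le fun u hu => ?_)
    have := aux_bound φ hφ0 f k (deriv m) (w1 φ v f) hkf hf_nonneg u hu.1 (hD u hu.1) (u ^ 0)
      (fun y => S 0 T * ENNReal.ofReal (f y)) (fun y hy => by
        refine mul_le_mul_left ?_ _
        have := hSle 0 T (u - y) (hsub hu hy)
        simpa using this)
    refine this.trans (add_le_add ?_ (hW 0 u hu.1))
    rw [lintegral_const_mul'' _ M0, I0, mul_one]
  have B1 : (⨆ u ∈ Set.Ioi (0:ℝ), ‖u ^ 1 * deriv m u‖ₑ) ≤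
      (ENNReal.ofReal (φ * ∫ y in Set.Ioi (0:ℝ), y * f y)
        * (⨆ u ∈ Set.Ioi (0:ℝ), ‖u ^ 0 * deriv m u‖ₑ)
        + (⨆ u ∈ Set.Ioi (0:ℝ), ‖u ^ 1 * w1 φ v f u‖ₑ)) / ENNReal.ofReal (1 - φ) := by
    refine hfin 1 _ fun T hT => aux_close φ hφ0 hφ1 _ _ (hSfin 1 T hT) (iSup₂_le fun u hu => ?_)
    have := aux_bound φ hφ0 f k (deriv m) (w1 φ v f) hkf hf_nonneg u hu.1 (hD u hu.1) (u ^ 1)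
      (fun y => S 1 T * ENNReal.ofReal (f y) + S 0 T * ENNReal.ofReal (y * f y))
      (fun y hy => by
        have h1 := hSle 1 T (u - y) (hsub hu hy)
        have h0 := hSle 0 T (u - y) (hsub hu hy)
        have e : u ^ 1 * deriv m (u - y) = (u - y) ^ 1 * deriv m (u - y)
          + y * ((u - y) ^ 0 * deriv m (u - y)) := by ring
        rw [ENNReal.ofReal_mul hy.1.le, ← mul_assoc, ← add_mul, e]
        refine mul_le_mul_left ((enorm_add_le _ _).trans (add_le_add h1 ?_)) _
        rw [enorm_mul, Real.enorm_of_nonneg hy.1.le, mul_comm]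
        exact mul_le_mul_left h0 _)
    refine this.trans ?_
    rw [lintegral_add_left' (M0.const_mul _), lintegral_const_mul'' _ M0,
      lintegral_const_mul'' _ M1, I0, I1, mul_one, mul_add, add_assoc,
      ENNReal.ofReal_mul hφ0.le]
    refine add_le_add_right (add_le_add ?_ (hW 1 u hu.1)) _
    rw [mul_comm (S 0 T), mul_assoc]
    gcongr
    exact hSG 0 T
  have B2 : (⨆ u ∈ Set.Ioi (0:ℝ), ‖u ^ 2 * deriv m u‖ₑ) ≤
      (ENNReal.ofReal φ * (2 * ENNReal.ofReal (∫ y in Set.Ioi (0:ℝ), y * f y)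
        * (⨆ u ∈ Set.Ioi (0:ℝ), ‖u ^ 1 * deriv m u‖ₑ)
        + ENNReal.ofReal (∫ y in Set.Ioi (0:ℝ), y ^ 2 * f y)
        * (⨆ u ∈ Set.Ioi (0:ℝ), ‖u ^ 0 * deriv m u‖ₑ))
        + (⨆ u ∈ Set.Ioi (0:ℝ), ‖u ^ 2 * w1 φ v f u‖ₑ)) / ENNReal.ofReal (1 - φ) := by
    refine hfin 2 _ fun T hT => aux_close φ hφ0 hφ1 _ _ (hSfin 2 T hT) (iSup₂_le fun u hu => ?_)
    have := aux_bound φ hφ0 f k (deriv m) (w1 φ v f) hkf hf_nonneg u hu.1 (hD u hu.1) (u ^ 2)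
      (fun y => S 2 T * ENNReal.ofReal (f y) + ((2 * S 1 T) * ENNReal.ofReal (y * f y)
        + S 0 T * ENNReal.ofReal (y ^ 2 * f y)))
      (fun y hy => by
        have h2 := hSle 2 T (u - y) (hsub hu hy)
        have h1 := hSle 1 T (u - y) (hsub hu hy)
        have h0 := hSle 0 T (u - y) (hsub hu hy)
        have e : u ^ 2 * deriv m (u - y) = (u - y) ^ 2 * deriv m (u - y)
          + ((2 * y) * ((u - y) ^ 1 * deriv m (u - y))
            + y ^ 2 * ((u - y) ^ 0 * deriv m (u - y))) := by ring
        rw [ENNReal.ofReal_mul hy.1.le, ENNReal.ofReal_mul (sq_nonneg y), ← mul_assoc,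
          ← mul_assoc, ← add_mul, ← add_mul, e]
        refine mul_le_mul_left ((enorm_add_le _ _).trans (add_le_add h2
          ((enorm_add_le _ _).trans (add_le_add ?_ ?_)))) _
        · rw [enorm_mul, Real.enorm_of_nonneg (by linarith [hy.1] : (0:ℝ) ≤ 2 * y),
            ENNReal.ofReal_mul (by norm_num), ENNReal.ofReal_ofNat, mul_right_comm]
          gcongr
        · rw [enorm_mul, Real.enorm_of_nonneg (sq_nonneg y), mul_comm]
          exact mul_le_mul_left h0 _)
    refine this.trans ?_
    rw [lintegral_add_left' (M0.const_mul _), lintegral_add_left' (M1.const_mul _),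
      lintegral_const_mul'' _ M0, lintegral_const_mul'' _ M1, lintegral_const_mul'' _ M2,
      I0, I1, I2, mul_one, mul_add, add_assoc]
    refine add_le_add_right (add_le_add ?_ (hW 2 u hu.1)) _
    rw [mul_comm (S 0 T), mul_right_comm 2]
    gcongr
    · exact hSG 1 T
    · exact hSG 0 T
  simp only [pow_zero, pow_one, one_mul] at B0 B1 B2
  exact ⟨B0, B1, B2⟩
end

section
/- Let 0 < φ < 1, let f be the density of an absolutely continuous nonnegative random variable Z with distribution function F satisfying F(0) = 0 and with finite variance, let v : [0,∞) → ℝ be locally bounded, assume F and v belong to C²₀([0,∞)), and let m be the locally bounded solution of m(u) = φ ∫₀^u m(u−y) f(y) dy + v(u). Define w₁(u) := φ v(0) f(u) + v'(u) and w₂(u) := φ m'(0) f(u) + w₁'(u), where m'(0) = φ v(0) f(0) + v'(0). Then: (i) sup_{u>0} |m''(u)| ≤ ‖w₂‖/(1−φ); (ii) sup_{u>0} |u m''(u)| ≤ ( φ E[Z] ‖m''‖ + sup_{u>0} |u w₂(u)| )/(1−φ); (iii) sup_{u>0} |u² m''(u)| ≤ ( φ ( 2 E[Z] · sup_{u>0}|u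 m''(u)| + E[Z²] ‖m''‖ ) + sup_{u>0} |u² w₂(u)| )/(1−φ). (The right-hand sides may be infinite.) -/
open MeasureTheory Filter Topology
open scoped ENNReal

/-- The function `w₂(u) = φ m'(0) f(u) + w₁'(u)`, where `m'(0) = φ v(0) f(0) + v'(0)`
is expressed through the limits `f0 = f(0⁺)` and `v'0 = v'(0⁺)`. -/
noncomputable def w2 (φ f0 v'0 : ℝ) (v f : ℝ → ℝ) : ℝ → ℝ :=
  fun u => φ * (φ * v 0 * f0 + v'0) * f u + deriv (w1 φ v f) u


theorem aux_ext_s9 (g g' : ℝ → ℝ) (g0 g1 : ℝ)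
    (hd : ∀ u : ℝ, 0 < u → HasDerivAt g (g' u) u) (hc : ContinuousOn g' (Set.Ioi 0))
    (h0 : Tendsto g (𝓝[>] (0:ℝ)) (𝓝 g0)) (h1 : Tendsto g' (𝓝[>] (0:ℝ)) (𝓝 g1)) :
    ∃ k k' : ℝ → ℝ, (∀ u, 0 < u → k u = g u) ∧ (∀ u, 0 < u → k' u = g' u) ∧ k 0 = g0 ∧
      Continuous k' ∧ ∀ u, HasDerivAt k (k' u) u := by
  let k' : ℝ → ℝ := fun u => if 0 < u then g' u else g1
  have hk'pos : ∀ u, 0 < u → k' u = g' u := fun u hu => by simp [k', hu]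
  have hk'c : Continuous k' := by
    rw [continuous_iff_continuousAt]
    intro u
    rcases lt_trichotomy u 0 with hu | hu | hu
    · have : k' =ᶠ[𝓝 u] fun _ => g1 := by
        filter_upwards [Iio_mem_nhds hu] with x hx
        simp [k', not_lt.mpr (le_of_lt (Set.mem_Iio.mp hx))]
      exact continuousAt_const.congr this.symm
    · subst hu
      rw [continuousAt_iff_continuous_left'_right']
      have e : k' 0 = g1 := by simp [k']
      constructor
      · rw [ContinuousWithinAt, e]
        refine tendsto_const_nhds.congr' ?_
        filter_upwards [self_mem_nhdsWithin] with x hx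
        simp [k', not_lt.mpr (le_of_lt (Set.mem_Iio.mp hx))]
      · rw [ContinuousWithinAt, e]
        refine h1.congr' ?_
        filter_upwards [self_mem_nhdsWithin] with x hx
        exact (hk'pos x hx).symm
    · have : g' =ᶠ[𝓝 u] k' := by
        filter_upwards [Ioi_mem_nhds hu] with x hx
        exact (hk'pos x hx).symm
      exact (hc.continuousAt (Ioi_mem_nhds hu)).congr this
  refine ⟨fun u => g0 + ∫ t in (0:ℝ)..u, k' t, k', ?_, hk'pos, by simp, hk'c, ?_⟩
  · intro u hu
    have := intervalIntegral.integral_eq_sub_of_hasDerivAt_of_tendsto (f := g) (f' := k') hu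
      (fa := g0) (fb := g u) (fun x hx => by rw [hk'pos x hx.1]; exact hd x hx.1)
      (hk'c.intervalIntegrable _ _) h0 ((hd u hu).continuousAt.tendsto.mono_left nhdsWithin_le_nhds)
    simp [this]
  · intro u
    exact (intervalIntegral.integral_hasDerivAt_right (hk'c.intervalIntegrable _ _)
      (hk'c.stronglyMeasurableAtFilter _ _) hk'c.continuousAt).const_add g0

theorem aux_conv_deriv (m f f' : ℝ → ℝ) (hm : Continuous m) (hf' : Continuous f')
    (hd : ∀ u, HasDerivAt f (f' u) u) (u : ℝ) :
    HasDerivAt (fun b => ∫ s in (0:ℝ)..b, m s * f (b - s))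
      (m u * f 0 + ∫ s in (0:ℝ)..u, m s * f' (u - s)) u := by
  have hf : Continuous f := continuous_iff_continuousAt.mpr fun x => (hd x).continuousAt
  have hK : HasDerivAt (fun b => ∫ s in (0:ℝ)..u, m s * f (b - s))
      (∫ s in (0:ℝ)..u, m s * f' (u - s)) u := by
    have hcomp : IsCompact (Metric.closedBall u 1 ×ˢ Set.uIcc 0 u) :=
      (isCompact_closedBall u 1).prod isCompact_uIcc
    obtain ⟨C, hC⟩ := hcomp.exists_bound_of_continuousOn
      (f := fun p : ℝ × ℝ => m p.2 * f' (p.1 - p.2)) (by fun_prop)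
    refine (intervalIntegral.hasDerivAt_integral_of_dominated_loc_of_deriv_le
      (F := fun b s => m s * f (b - s)) (F' := fun b s => m s * f' (b - s))
      (bound := fun _ => C) (s := Metric.closedBall u 1)
      (Metric.closedBall_mem_nhds u one_pos) ?_ ?_ ?_ ?_ ?_ ?_).2
    · refine Eventually.of_forall fun x => ?_
      exact Continuous.aestronglyMeasurable (by fun_prop)
    · exact Continuous.intervalIntegrable (by fun_prop) _ _
    · exact Continuous.aestronglyMeasurable (by fun_prop)
    · refine Eventually.of_forall fun t ht x hx => ?_
      exact hC (x, t) ⟨hx, Set.uIoc_subset_uIcc ht⟩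
    · exact intervalIntegrable_const
    · refine Eventually.of_forall fun t ht x hx => ?_
      have := (hd (x - t)).comp_sub_const x t
      exact this.const_mul (m t)
  have hL : HasDerivAt (fun b => ∫ s in u..b, m s * f (b - s)) (m u * f 0) u := by
    rw [hasDerivAt_iff_isLittleO, Asymptotics.isLittleO_iff]
    intro ε hε
    have hcont : Continuous (fun p : ℝ × ℝ => m p.2 * f (p.1 - p.2)) := by fun_prop
    have hca := Metric.continuousAt_iff.mp (hcont.continuousAt (x := (u, u))) ε hε
    obtain ⟨δ, hδ, hh⟩ := hca
    filter_upwards [Metric.ball_mem_nhds u hδ] with b hb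
    have e : (∫ s in u..b, m s * f (b - s)) - (∫ s in u..u, m s * f (u - s)) - (b - u) • (m u * f 0)
        = ∫ s in u..b, (m s * f (b - s) - m u * f 0) := by
      rw [intervalIntegral.integral_sub (Continuous.intervalIntegrable (by fun_prop) _ _)
        intervalIntegrable_const]
      simp
      ring
    rw [e, Real.norm_eq_abs (b - u)]
    refine intervalIntegral.norm_integral_le_of_norm_le_const fun s hs => ?_
    have hs' := Set.uIoc_subset_uIcc hs
    have hsu : |s - u| ≤ |b - u| := by
      have := Set.abs_sub_left_of_mem_uIcc hs'
      exact this
    have := @hh (b, s) (by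
      rw [Prod.dist_eq]
      refine max_lt hb ?_
      exact lt_of_le_of_lt hsu hb)
    simp only [sub_self] at this
    rw [Real.dist_eq] at this
    exact this.le
  have := hL.add hK
  refine this.congr_of_eventuallyEq (Eventually.of_forall fun b => ?_)
  simp only [Pi.add_apply]
  rw [add_comm, intervalIntegral.integral_add_adjacent_intervals]
  · exact Continuous.intervalIntegrable (by fun_prop) _ _
  · exact Continuous.intervalIntegrable (by fun_prop) _ _

theorem aux_flip (m f : ℝ → ℝ) (u : ℝ) :
    ∫ y in (0:ℝ)..u, m (u - y) * f y = ∫ s in (0:ℝ)..u, m s * f (u - s) := by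
  have := intervalIntegral.integral_comp_sub_left (a := 0) (b := u) (fun s => m s * f (u - s)) u
  simpa using this

theorem aux_step (φ : ℝ) (m f f' v v' : ℝ → ℝ) (hm : Continuous m) (hf' : Continuous f')
    (hd : ∀ u, HasDerivAt f (f' u) u) (hv' : Continuous v')
    (hv : ∀ u, 0 < u → HasDerivAt v (v' u) u)
    (heq : ∀ u, 0 ≤ u → m u = φ * (∫ y in (0:ℝ)..u, m (u - y) * f y) + v u) :
    ∃ m' : ℝ → ℝ, Continuous m' ∧ (∀ u, 0 < u → HasDerivAt m (m' u) u) ∧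
      ∀ u, 0 ≤ u → m' u = φ * (∫ y in (0:ℝ)..u, m' (u - y) * f y) + (φ * v 0 * f u + v' u) := by
  have hf : Continuous f := continuous_iff_continuousAt.mpr fun x => (hd x).continuousAt
  have hm0 : m 0 = v 0 := by simpa using heq 0 le_rfl
  let m' : ℝ → ℝ := fun u => φ * (m u * f 0 + ∫ s in (0:ℝ)..u, m s * f' (u - s)) + v' u
  have hm'c : Continuous m' := by
    have : Continuous fun u => ∫ s in (0:ℝ)..u, m s * f' (u - s) :=
      intervalIntegral.continuous_parametric_intervalIntegral_of_continuous
        (f := fun u s => m s * f' (u - s)) (by fun_prop) continuous_id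
    fun_prop
  have hmd : ∀ u, 0 < u → HasDerivAt m (m' u) u := by
    intro u hu
    have := ((aux_conv_deriv m f f' hm hf' hd u).const_mul φ).add (hv u hu)
    refine this.congr_of_eventuallyEq ?_
    filter_upwards [Ioi_mem_nhds hu] with x hx
    rw [heq x (le_of_lt hx), aux_flip]
    rfl
  refine ⟨m', hm'c, hmd, fun u hu => ?_⟩
  rw [aux_flip]
  have ibp := intervalIntegral.integral_mul_deriv_eq_deriv_mul_of_hasDeriv_right (a := 0) (b := u)
    (u := m) (u' := m') (v := fun s => - f (u - s)) (v' := fun s => f' (u - s))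
    hm.continuousOn (by fun_prop)
    (fun x hx => (hmd x (by rw [min_eq_left hu] at hx; exact hx.1)).hasDerivWithinAt)
    (fun x _ => by
      have := ((hd (u - x)).comp_const_sub u x).neg
      simp only [neg_neg] at this
      exact this.hasDerivWithinAt)
    (hm'c.intervalIntegrable _ _) (Continuous.intervalIntegrable (by fun_prop) _ _)
  have e : ∀ u, m' u = φ * (m u * f 0 + ∫ s in (0:ℝ)..u, m s * f' (u - s)) + v' u := fun _ => rfl
  rw [e u, ibp]
  simp only [mul_neg, intervalIntegral.integral_neg, sub_self, sub_zero, hm0]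
  ring

theorem aux_conv_cont (m k : ℝ → ℝ) (X M : ℝ) (hk : Continuous k)
    (hm : AEStronglyMeasurable m (volume.restrict (Set.Ioo 0 X)))
    (hM : ∀ s ∈ Set.Ioo 0 X, |m s| ≤ M) :
    ∃ g : ℝ → ℝ, Continuous g ∧
      ∀ u, 0 ≤ u → u ≤ X → g u = ∫ s in (0:ℝ)..u, m s * k (u - s) := by
  refine ⟨fun u => ∫ s in Set.Ioo 0 X, (Set.Iio u).indicator (fun s => m s * k (u - s)) s, ?_, ?_⟩
  · rw [continuous_iff_continuousAt]
    intro u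
    obtain ⟨C, hC⟩ := ((isCompact_closedBall u 1).prod (isCompact_Icc (a := (0:ℝ)) (b := X))).exists_bound_of_continuousOn
      (f := fun p : ℝ × ℝ => k (p.1 - p.2)) (by fun_prop)
    refine continuousAt_of_dominated (bound := fun _ => |M| * |C|) ?_ ?_ ?_ ?_
    · refine Eventually.of_forall fun x => ?_
      refine AEStronglyMeasurable.indicator ?_ measurableSet_Iio
      exact hm.mul (Continuous.aestronglyMeasurable (by fun_prop))
    · filter_upwards [Metric.closedBall_mem_nhds u one_pos] with x hx
      filter_upwards [ae_restrict_mem measurableSet_Ioo] with s hs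
      refine (norm_indicator_le_norm_self _ _).trans ?_
      rw [norm_mul]
      exact mul_le_mul ((hM s hs).trans (le_abs_self M))
        ((hC (x, s) ⟨hx, Set.Ioo_subset_Icc_self hs⟩).trans (le_abs_self C)) (norm_nonneg _) (abs_nonneg _)
    · exact integrable_const _
    · have : ∀ᵐ s ∂(volume.restrict (Set.Ioo (0:ℝ) X)), s ≠ u :=
        ae_restrict_of_ae (by simp [ae_iff])
      filter_upwards [this] with s hs
      rcases lt_or_gt_of_ne hs with h | h
      · have : (fun x => m s * k (x - s)) =ᶠ[𝓝 u]
            fun x => (Set.Iio x).indicator (fun s => m s * k (x - s)) s := by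
          filter_upwards [Ioi_mem_nhds h] with x hx
          rw [Set.indicator_of_mem (by exact hx)]
        exact ContinuousAt.congr (by fun_prop) this
      · have : (fun x => (0:ℝ)) =ᶠ[𝓝 u]
            fun x => (Set.Iio x).indicator (fun s => m s * k (x - s)) s := by
          filter_upwards [Iio_mem_nhds h] with x hx
          rw [Set.indicator_of_notMem (by simpa using le_of_lt (Set.mem_Iio.mp hx))]
        exact continuousAt_const.congr this
  · intro u hu huX
    beta_reduce
    rw [setIntegral_indicator measurableSet_Iio, intervalIntegral.integral_of_le hu,
      integral_Ioc_eq_integral_Ioo]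
    congr 2
    ext s
    simp only [Set.mem_inter_iff, Set.mem_Ioo, Set.mem_Iio]
    constructor
    · rintro ⟨⟨a, b⟩, c⟩; exact ⟨a, c⟩
    · rintro ⟨a, c⟩; exact ⟨⟨a, c.trans_le huX⟩, c⟩

theorem aux_null (U E : Set ℝ) (hU : IsOpen U) (hU0 : ∀ a > (0:ℝ), ∃ y ∈ U, 0 < y ∧ y < a)
    (hE : ∀ x ∈ E, ∀ y ∈ E, y - x ∉ U) : volume E = 0 := by
  have h1 : ∀ x ∈ closure E, ∀ y ∈ closure E, y - x ∉ U := by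
    have hcl : IsClosed {p : ℝ × ℝ | p.2 - p.1 ∉ U} :=
      (hU.isClosed_compl).preimage (continuous_snd.sub continuous_fst)
    have : closure (E ×ˢ E) ⊆ {p : ℝ × ℝ | p.2 - p.1 ∉ U} :=
      closure_minimal (fun p hp => hE p.1 hp.1 p.2 hp.2) hcl
    intro x hx y hy
    have hmem : (x, y) ∈ closure (E ×ˢ E) := by rw [closure_prod_eq]; exact ⟨hx, hy⟩
    exact this hmem
  by_contra hne
  have hpos : 0 < volume (closure E) :=
    (pos_iff_ne_zero.mpr hne).trans_le (measure_mono subset_closure)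
  have hn := Measure.sub_mem_nhds_zero_of_addHaar_pos volume (closure E) isClosed_closure.measurableSet hpos
  obtain ⟨a, ha, hsub⟩ := Metric.mem_nhds_iff.mp hn
  obtain ⟨y, hy, hy0, hya⟩ := hU0 a ha
  have := hsub (show y ∈ Metric.ball (0:ℝ) a by simp [abs_of_pos hy0, hya])
  obtain ⟨p, hp, q, hq, rfl⟩ := Set.mem_sub.mp this
  exact h1 q hq p hp hy

theorem aux_meas_s9 (φ : ℝ) (m k v : ℝ → ℝ) (hk : Continuous k) (hv : ContinuousOn v (Set.Ici 0))
    (hm_loc : ∀ x : ℝ, 0 < x → ∃ M, ∀ u ∈ Set.Icc (0:ℝ) x, |m u| ≤ M)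
    (heq : ∀ u, 0 ≤ u → m u = φ * (∫ y in (0:ℝ)..u, m (u - y) * k y) + v u) :
    AEStronglyMeasurable m (volume.restrict (Set.Ioi 0)) := by
  by_cases hcase : ∃ a > (0:ℝ), ∀ y, 0 < y → y < a → k y = 0
  · obtain ⟨a, ha, hka⟩ := hcase
    have step : ∀ n : ℕ, AEStronglyMeasurable m (volume.restrict (Set.Ioo 0 (n * a))) := by
      intro n
      induction n with
      | zero => simp
      | succ n ih =>
        set b : ℝ := n * a with hb
        have hb0 : 0 ≤ b := by positivity
        have e : ((n + 1 : ℕ) : ℝ) * a = b + a := by push_cast; ring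
        rw [e]
        obtain ⟨M, hM⟩ := hm_loc (b + a) (by positivity)
        have hm1 : AEStronglyMeasurable ((Set.Ioo 0 b).indicator m) volume :=
          (aestronglyMeasurable_indicator_iff measurableSet_Ioo).mpr ih
        obtain ⟨g, hg, hgeq⟩ := aux_conv_cont ((Set.Ioo 0 b).indicator m) k (b + a) M hk
          hm1.restrict (fun s hs => by
            have := norm_indicator_le_norm_self (s := Set.Ioo 0 b) m s
            exact this.trans (hM s (Set.Ioo_subset_Icc_self hs)))
        have hmg : ∀ u ∈ Set.Ioo 0 (b + a), m u = φ * g u + v u := by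
          intro u hu
          rw [heq u hu.1.le, hgeq u hu.1.le hu.2.le, ← aux_flip]
          congr 2
          rw [intervalIntegral.integral_of_le hu.1.le, intervalIntegral.integral_of_le hu.1.le,
            integral_Ioc_eq_integral_Ioo, integral_Ioc_eq_integral_Ioo]
          refine setIntegral_congr_ae measurableSet_Ioo ?_
          have hne : ∀ᵐ y : ℝ, y ≠ a := by simp [ae_iff]
          filter_upwards [hne] with y hya hy
          rcases lt_or_gt_of_ne hya with h | h
          · rw [hka y hy.1 h]; simp
          · rw [Set.indicator_of_mem]
            exact ⟨by linarith [hy.2], by linarith [hu.2]⟩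
        have hcont : ContinuousOn (fun u => φ * g u + v u) (Set.Ioo 0 (b + a)) := by
          have : ContinuousOn v (Set.Ioo 0 (b + a)) := hv.mono (fun x hx => hx.1.le)
          exact (continuousOn_const.mul hg.continuousOn).add this
        refine (hcont.aestronglyMeasurable measurableSet_Ioo).congr ?_
        filter_upwards [ae_restrict_mem measurableSet_Ioo] with u hu
        exact (hmg u hu).symm
    have hU : (⋃ n : ℕ, Set.Ioo (0:ℝ) (n * a)) = Set.Ioi 0 := by
      ext x
      simp only [Set.mem_iUnion, Set.mem_Ioo, Set.mem_Ioi]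
      constructor
      · rintro ⟨_, h, _⟩; exact h
      · intro h
        obtain ⟨n, hn⟩ := exists_nat_gt (x / a)
        exact ⟨n, h, (div_lt_iff₀ ha).mp hn⟩
    rw [← hU, aestronglyMeasurable_iUnion_iff]
    exact step
  · push Not at hcase
    let U : Set ℝ := {y | k y ≠ 0}
    have hUo : IsOpen U := isOpen_ne_fun hk continuous_const
    let S : Set ℝ := {u | 0 < u ∧
      AEStronglyMeasurable (fun y => m (u - y) * k y) (volume.restrict (Set.Ioc 0 u))}
    let V : ℝ → Set ℝ := fun u => {s | 0 < s ∧ s < u ∧ u - s ∈ U}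
    have hVo : ∀ u, IsOpen (V u) := fun u => by
      have : IsOpen ((fun s => u - s) ⁻¹' U) := hUo.preimage (by fun_prop)
      exact (isOpen_Ioi (a := (0:ℝ))).inter ((isOpen_Iio (a := u)).inter this)
    have hVm : ∀ u ∈ S, AEStronglyMeasurable m (volume.restrict (V u)) := by
      intro u hu
      have hss : Set.Ioo 0 u ∩ U ⊆ Set.Ioc 0 u := fun y hy => ⟨hy.1.1, hy.1.2.le⟩
      have h1 : AEStronglyMeasurable (fun y => m (u - y) * k y * (k y)⁻¹)
          (volume.restrict (Set.Ioo 0 u ∩ U)) := by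
        refine AEStronglyMeasurable.mul (hu.2.mono_measure (Measure.restrict_mono
          hss le_rfl)) ?_
        exact (hk.measurable.inv).aestronglyMeasurable
      have h2 : AEStronglyMeasurable (fun y => m (u - y))
          (volume.restrict (Set.Ioo 0 u ∩ U)) := by
        refine h1.congr ?_
        filter_upwards [ae_restrict_mem (measurableSet_Ioo.inter hUo.measurableSet)] with y hy
        exact mul_inv_cancel_right₀ hy.2 _
      have hmp : MeasurePreserving (fun s : ℝ => u - s) volume volume :=
        Measure.measurePreserving_sub_left volume u
      have hpre : (fun s : ℝ => u - s) ⁻¹' (Set.Ioo 0 u ∩ U) = V u := by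
        ext s
        simp only [Set.mem_preimage, Set.mem_inter_iff, Set.mem_Ioo, V, Set.mem_ofPred_eq]
        constructor
        · rintro ⟨⟨a, b⟩, c⟩; exact ⟨by linarith, by linarith, c⟩
        · rintro ⟨a, b, c⟩; exact ⟨⟨by linarith, by linarith⟩, c⟩
      have hmp' := hmp.restrict_preimage (measurableSet_Ioo.inter hUo.measurableSet (s₁ := Set.Ioo 0 u))
      rw [hpre] at hmp'
      have h3 := h2.comp_measurePreserving hmp'
      refine h3.congr (Eventually.of_forall fun s => ?_)
      simp
    obtain ⟨T, hTS, hTc, hTU⟩ := TopologicalSpace.isOpen_biUnion_countable S V (fun u _ => hVo u)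
    set W : Set ℝ := ⋃ u ∈ S, V u with hW
    have hWo : IsOpen W := isOpen_biUnion fun u _ => hVo u
    have hWm : AEStronglyMeasurable m (volume.restrict W) := by
      rw [← hTU, Set.biUnion_eq_iUnion]
      have := hTc.to_subtype
      rw [aestronglyMeasurable_iUnion_iff]
      exact fun i => hVm i (hTS i.2)
    let C : Set ℝ := Set.Ioi 0 \ W
    have hCmeas : MeasurableSet C := measurableSet_Ioi.diff hWo.measurableSet
    have hE : volume (C ∩ S) = 0 := by
      refine aux_null (U ∩ Set.Ioi 0) (C ∩ S) (hUo.inter isOpen_Ioi) ?_ ?_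
      · intro a ha
        obtain ⟨y, hy0, hya, hy⟩ := hcase a ha
        exact ⟨y, ⟨hy, hy0⟩, hy0, hya⟩
      · rintro x hx y hy ⟨hyx, h0⟩
        refine hx.1.2 ?_
        rw [hW]
        refine Set.mem_biUnion hy.2 ?_
        exact ⟨hx.1.1, by simpa using h0, hyx⟩
    have hCm : AEStronglyMeasurable m (volume.restrict C) := by
      have hvC : AEStronglyMeasurable v (volume.restrict C) :=
        (hv.mono (fun x hx => le_of_lt (Set.mem_Ioi.mp hx.1))).aestronglyMeasurable hCmeas
      refine hvC.congr ?_
      have hn : ∀ᵐ x : ℝ, x ∉ C ∩ S := by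
        rw [ae_iff]; simpa using hE
      filter_upwards [ae_restrict_mem hCmeas, ae_restrict_of_ae hn] with x hx hxE
      have hx0 : 0 < x := hx.1
      have hxS : ¬ AEStronglyMeasurable (fun y => m (x - y) * k y) (volume.restrict (Set.Ioc 0 x)) :=
        fun h => hxE ⟨hx, hx0, h⟩
      rw [heq x hx0.le, intervalIntegral.integral_of_le hx0.le,
        integral_non_aestronglyMeasurable hxS]
      simp
    have hsub : Set.Ioi (0:ℝ) ⊆ W ∪ C := fun x hx => by
      by_cases h : x ∈ W
      · exact Or.inl h
      · exact Or.inr ⟨hx, h⟩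
    exact (aestronglyMeasurable_union_iff.mpr ⟨hWm, hCm⟩).mono_measure
      (Measure.restrict_mono hsub le_rfl)

theorem aux_m_cont (φ : ℝ) (m k v : ℝ → ℝ) (hk : Continuous k) (hv : ContinuousOn v (Set.Ici 0))
    (hm_loc : ∀ x : ℝ, 0 < x → ∃ M, ∀ u ∈ Set.Icc (0:ℝ) x, |m u| ≤ M)
    (heq : ∀ u, 0 ≤ u → m u = φ * (∫ y in (0:ℝ)..u, m (u - y) * k y) + v u) :
    ContinuousOn m (Set.Ici 0) := by
  have hme := aux_meas_s9 φ m k v hk hv hm_loc heq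
  intro x hx
  have hx0 : 0 ≤ x := hx
  obtain ⟨M, hM⟩ := hm_loc (x + 1) (by linarith)
  obtain ⟨g, hg, hgeq⟩ := aux_conv_cont m k (x + 1) M hk
    (hme.mono_measure (Measure.restrict_mono (fun y hy => hy.1) le_rfl))
    (fun s hs => hM s (Set.Ioo_subset_Icc_self hs))
  have h1 : ContinuousWithinAt (fun u => φ * g u + v u) (Set.Ici 0) x :=
    (continuousWithinAt_const.mul hg.continuousWithinAt).add (hv x hx)
  refine h1.congr_of_eventuallyEq ?_ ?_
  · filter_upwards [self_mem_nhdsWithin, mem_nhdsWithin_of_mem_nhds (Iio_mem_nhds (lt_add_one x))] with u hu hu'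
    rw [heq u hu, hgeq u hu (le_of_lt hu'), aux_flip]
  · rw [heq x hx0, hgeq x hx0 (by linarith), aux_flip]

theorem aux_bound_s9 (φ A : ℝ) (q k : ℝ → ℝ) (hφ0 : 0 < φ) (hφ1 : φ < 1)
    (hq : Continuous q) (hk : Continuous k) (hk0 : ∀ u, 0 < u → 0 ≤ k u)
    (hk1 : ∀ u, 0 < u → ∫ y in (0:ℝ)..u, k y ≤ 1)
    (h : ∀ u, 0 < u → |q u| ≤ φ * (∫ y in (0:ℝ)..u, |q (u - y)| * k y) + A) :
    ∀ u, 0 < u → |q u| ≤ A / (1 - φ) := by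
  intro X hX
  set S := sSup ((fun s => |q s|) '' Set.Ioc 0 X) with hS
  have hbdd : BddAbove ((fun s => |q s|) '' Set.Ioc 0 X) := by
    obtain ⟨C, hC⟩ := (isCompact_Icc (a := (0:ℝ)) (b := X)).exists_bound_of_continuousOn hq.continuousOn
    refine ⟨C, ?_⟩
    rintro _ ⟨s, hs, rfl⟩
    exact hC s (Set.Ioc_subset_Icc_self hs)
  have hle : ∀ s ∈ Set.Ioc 0 X, |q s| ≤ S := fun s hs => le_csSup hbdd ⟨s, hs, rfl⟩
  have hXm : X ∈ Set.Ioc 0 X := ⟨hX, le_rfl⟩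
  have hS0 : 0 ≤ S := (abs_nonneg _).trans (hle X hXm)
  have hSS : S ≤ φ * S + A := by
    refine csSup_le ⟨_, ⟨X, hXm, rfl⟩⟩ ?_
    rintro _ ⟨u, hu, rfl⟩
    refine (h u hu.1).trans ?_
    have h1 : ∫ y in (0:ℝ)..u, |q (u - y)| * k y ≤ ∫ y in (0:ℝ)..u, S * k y := by
      refine intervalIntegral.integral_mono_on_of_le_Ioo hu.1.le
        (Continuous.intervalIntegrable (by fun_prop) _ _)
        (Continuous.intervalIntegrable (by fun_prop) _ _) ?_
      intro y hy
      refine mul_le_mul_of_nonneg_right (hle _ ⟨by linarith [hy.2], by linarith [hy.1, hu.2]⟩) (hk0 y hy.1)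
    rw [intervalIntegral.integral_const_mul] at h1
    have h2 : S * ∫ y in (0:ℝ)..u, k y ≤ S * 1 := mul_le_mul_of_nonneg_left (hk1 u hu.1) hS0
    have := mul_le_mul_of_nonneg_left (h1.trans h2) hφ0.le
    linarith
  rw [le_div_iff₀ (by linarith)]
  have := mul_le_mul_of_nonneg_right (hle X hXm) (by linarith : 0 ≤ 1 - φ)
  nlinarith

theorem aux_weight (φ A c : ℝ) (h k w p R : ℝ → ℝ) (hφ0 : 0 < φ) (hφ1 : φ < 1)
    (hh : Continuous h) (hk : Continuous k) (hk0 : ∀ u, 0 < u → 0 ≤ k u)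
    (hk1 : ∀ u, 0 < u → ∫ y in (0:ℝ)..u, k y ≤ 1)
    (heq : ∀ u, 0 < u → h u = φ * (∫ y in (0:ℝ)..u, h (u - y) * k y) + w u)
    (hp : Continuous p) (hp0 : ∀ u, 0 < u → 0 ≤ p u) (hR : Continuous R)
    (hpR : ∀ u y, 0 < y → y < u → p u * |h (u - y)| ≤ |p (u - y) * h (u - y)| + R y)
    (hc : ∀ u, 0 < u → ∫ y in (0:ℝ)..u, R y * k y ≤ c)
    (hA : ∀ u, 0 < u → |p u * w u| ≤ A) :
    ∀ u, 0 < u → |p u * h u| ≤ (φ * c + A) / (1 - φ) := by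
  refine aux_bound_s9 φ (φ * c + A) (fun u => p u * h u) k hφ0 hφ1 (by fun_prop) hk hk0 hk1 ?_
  intro u hu
  have e : p u * h u = φ * (∫ y in (0:ℝ)..u, p u * (h (u - y) * k y)) + p u * w u := by
    rw [intervalIntegral.integral_const_mul]
    nth_rewrite 1 [heq u hu]
    ring
  have h1 : |∫ y in (0:ℝ)..u, p u * (h (u - y) * k y)| ≤
      ∫ y in (0:ℝ)..u, (|p (u - y) * h (u - y)| * k y + R y * k y) := by
    refine (intervalIntegral.abs_integral_le_integral_abs hu.le).trans ?_
    refine intervalIntegral.integral_mono_on_of_le_Ioo hu.le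
        (Continuous.intervalIntegrable (by fun_prop) _ _)
        (Continuous.intervalIntegrable (by fun_prop) _ _) ?_
    intro y hy
    rw [abs_mul, abs_mul, abs_of_nonneg (hp0 u hu), abs_of_nonneg (hk0 y hy.1), ← mul_assoc, ← add_mul]
    exact mul_le_mul_of_nonneg_right (hpR u y hy.1 hy.2) (hk0 y hy.1)
  rw [intervalIntegral.integral_add (Continuous.intervalIntegrable (by fun_prop) _ _)
        (Continuous.intervalIntegrable (by fun_prop) _ _)] at h1
  have h2 := h1.trans (add_le_add_right (hc u hu) _)
  have h3 := mul_le_mul_of_nonneg_left h2 hφ0.le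
  beta_reduce
  rw [e]
  refine (abs_add_le _ _).trans ?_
  rw [abs_mul, abs_of_pos hφ0]
  have := hA u hu
  linarith

theorem aux_sup_le (q : ℝ → ℝ) (c : ℝ) (h : ∀ u, 0 < u → |q u| ≤ c) :
    (⨆ u ∈ Set.Ioi (0:ℝ), (‖q u‖₊ : ℝ≥0∞)) ≤ ENNReal.ofReal c := by
  refine iSup₂_le fun u hu => ?_
  rw [← enorm_eq_nnnorm, ← ofReal_norm_eq_enorm]
  exact ENNReal.ofReal_le_ofReal (h u hu)

theorem aux_le_sup (q : ℝ → ℝ) (h : (⨆ u ∈ Set.Ioi (0:ℝ), (‖q u‖₊ : ℝ≥0∞)) ≠ ⊤) :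
    ∀ u, 0 < u → |q u| ≤ (⨆ u ∈ Set.Ioi (0:ℝ), (‖q u‖₊ : ℝ≥0∞)).toReal := by
  intro u hu
  have h1 : (‖q u‖₊ : ℝ≥0∞) ≤ ⨆ u ∈ Set.Ioi (0:ℝ), (‖q u‖₊ : ℝ≥0∞) :=
    le_iSup₂ (f := fun u (_ : u ∈ Set.Ioi (0:ℝ)) => (‖q u‖₊ : ℝ≥0∞)) u hu
  have := ENNReal.toReal_mono h h1
  simpa using this

theorem aux_final (φ : ℝ) (hφ0 : 0 < φ) (hφ1 : φ < 1) (h k w : ℝ → ℝ) (E1 E2 : ℝ)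
    (hE1 : 0 < E1) (hE2 : 0 < E2)
    (hh : Continuous h) (hk : Continuous k) (hk0 : ∀ u, 0 < u → 0 ≤ k u)
    (hk1 : ∀ u, 0 < u → ∫ y in (0:ℝ)..u, k y ≤ 1)
    (hkE1 : ∀ u, 0 < u → ∫ y in (0:ℝ)..u, y * k y ≤ E1)
    (hkE2 : ∀ u, 0 < u → ∫ y in (0:ℝ)..u, y ^ 2 * k y ≤ E2)
    (heq : ∀ u, 0 < u → h u = φ * (∫ y in (0:ℝ)..u, h (u - y) * k y) + w u) :
    ((⨆ u ∈ Set.Ioi (0:ℝ), (‖h u‖₊ : ℝ≥0∞)) ≤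
        (⨆ u ∈ Set.Ioi (0:ℝ), (‖w u‖₊ : ℝ≥0∞))
          / ENNReal.ofReal (1 - φ)) ∧
    ((⨆ u ∈ Set.Ioi (0:ℝ), (‖u * h u‖₊ : ℝ≥0∞)) ≤
        (ENNReal.ofReal (φ * E1)
            * (⨆ u ∈ Set.Ioi (0:ℝ), (‖h u‖₊ : ℝ≥0∞))
          + ⨆ u ∈ Set.Ioi (0:ℝ), (‖u * w u‖₊ : ℝ≥0∞))
          / ENNReal.ofReal (1 - φ)) ∧
    ((⨆ u ∈ Set.Ioi (0:ℝ), (‖u ^ 2 * h u‖₊ : ℝ≥0∞)) ≤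
        (ENNReal.ofReal φ *
            (2 * ENNReal.ofReal E1
                * (⨆ u ∈ Set.Ioi (0:ℝ), (‖u * h u‖₊ : ℝ≥0∞))
              + ENNReal.ofReal E2
                * (⨆ u ∈ Set.Ioi (0:ℝ), (‖h u‖₊ : ℝ≥0∞)))
          + ⨆ u ∈ Set.Ioi (0:ℝ), (‖u ^ 2 * w u‖₊ : ℝ≥0∞))
          / ENNReal.ofReal (1 - φ)) := by
  have h1φ : 0 < 1 - φ := by linarith
  set c := ENNReal.ofReal (1 - φ) with hcdef
  have hctop : c ≠ ⊤ := ENNReal.ofReal_ne_top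
  have hB0 := aux_le_sup h
  have hB1 := aux_le_sup (fun u => u * h u)
  have hA0 := aux_le_sup w
  have hA1 := aux_le_sup (fun u => u * w u)
  have hA2 := aux_le_sup (fun u => u ^ 2 * w u)
  have hs0 : ∀ c, (∀ u, 0 < u → |h u| ≤ c) → _ := aux_sup_le h
  have hs1 : ∀ c, (∀ u, 0 < u → |u * h u| ≤ c) → _ := aux_sup_le (fun u => u * h u)
  have hs2 : ∀ c, (∀ u, 0 < u → |u ^ 2 * h u| ≤ c) → _ := aux_sup_le (fun u => u ^ 2 * h u)
  beta_reduce at hB1 hA1 hA2 hs1 hs2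
  set B0 := ⨆ u ∈ Set.Ioi (0:ℝ), (‖h u‖₊ : ℝ≥0∞)
  set B1 := ⨆ u ∈ Set.Ioi (0:ℝ), (‖u * h u‖₊ : ℝ≥0∞)
  set A0 := ⨆ u ∈ Set.Ioi (0:ℝ), (‖w u‖₊ : ℝ≥0∞)
  set A1 := ⨆ u ∈ Set.Ioi (0:ℝ), (‖u * w u‖₊ : ℝ≥0∞)
  set A2 := ⨆ u ∈ Set.Ioi (0:ℝ), (‖u ^ 2 * w u‖₊ : ℝ≥0∞)
  refine ⟨?_, ?_, ?_⟩
  · by_cases hA : A0 = ⊤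
    · rw [hA, ENNReal.top_div_of_ne_top hctop]; exact le_top
    have key := aux_weight φ A0.toReal 0 h k w (fun _ => 1) (fun _ => 0) hφ0 hφ1 hh hk hk0 hk1 heq
      continuous_const (fun _ _ => zero_le_one) continuous_const (fun u y _ _ => by simp)
      (fun u _ => by simp) (fun u hu => by simpa using hA0 hA u hu)
    have := hs0 _ (fun u hu => by simpa using key u hu)
    rw [ENNReal.ofReal_div_of_pos h1φ, ENNReal.ofReal_toReal hA] at this
    exact this
  · by_cases hA : A1 = ⊤
    · rw [hA, add_top, ENNReal.top_div_of_ne_top hctop]; exact le_top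
    by_cases hB : B0 = ⊤
    · rw [hB, ENNReal.mul_top (by simpa using mul_pos hφ0 hE1), top_add,
        ENNReal.top_div_of_ne_top hctop]; exact le_top
    have key := aux_weight φ A1.toReal (B0.toReal * E1) h k w (fun u => u)
      (fun y => B0.toReal * y) hφ0 hφ1 hh hk hk0 hk1 heq
      continuous_id (fun u hu => hu.le) (by fun_prop)
      (fun u y hy hyu => by
        have := hB0 hB (u - y) (by linarith)
        have h2 := mul_le_mul_of_nonneg_right this hy.le
        rw [abs_mul, abs_of_pos (by linarith : 0 < u - y)]
        nlinarith)
      (fun u hu => by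
        simp only [mul_assoc]
        rw [intervalIntegral.integral_const_mul]
        exact mul_le_mul_of_nonneg_left (hkE1 u hu) ENNReal.toReal_nonneg)
      (fun u hu => hA1 hA u hu)
    have := hs1 _ key
    rw [ENNReal.ofReal_div_of_pos h1φ, ENNReal.ofReal_add (by positivity) (by positivity),
      ENNReal.ofReal_toReal hA, mul_comm B0.toReal, ← mul_assoc, ENNReal.ofReal_mul (by positivity),
      ENNReal.ofReal_toReal hB] at this
    exact this
  · by_cases hA : A2 = ⊤
    · rw [hA, add_top, ENNReal.top_div_of_ne_top hctop]; exact le_top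
    have hφne : ENNReal.ofReal φ ≠ 0 := by simpa using hφ0
    by_cases hB : B0 = ⊤
    · rw [hB, ENNReal.mul_top (by simpa using hE2), add_top, ENNReal.mul_top hφne, top_add,
        ENNReal.top_div_of_ne_top hctop]; exact le_top
    by_cases hB' : B1 = ⊤
    · rw [hB', ENNReal.mul_top (by simpa using hE1), top_add, ENNReal.mul_top hφne, top_add,
        ENNReal.top_div_of_ne_top hctop]; exact le_top
    have key := aux_weight φ A2.toReal (2 * E1 * B1.toReal + E2 * B0.toReal) h k w (fun u => u ^ 2)
      (fun y => 2 * B1.toReal * y + B0.toReal * y ^ 2) hφ0 hφ1 hh hk hk0 hk1 heq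
      (by fun_prop) (fun u hu => by positivity) (by fun_prop)
      (fun u y hy hyu => by
        have := hB0 hB (u - y) (by linarith)
        have h2 := mul_le_mul_of_nonneg_right this (sq_nonneg y)
        have h3 := hB1 hB' (u - y) (by linarith)
        have h4 := mul_le_mul_of_nonneg_right h3 hy.le
        rw [abs_mul, abs_of_pos (by linarith : 0 < u - y)] at h4
        rw [abs_mul, abs_of_nonneg (sq_nonneg (u - y))]
        nlinarith)
      (fun u hu => by
        simp only [add_mul, mul_assoc]
        rw [intervalIntegral.integral_add (Continuous.intervalIntegrable (by fun_prop) _ _)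
          (Continuous.intervalIntegrable (by fun_prop) _ _)]
        simp only [intervalIntegral.integral_const_mul]
        have h1 := mul_le_mul_of_nonneg_left (hkE1 u hu) (ENNReal.toReal_nonneg (a := B1))
        have h2 := mul_le_mul_of_nonneg_left (hkE2 u hu) (ENNReal.toReal_nonneg (a := B0))
        linarith)
      (fun u hu => hA2 hA u hu)
    have := hs2 _ key
    rw [ENNReal.ofReal_div_of_pos h1φ, ENNReal.ofReal_add (by positivity) (by positivity),
      ENNReal.ofReal_toReal hA, ENNReal.ofReal_mul hφ0.le,
      ENNReal.ofReal_add (by positivity) (by positivity), ENNReal.ofReal_mul (by positivity),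
      ENNReal.ofReal_mul (by positivity), ENNReal.ofReal_mul (by positivity),
      ENNReal.ofReal_toReal hB, ENNReal.ofReal_toReal hB', ENNReal.ofReal_ofNat] at this
    exact this

theorem aux_mom_pos (f p : ℝ → ℝ) (hp : ∀ u : ℝ, 0 < u → 0 < p u)
    (hf_nonneg : ∀ u : ℝ, 0 < u → 0 ≤ f u)
    (hf_total : ∫ y in Set.Ioi (0:ℝ), f y = 1)
    (hI : MeasureTheory.IntegrableOn (fun y => p y * f y) (Set.Ioi 0)) :
    0 < ∫ y in Set.Ioi (0:ℝ), p y * f y := by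
  have hnn : 0 ≤ᵐ[volume.restrict (Set.Ioi (0:ℝ))] fun y => p y * f y := by
    filter_upwards [ae_restrict_mem measurableSet_Ioi] with y hy
    exact mul_nonneg (hp y hy).le (hf_nonneg y hy)
  refine lt_of_le_of_ne (integral_nonneg_of_ae hnn) fun h0 => ?_
  have hz := (integral_eq_zero_iff_of_nonneg_ae hnn hI).mp h0.symm
  have : f =ᵐ[volume.restrict (Set.Ioi (0:ℝ))] 0 := by
    filter_upwards [hz, ae_restrict_mem measurableSet_Ioi] with y hy hy0
    exact (mul_eq_zero.mp hy).resolve_left (hp y hy0).ne'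
  rw [integral_congr_ae this] at hf_total
  simp at hf_total

theorem aux_mom_le (f k p : ℝ → ℝ) (hp : ∀ u : ℝ, 0 < u → 0 ≤ p u)
    (hf_nonneg : ∀ u : ℝ, 0 < u → 0 ≤ f u) (hkf : ∀ u, 0 < u → k u = f u)
    (hI : MeasureTheory.IntegrableOn (fun y => p y * f y) (Set.Ioi 0)) :
    ∀ u, 0 < u → ∫ y in (0:ℝ)..u, p y * k y ≤ ∫ y in Set.Ioi (0:ℝ), p y * f y := by
  intro u hu
  have e : ∫ y in (0:ℝ)..u, p y * k y = ∫ y in Set.Ioc 0 u, p y * f y := by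
    rw [intervalIntegral.integral_of_le hu.le]
    exact setIntegral_congr_fun measurableSet_Ioc fun y hy => by
      beta_reduce; rw [hkf y hy.1]
  rw [e]
  refine setIntegral_mono_set hI ?_ (Eventually.of_forall fun y hy => hy.1)
  filter_upwards [ae_restrict_mem measurableSet_Ioi] with y hy
  exact mul_nonneg (hp y hy) (hf_nonneg y hy)

theorem aux_it2 (g g1 g2 : ℝ → ℝ) (h1 : ∀ u, 0 < u → HasDerivAt g (g1 u) u)
    (h2 : ∀ u, 0 < u → deriv g1 u = g2 u) :
    ∀ u, 0 < u → iteratedDeriv 2 g u = g2 u := by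
  intro u hu
  rw [iteratedDeriv_succ, iteratedDeriv_one, ← h2 u hu]
  refine Filter.EventuallyEq.deriv_eq ?_
  filter_upwards [Ioi_mem_nhds hu] with x hx
  exact (h1 x hx).deriv

theorem aux_c2 (g : ℝ → ℝ) (hg : ContDiffOn ℝ 2 g (Set.Ioi 0)) :
    (∀ u, 0 < u → HasDerivAt g (deriv g u) u) ∧
    (∀ u, 0 < u → HasDerivAt (deriv g) (deriv (deriv g) u) u) ∧
    ContinuousOn (deriv (deriv g)) (Set.Ioi 0) := by
  have h1 : ContDiffOn ℝ 1 (deriv g) (Set.Ioi 0) :=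
    ((contDiffOn_succ_iff_deriv_of_isOpen (n := 1) isOpen_Ioi).mp (by norm_num; exact hg)).2.2
  refine ⟨fun u hu => ?_, fun u hu => ?_, ?_⟩
  · exact ((hg.differentiableOn (by norm_num)).differentiableAt (Ioi_mem_nhds hu)).hasDerivAt
  · exact ((h1.differentiableOn (by norm_num)).differentiableAt (Ioi_mem_nhds hu)).hasDerivAt
  · exact h1.continuousOn_deriv_of_isOpen isOpen_Ioi le_rfl

/-- bounds on the weighted second derivative of the solution of a
defective renewal equation whose underlying distribution has finite variance:
`‖m''‖ ≤ ‖w₂‖/(1-φ)`, `‖u m''(u)‖ ≤ (φ E[Z] ‖m''‖ + ‖u w₂(u)‖)/(1-φ)`, and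
`‖u² m''(u)‖ ≤ (φ(2 E[Z] ‖u m''(u)‖ + E[Z²] ‖m''‖) + ‖u² w₂(u)‖)/(1-φ)`.
All suprema are over `(0,∞)`, computed in `ℝ≥0∞` (so they may be infinite). -/
theorem stmt_9 (φ : ℝ) (hφ0 : 0 < φ) (hφ1 : φ < 1)
    (f F v m : ℝ → ℝ)
    (hf_nonneg : ∀ u : ℝ, 0 < u → 0 ≤ f u)
    (hf_integrable : MeasureTheory.IntegrableOn f (Set.Ioi 0))
    (hf_total : ∫ y in Set.Ioi (0:ℝ), f y = 1)
    (hF_def : ∀ u : ℝ, 0 ≤ u → F u = ∫ y in (0:ℝ)..u, f y)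
    (hFf : ∀ u : ℝ, 0 < u → HasDerivAt F (f u) u)
    (hZ1 : MeasureTheory.IntegrableOn (fun y => y * f y) (Set.Ioi 0))
    (hZ2 : MeasureTheory.IntegrableOn (fun y => y ^ 2 * f y) (Set.Ioi 0))
    (hv_loc : ∀ x : ℝ, 0 < x → ∃ M, ∀ u ∈ Set.Icc (0:ℝ) x, |v u| ≤ M)
    (hm_loc : ∀ x : ℝ, 0 < x → ∃ M, ∀ u ∈ Set.Icc (0:ℝ) x, |m u| ≤ M)
    (hm_eq : ∀ u : ℝ, 0 ≤ u →
      m u = φ * (∫ y in (0:ℝ)..u, m (u - y) * f y) + v u)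
    (hF_c : ContinuousOn F (Set.Ici 0)) (hF_cd : ContDiffOn ℝ 2 F (Set.Ioi 0))
    (hF_lim : ∀ k ≤ 2, ∃ L, Tendsto (iteratedDeriv k F) (𝓝[>] (0:ℝ)) (𝓝 L))
    (hv_c : ContinuousOn v (Set.Ici 0)) (hv_cd : ContDiffOn ℝ 2 v (Set.Ioi 0))
    (hv_lim : ∀ k ≤ 2, ∃ L, Tendsto (iteratedDeriv k v) (𝓝[>] (0:ℝ)) (𝓝 L))
    (f0 v'0 : ℝ)
    (hf0 : Tendsto f (𝓝[>] (0:ℝ)) (𝓝 f0))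
    (hv'0 : Tendsto (deriv v) (𝓝[>] (0:ℝ)) (𝓝 v'0)) :
    ((⨆ u ∈ Set.Ioi (0:ℝ), (‖iteratedDeriv 2 m u‖₊ : ℝ≥0∞)) ≤
        (⨆ u ∈ Set.Ioi (0:ℝ), (‖w2 φ f0 v'0 v f u‖₊ : ℝ≥0∞))
          / ENNReal.ofReal (1 - φ)) ∧
    ((⨆ u ∈ Set.Ioi (0:ℝ), (‖u * iteratedDeriv 2 m u‖₊ : ℝ≥0∞)) ≤
        (ENNReal.ofReal (φ * ∫ y in Set.Ioi (0:ℝ), y * f y)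
            * (⨆ u ∈ Set.Ioi (0:ℝ), (‖iteratedDeriv 2 m u‖₊ : ℝ≥0∞))
          + ⨆ u ∈ Set.Ioi (0:ℝ), (‖u * w2 φ f0 v'0 v f u‖₊ : ℝ≥0∞))
          / ENNReal.ofReal (1 - φ)) ∧
    ((⨆ u ∈ Set.Ioi (0:ℝ), (‖u ^ 2 * iteratedDeriv 2 m u‖₊ : ℝ≥0∞)) ≤
        (ENNReal.ofReal φ *
            (2 * ENNReal.ofReal (∫ y in Set.Ioi (0:ℝ), y * f y)
                * (⨆ u ∈ Set.Ioi (0:ℝ), (‖u * iteratedDeriv 2 m u‖₊ : ℝ≥0∞))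
              + ENNReal.ofReal (∫ y in Set.Ioi (0:ℝ), y ^ 2 * f y)
                * (⨆ u ∈ Set.Ioi (0:ℝ), (‖iteratedDeriv 2 m u‖₊ : ℝ≥0∞)))
          + ⨆ u ∈ Set.Ioi (0:ℝ), (‖u ^ 2 * w2 φ f0 v'0 v f u‖₊ : ℝ≥0∞))
          / ENNReal.ofReal (1 - φ)) := by
  obtain ⟨hF1, hF2, hF3⟩ := aux_c2 F hF_cd
  have hdF : ∀ u, 0 < u → deriv F u = f u := fun u hu => (hFf u hu).deriv
  obtain ⟨L2, hL2⟩ := hF_lim 2 le_rfl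
  have hfd : ∀ u, 0 < u → HasDerivAt f (deriv (deriv F) u) u := by
    intro u hu
    refine (hF2 u hu).congr_of_eventuallyEq ?_
    filter_upwards [Ioi_mem_nhds hu] with x hx
    exact (hdF x hx).symm
  have hL2' : Tendsto (deriv (deriv F)) (𝓝[>] (0:ℝ)) (𝓝 L2) := by
    simpa [iteratedDeriv_succ, iteratedDeriv_one] using hL2
  obtain ⟨k, k', hkf, hkf', hk00, hk'c, hkd⟩ := aux_ext_s9 f (deriv (deriv F)) f0 L2 hfd hF3 hf0 hL2'
  obtain ⟨hv1, hv2, hv3⟩ := aux_c2 v hv_cd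
  obtain ⟨K2, hK2⟩ := hv_lim 2 le_rfl
  have hK2' : Tendsto (deriv (deriv v)) (𝓝[>] (0:ℝ)) (𝓝 K2) := by
    simpa [iteratedDeriv_succ, iteratedDeriv_one] using hK2
  obtain ⟨d, d', hdv, hdv', hd00, hd'c, hdd⟩ :=
    aux_ext_s9 (deriv v) (deriv (deriv v)) v'0 K2 hv2 hv3 hv'0 hK2'
  have hkc : Continuous k := continuous_iff_continuousAt.mpr fun x => (hkd x).continuousAt
  have hdc : Continuous d := continuous_iff_continuousAt.mpr fun x => (hdd x).continuousAt
  have hcongr : ∀ u, 0 ≤ u → ∀ n : ℝ → ℝ,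
      ∫ y in (0:ℝ)..u, n (u - y) * f y = ∫ y in (0:ℝ)..u, n (u - y) * k y := by
    intro u hu n
    rw [intervalIntegral.integral_of_le hu, intervalIntegral.integral_of_le hu]
    exact setIntegral_congr_fun measurableSet_Ioc fun y hy => by
      beta_reduce; rw [hkf y hy.1]
  have heq0 : ∀ u, 0 ≤ u → m u = φ * (∫ y in (0:ℝ)..u, m (u - y) * k y) + v u := by
    intro u hu
    rw [← hcongr u hu m]; exact hm_eq u hu
  have hmc := aux_m_cont φ m k v hkc hv_c hm_loc heq0
  let n : ℝ → ℝ := fun u => m (max u 0)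
  have hnm : ∀ u, 0 ≤ u → n u = m u := fun u hu => by simp [n, hu]
  have hnc : Continuous n := hmc.comp_continuous (by fun_prop) (fun x => by simp)
  have hneq : ∀ u, 0 ≤ u → n u = φ * (∫ y in (0:ℝ)..u, n (u - y) * k y) + v u := by
    intro u hu
    rw [hnm u hu, heq0 u hu]
    congr 2
    rw [intervalIntegral.integral_of_le hu, intervalIntegral.integral_of_le hu]
    exact setIntegral_congr_fun measurableSet_Ioc fun y hy => by
      beta_reduce; rw [hnm (u - y) (by linarith [hy.2])]
  obtain ⟨n1, hn1c, hn1d, hn1eq⟩ := aux_step φ n k k' v d hnc hk'c hkd hdc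
    (fun u hu => by rw [hdv u hu]; exact hv1 u hu) hneq
  have hw1d : ∀ u, HasDerivAt (fun u => φ * v 0 * k u + d u) (φ * v 0 * k' u + d' u) u :=
    fun u => ((hkd u).const_mul _).add (hdd u)
  obtain ⟨h, hhc, hhd, hheq⟩ := aux_step φ n1 k k' (fun u => φ * v 0 * k u + d u)
    (fun u => φ * v 0 * k' u + d' u) hn1c hk'c hkd (by fun_prop) (fun u _ => hw1d u) hn1eq
  have hmd : ∀ u, 0 < u → HasDerivAt m (n1 u) u := by
    intro u hu
    refine (hn1d u hu).congr_of_eventuallyEq ?_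
    filter_upwards [Ioi_mem_nhds hu] with x hx
    exact (hnm x (le_of_lt (Set.mem_Ioi.mp hx))).symm
  have hm2 : ∀ u, 0 < u → iteratedDeriv 2 m u = h u :=
    aux_it2 m n1 h hmd (fun u hu => (hhd u hu).deriv)
  have hw2 : ∀ u, 0 < u → w2 φ f0 v'0 v f u =
      φ * (φ * v 0 * k 0 + d 0) * k u + (φ * v 0 * k' u + d' u) := by
    intro u hu
    have : deriv (w1 φ v f) u = φ * v 0 * k' u + d' u := by
      rw [← (hw1d u).deriv]
      refine Filter.EventuallyEq.deriv_eq ?_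
      filter_upwards [Ioi_mem_nhds hu] with x hx
      simp only [w1]
      rw [hkf x hx, hdv x hx]
    rw [w2, this, hk00, hd00, hkf u hu]
  have heqf : ∀ u, 0 < u → h u = φ * (∫ y in (0:ℝ)..u, h (u - y) * k y) + w2 φ f0 v'0 v f u := by
    intro u hu
    rw [hw2 u hu]; exact hheq u hu.le
  have hk1 : ∀ u, 0 < u → ∫ y in (0:ℝ)..u, k y ≤ 1 := by
    intro u hu
    have := aux_mom_le f k (fun _ => 1) (fun _ _ => zero_le_one) hf_nonneg hkf
      (by simpa using hf_integrable) u hu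
    simpa [hf_total] using this
  have final := aux_final φ hφ0 hφ1 h k (w2 φ f0 v'0 v f) _ _
    (aux_mom_pos f (fun y => y) (fun u hu => hu) hf_nonneg hf_total hZ1)
    (aux_mom_pos f (fun y => y ^ 2) (fun u hu => by positivity) hf_nonneg hf_total hZ2)
    hhc hkc (fun u hu => by rw [hkf u hu]; exact hf_nonneg u hu) hk1
    (aux_mom_le f k (fun y => y) (fun u hu => hu.le) hf_nonneg hkf hZ1)
    (aux_mom_le f k (fun y => y ^ 2) (fun u hu => by positivity) hf_nonneg hkf hZ2)
    heqf
  have e0 : (⨆ u ∈ Set.Ioi (0:ℝ), (‖iteratedDeriv 2 m u‖₊ : ℝ≥0∞))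
      = ⨆ u ∈ Set.Ioi (0:ℝ), (‖h u‖₊ : ℝ≥0∞) :=
    iSup_congr fun u => iSup_congr fun hu => by rw [hm2 u hu]
  have e1 : (⨆ u ∈ Set.Ioi (0:ℝ), (‖u * iteratedDeriv 2 m u‖₊ : ℝ≥0∞))
      = ⨆ u ∈ Set.Ioi (0:ℝ), (‖u * h u‖₊ : ℝ≥0∞) :=
    iSup_congr fun u => iSup_congr fun hu => by rw [hm2 u hu]
  have e2 : (⨆ u ∈ Set.Ioi (0:ℝ), (‖u ^ 2 * iteratedDeriv 2 m u‖₊ : ℝ≥0∞))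
      = ⨆ u ∈ Set.Ioi (0:ℝ), (‖u ^ 2 * h u‖₊ : ℝ≥0∞) :=
    iSup_congr fun u => iSup_congr fun hu => by rw [hm2 u hu]
  rw [e0, e1, e2]
  exact final
end

section
/- Let 0 < φ < 1, let f be the density of an absolutely continuous nonnegative random variable Z with distribution function F satisfying F(0) = 0, let v : [0,∞) → ℝ be locally bounded, and let m be the locally bounded solution of m(u) = φ ∫₀^u m(u−y) f(y) dy + v(u). Assume: (1) Z has finite variance; (2) F and v belong to C²₀([0,∞)); (3) f' and v'' belong to C²([0,∞)) (continuous on [0,∞) with continuous second derivative on (0,∞)); (4) I₀(f'') < ∞ and I₂(f'') < ∞; (5) sup_u |u² w₁(u)| < ∞ and sup_u |u² w₂(u)| < ∞; (6) sup_u |u² w₁''(u)| < ∞ and sup_u |u² w₂''(u)| < ∞, where w₁(u) := φ v(0) f(u) + v'(u) and w₂(u) := φ m'(0) f(u) + w₁'(u) with m'(0) = φ v(0) f(0) + v'(0). Then m is three times continuously differentiable on (0,∞) and sup_{u>0} |u² m'''(u)| ≤ φ ( (I₀(f'') + |f'(0)|) · sup_{u>0}|u² m'(u)| + 2 I₁(f'')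 · sup_{u>0}|u m'(u)| + I₂(f'') · ‖m'‖ ) + φ f(0) · sup_{u>0}|u² m''(u)| + sup_{u>0}|u² w₁''(u)| < ∞. -/
open MeasureTheory Filter Topology
open scoped ENNReal

lemma hull_eq {μ : Measure ℝ} {p a : ℝ → ℝ≥0∞} (_ha : Measurable a) (hap : a ≤ p)
    (hInt : ∫⁻ s, p s ∂μ = ∫⁻ s, a s ∂μ) (hfin : ∫⁻ s, a s ∂μ ≠ ⊤) {A : Set ℝ}
    (hA : MeasurableSet A) (hp : AEMeasurable p (μ.restrict A)) :
    a =ᵐ[μ.restrict A] p := by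
  have h1 : ∫⁻ s in A, a s ∂μ ≤ ∫⁻ s in A, p s ∂μ := lintegral_mono hap
  have h2 : ∫⁻ s in Aᶜ, a s ∂μ ≤ ∫⁻ s in Aᶜ, p s ∂μ := lintegral_mono hap
  have e1 := lintegral_add_compl (μ := μ) p hA
  have e2 := lintegral_add_compl (μ := μ) a hA
  have f1 : ∫⁻ s in A, a s ∂μ ≠ ⊤ := ne_top_of_le_ne_top hfin (setLIntegral_le_lintegral _ _)
  have f2 : ∫⁻ s in Aᶜ, a s ∂μ ≠ ⊤ := ne_top_of_le_ne_top hfin (setLIntegral_le_lintegral _ _)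
  refine ae_eq_of_ae_le_of_lintegral_le (Eventually.of_forall hap) f1 hp ?_
  have h3 : ∫⁻ s in A, p s ∂μ + ∫⁻ s in Aᶜ, a s ∂μ ≤ ∫⁻ s in A, a s ∂μ + ∫⁻ s in Aᶜ, a s ∂μ := by
    rw [e2, ← hInt, ← e1]
    gcongr
  exact (ENNReal.add_le_add_iff_right f2).1 h3

lemma meas_sol {φ T M : ℝ} {m v h : ℝ → ℝ} (hh : Measurable h)
    (hv : ContinuousOn v (Set.Ioo 0 T))
    (hM : ∀ u ∈ Set.Ioo 0 T, |m u| ≤ M)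
    (hm : ∀ u ∈ Set.Ioo 0 T, m u = φ * (∫ s in Set.Ioo 0 T, m s * h (u - s)) + v u) :
    AEMeasurable m (volume.restrict (Set.Ioo 0 T)) := by
  set μ : Measure ℝ := volume.restrict (Set.Ioo 0 T) with hμ
  have hI : MeasurableSet (Set.Ioo (0:ℝ) T) := measurableSet_Ioo
  have hbd : ∀ s ∈ Set.Ioo 0 T, 0 ≤ m s + M ∧ 0 ≤ M - m s ∧ 0 ≤ M := fun s hs => by
    have := abs_le.1 (hM s hs)
    refine ⟨by linarith, by linarith, le_trans (abs_nonneg _) (hM s hs)⟩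
  obtain ⟨a, ha, hap, hai⟩ := exists_measurable_le_lintegral_eq μ (fun s => ENNReal.ofReal (m s + M))
  obtain ⟨b, hb, hbq, hbi⟩ := exists_measurable_le_lintegral_eq μ (fun s => ENNReal.ofReal (M - m s))
  have fin : ∀ c : ℝ → ℝ, (∀ s ∈ Set.Ioo 0 T, c s ≤ 2 * M) → ∫⁻ s, ENNReal.ofReal (c s) ∂μ ≠ ⊤ := by
    intro c hc
    refine ne_top_of_le_ne_top (b := ∫⁻ s, ENNReal.ofReal (2 * M) ∂μ) ?_ ?_
    · rw [lintegral_const]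
      refine ENNReal.mul_ne_top ENNReal.ofReal_ne_top ?_
      simp [hμ]
    · exact setLIntegral_mono' hI fun s hs => ENNReal.ofReal_le_ofReal (hc s hs)
  have fina : ∫⁻ s, a s ∂μ ≠ ⊤ := by
    rw [← hai]; exact fin _ fun s hs => by have := abs_le.1 (hM s hs); linarith
  have finb : ∫⁻ s, b s ∂μ ≠ ⊤ := by
    rw [← hbi]; exact fin _ fun s hs => by have := abs_le.1 (hM s hs); linarith
  set E : Set ℝ := {s | a s + b s = ENNReal.ofReal (2 * M)} with hE
  have hEm : MeasurableSet E := measurableSet_eq_fun (ha.add hb) measurable_const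
  have hEeq : ∀ s ∈ Set.Ioo 0 T, s ∈ E → (a s).toReal - M = m s := by
    intro s hs hsE
    obtain ⟨h1, h2, h3⟩ := hbd s hs
    have e : ENNReal.ofReal (m s + M) + ENNReal.ofReal (M - m s) = ENNReal.ofReal (2 * M) := by
      rw [← ENNReal.ofReal_add h1 h2]; congr 1; ring
    have h4 : ENNReal.ofReal (m s + M) ≤ a s := by
      have hb' : b s ≠ ⊤ := ne_top_of_le_ne_top ENNReal.ofReal_ne_top (hbq s)
      refine (ENNReal.add_le_add_iff_right hb').1 ?_
      rw [show a s + b s = _ from hsE, ← e]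
      gcongr
      exact hbq s
    rw [le_antisymm (hap s) h4, ENNReal.toReal_ofReal h1]; ring
  set G : Set (ℝ × ℝ) := {x | x.2 ∉ E ∧ h (x.1 - x.2) ≠ 0} with hG
  have hGm : MeasurableSet G := by
    refine MeasurableSet.inter (measurable_snd hEm.compl) ?_
    exact (measurableSet_eq_fun (hh.comp (measurable_fst.sub measurable_snd)) measurable_const).compl
  set N : ℝ → ℝ≥0∞ := fun u => μ (Prod.mk u ⁻¹' G) with hN
  have hNm : Measurable N := measurable_measure_prodMk_left hGm
  set c : ℝ → ℝ := fun u => ∫ s, ((a s).toReal - M) * h (u - s) ∂μ with hc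
  have hcm : Measurable c := by
    apply StronglyMeasurable.measurable
    apply StronglyMeasurable.integral_prod_right (f := fun u s => ((a s).toReal - M) * h (u - s))
    apply Measurable.stronglyMeasurable
    simp only [Function.uncurry_def]
    fun_prop
  have key : ∀ u ∈ Set.Ioo 0 T, m u = φ * (Set.indicator (N ⁻¹' {0}) c u) + v u := by
    intro u hu
    rw [hm u hu]
    congr 2
    by_cases hu0 : N u = 0
    · rw [Set.indicator_of_mem (by exact hu0)]
      refine integral_congr_ae ?_
      have : ∀ᵐ s ∂μ, s ∉ Prod.mk u ⁻¹' G := measure_eq_zero_iff_ae_notMem.1 hu0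
      filter_upwards [this, ae_restrict_mem hI] with s hs hsI
      by_cases h0 : h (u - s) = 0
      · simp [h0]
      · have : s ∈ E := by
          by_contra hcon; exact hs ⟨hcon, h0⟩
        rw [hEeq s hsI this]
    · rw [Set.indicator_of_notMem (by exact hu0)]
      refine integral_undef fun hInt => hu0 ?_
      have hAm : MeasurableSet {s | h (u - s) ≠ 0} :=
        (measurableSet_eq_fun (hh.comp (measurable_const.sub measurable_id)) measurable_const).compl
      have hmA : AEMeasurable m (μ.restrict {s | h (u - s) ≠ 0}) := by
        have h1 : AEMeasurable (fun s => m s * h (u - s) / h (u - s)) (μ.restrict {s | h (u - s) ≠ 0}) := by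
          refine AEMeasurable.div (hInt.aestronglyMeasurable.aemeasurable.mono_measure Measure.restrict_le_self) ?_
          exact (hh.comp (measurable_const.sub measurable_id)).aemeasurable
        refine h1.congr ?_
        filter_upwards [ae_restrict_mem hAm] with s hs
        exact mul_div_cancel_right₀ _ hs
      have e1 := hull_eq ha hap hai fina hAm (hmA.add_const M).ennreal_ofReal
      have e2 := hull_eq hb hbq hbi finb hAm (hmA.const_sub M).ennreal_ofReal
      have e3 : ∀ᵐ s ∂μ, h (u - s) ≠ 0 → s ∈ E := by
        have e1' := (ae_restrict_iff' hAm).1 e1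
        have e2' := (ae_restrict_iff' hAm).1 e2
        filter_upwards [e1', e2', ae_restrict_mem hI] with s h1 h2 hsI hs
        obtain ⟨k1, k2, k3⟩ := hbd s hsI
        show a s + b s = _
        rw [h1 hs, h2 hs, ← ENNReal.ofReal_add k1 k2]; congr 1; ring
      refine measure_eq_zero_iff_ae_notMem.2 ?_
      filter_upwards [e3] with s hs hsG
      exact hsG.1 (hs hsG.2)
  have hfin : AEMeasurable (fun u => φ * (Set.indicator (N ⁻¹' {0}) c u) + v u) μ := by
    refine AEMeasurable.add ?_ (hv.aemeasurable hI)
    exact ((hcm.indicator (hNm (measurableSet_singleton 0))).const_mul φ).aemeasurable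
  refine hfin.congr ?_
  filter_upwards [ae_restrict_mem hI] with u hu
  exact (key u hu).symm

noncomputable def cv (k p : ℝ → ℝ) (u : ℝ) : ℝ := ∫ s in (0:ℝ)..u, k s * p (u - s)

lemma cv_comm (k p : ℝ → ℝ) (u : ℝ) : cv k p u = cv p k u := by
  have := intervalIntegral.integral_comp_sub_left (a := 0) (b := u) (fun s => k s * p (u - s)) u
  simp only [sub_sub_cancel, sub_self, sub_zero] at this
  unfold cv
  rw [← this]
  simp only [mul_comm]

lemma cv_full {k p : ℝ → ℝ} {u T : ℝ} (hu : 0 ≤ u) (huT : u ≤ T) :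
    cv k p u = ∫ s, (Set.Ioo 0 T).indicator k s * (Set.Ioo 0 T).indicator p (u - s) := by
  unfold cv
  rw [intervalIntegral.integral_of_le hu, integral_Ioc_eq_integral_Ioo,
    ← integral_indicator measurableSet_Ioo]
  congr 1
  ext s
  by_cases hs : s ∈ Set.Ioo 0 u
  · have h1 : s ∈ Set.Ioo 0 T := ⟨hs.1, hs.2.trans_le huT⟩
    have h2 : u - s ∈ Set.Ioo 0 T := ⟨by linarith [hs.2], by linarith [hs.1]⟩
    simp [hs, h1, h2]
  · rw [Set.indicator_of_notMem hs]
    by_cases h1 : s ∈ Set.Ioo 0 T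
    · have h2 : u - s ∉ Set.Ioo 0 T := fun h => hs ⟨h1.1, by linarith [h.1]⟩
      simp [h2]
    · simp [h1]

lemma cv_ind {k p : ℝ → ℝ} {u T : ℝ} (hu : 0 ≤ u) (huT : u ≤ T) :
    cv k p u = ∫ s in Set.Ioo 0 T, k s * (Set.Ioi 0).indicator p (u - s) := by
  unfold cv
  rw [intervalIntegral.integral_of_le hu, integral_Ioc_eq_integral_Ioo,
    ← integral_indicator measurableSet_Ioo, ← integral_indicator measurableSet_Ioo]
  congr 1
  ext s
  by_cases hs : s ∈ Set.Ioo 0 u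
  · have h1 : s ∈ Set.Ioo 0 T := ⟨hs.1, hs.2.trans_le huT⟩
    have h2 : u - s ∈ Set.Ioi (0:ℝ) := by simpa using hs.2
    rw [Set.indicator_of_mem hs, Set.indicator_of_mem h1, Set.indicator_of_mem h2]
  · rw [Set.indicator_of_notMem hs]
    by_cases h1 : s ∈ Set.Ioo 0 T
    · have h2 : u - s ∉ Set.Ioi (0:ℝ) := fun h => hs ⟨h1.1, by simpa using h⟩
      rw [Set.indicator_of_mem h1, Set.indicator_of_notMem h2, mul_zero]
    · rw [Set.indicator_of_notMem h1]

/-- locally integrable on the half line -/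
def LI (k : ℝ → ℝ) : Prop := ∀ T : ℝ, IntegrableOn k (Set.Ioo 0 T)

/-- locally bounded on the half line -/
def LB (k : ℝ → ℝ) : Prop := ∀ T : ℝ, ∃ M, ∀ u ∈ Set.Ioo 0 T, |k u| ≤ M

lemma LI.ii {k : ℝ → ℝ} (h : LI k) {a b : ℝ} (ha : 0 ≤ a) (hb : 0 ≤ b) :
    IntervalIntegrable k volume a b := by
  have h2 : ∀ {a b : ℝ}, 0 ≤ a → a ≤ b → IntervalIntegrable k volume a b := fun {a b} h0 hab => by
    rw [intervalIntegrable_iff_integrableOn_Ioo_of_le hab]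
    exact (h b).mono_set (Set.Ioo_subset_Ioo_left h0)
  rcases le_total a b with hab | hab
  · exact h2 ha hab
  · exact (h2 hb hab).symm

lemma cv_LI {k q : ℝ → ℝ} (hk : LI k) (hq : LI q) : LI (cv k q) := by
  intro T
  have hK : Integrable ((Set.Ioo 0 T).indicator k) :=
    (integrable_indicator_iff measurableSet_Ioo).2 (hk T)
  have hQ : Integrable ((Set.Ioo 0 T).indicator q) :=
    (integrable_indicator_iff measurableSet_Ioo).2 (hq T)
  have h := (hK.convolution_integrand (ContinuousLinearMap.mul ℝ ℝ) hQ).integral_prod_left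
  refine (h.integrableOn (s := Set.Ioo 0 T)).congr_fun ?_ measurableSet_Ioo
  intro u hu
  simp only [ContinuousLinearMap.mul_apply']
  rw [cv_full hu.1.le hu.2.le]

lemma cv_prim {k p q : ℝ → ℝ} {p0 : ℝ} (hk : LI k) (hq : LI q)
    (hp : ∀ x, 0 < x → p x = p0 + ∫ t in (0:ℝ)..x, q t) {u : ℝ} (hu : 0 ≤ u) :
    cv k p u = p0 * (∫ s in (0:ℝ)..u, k s) + ∫ t in (0:ℝ)..u, cv k q t := by
  set K := (Set.Ioo 0 u).indicator k with hKd
  set Q := (Set.Ioo 0 u).indicator q with hQd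
  have hK : Integrable K := (integrable_indicator_iff measurableSet_Ioo).2 (hk u)
  have hQ : Integrable Q := (integrable_indicator_iff measurableSet_Ioo).2 (hq u)
  have hF : Integrable (Function.uncurry fun t s => K s * Q (t - s))
      ((volume.restrict (Set.uIoc 0 u)).prod volume) := by
    have h := hK.convolution_integrand (ContinuousLinearMap.mul ℝ ℝ) hQ
    have h2 := h.restrict (s := Set.uIoc 0 u ×ˢ Set.univ)
    rw [← Measure.prod_restrict, Measure.restrict_univ] at h2
    exact h2
  have hsw := intervalIntegral_integral_swap hF
  have hl : ∫ t in (0:ℝ)..u, cv k q t = ∫ t in (0:ℝ)..u, ∫ s, K s * Q (t - s) := by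
    refine intervalIntegral.integral_congr fun t ht => ?_
    rw [Set.uIcc_of_le hu] at ht
    exact cv_full ht.1 ht.2
  have hr : ∀ s, (∫ t in (0:ℝ)..u, K s * Q (t - s))
      = (Set.Ioo 0 u).indicator (fun s => k s * (p (u - s) - p0)) s := by
    intro s
    by_cases hs : s ∈ Set.Ioo 0 u
    · rw [Set.indicator_of_mem hs, hKd, Set.indicator_of_mem hs,
        intervalIntegral.integral_const_mul, intervalIntegral.integral_comp_sub_right]
      congr 1
      have hus : 0 < u - s := by linarith [hs.2]
      rw [hp _ hus, add_sub_cancel_left, intervalIntegral.integral_of_le (by linarith),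
        intervalIntegral.integral_of_le hus.le, hQd, ← integral_indicator measurableSet_Ioc,
        ← integral_indicator measurableSet_Ioc]
      congr 1
      ext t
      by_cases ht : t ∈ Set.Ioc 0 (u - s)
      · have h1 : t ∈ Set.Ioc (0 - s) (u - s) := ⟨by linarith [ht.1, hs.1], ht.2⟩
        have h2 : t ∈ Set.Ioo 0 u := ⟨ht.1, by linarith [ht.2, hs.1]⟩
        rw [Set.indicator_of_mem ht, Set.indicator_of_mem h1, Set.indicator_of_mem h2]
      · rw [Set.indicator_of_notMem ht]
        by_cases h1 : t ∈ Set.Ioc (0 - s) (u - s)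
        · have h2 : t ∉ Set.Ioo 0 u := fun h => ht ⟨h.1, h1.2⟩
          rw [Set.indicator_of_mem h1, Set.indicator_of_notMem h2]
        · rw [Set.indicator_of_notMem h1]
    · rw [Set.indicator_of_notMem hs, hKd, Set.indicator_of_notMem hs]; simp
  rw [hl, hsw]
  simp_rw [hr]
  have hJ : Integrable ((Set.Ioo 0 u).indicator (fun s => k s * (p (u - s) - p0))) := by
    have := hF.integral_prod_right
    refine this.congr (Eventually.of_forall fun s => ?_)
    simp only [Function.uncurry]
    rw [← hr s, intervalIntegral.integral_of_le hu, Set.uIoc_of_le hu]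
  have hJ' : IntervalIntegrable (fun s => k s * (p (u - s) - p0)) volume 0 u := by
    rw [intervalIntegrable_iff_integrableOn_Ioo_of_le hu]
    exact (integrable_indicator_iff measurableSet_Ioo).1 hJ
  rw [integral_indicator measurableSet_Ioo, ← integral_Ioc_eq_integral_Ioo,
    ← intervalIntegral.integral_of_le hu, ← intervalIntegral.integral_const_mul,
    ← intervalIntegral.integral_add ((hk.ii le_rfl hu).const_mul _) hJ']
  unfold cv
  congr 1
  ext s
  ring

lemma LB.li {k : ℝ → ℝ} (hk : LB k) (hc : ∀ T, AEMeasurable k (volume.restrict (Set.Ioo 0 T))) :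
    LI k := by
  intro T
  obtain ⟨M, hM⟩ := hk T
  refine Integrable.of_bound (C := M) (hc T).aestronglyMeasurable ?_
  filter_upwards [ae_restrict_mem measurableSet_Ioo] with u hu
  exact hM u hu

lemma LB.li' {k : ℝ → ℝ} (hk : LB k) (hc : ContinuousOn k (Set.Ioi 0)) : LI k :=
  hk.li fun _ => (hc.mono fun _ h => h.1).aemeasurable measurableSet_Ioo

lemma lb_of_tendsto {k : ℝ → ℝ} {L : ℝ} (hc : ContinuousOn k (Set.Ioi 0))
    (hL : Tendsto k (𝓝[>] 0) (𝓝 L)) : LB k := by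
  intro T
  have h1 : ∀ᶠ u in 𝓝[>] (0:ℝ), |k u| < |L| + 1 := by
    refine (hL.abs).eventually (gt_mem_nhds (by linarith))
  obtain ⟨d, hd, hd'⟩ := (mem_nhdsGT_iff_exists_Ioo_subset).1 h1
  have hd0 : (0:ℝ) < d := hd
  obtain ⟨M, hM⟩ := (isCompact_Icc (a := d) (b := T)).exists_bound_of_continuousOn
    (hc.mono fun x hx => lt_of_lt_of_le hd0 hx.1)
  refine ⟨max (|L| + 1) M, fun u hu => ?_⟩
  rcases lt_or_ge u d with h | h
  · exact le_max_of_le_left (le_of_lt (hd' ⟨hu.1, h⟩))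
  · exact le_max_of_le_right (hM u ⟨h, hu.2.le⟩)

lemma cv_cont {k q : ℝ → ℝ} (hk : LB k) (hc : ContinuousOn k (Set.Ioi 0)) (hq : LI q) :
    ContinuousOn (cv k q) (Set.Ici 0) := by
  intro u0 hu0
  have hu0' : (0:ℝ) ≤ u0 := hu0
  set T := u0 + 1 with hT
  obtain ⟨M, hM⟩ := hk T
  set Q := (Set.Ioo 0 T).indicator q with hQd
  set K := (Set.Ioo 0 T).indicator k with hKd
  have hQ : Integrable Q := (integrable_indicator_iff measurableSet_Ioo).2 (hq T)
  have hKm : Measurable K := by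
    have : ContinuousOn k (Set.Ioo 0 T) := hc.mono fun x hx => hx.1
    have h := this.measurable_piecewise (g := fun _ => (0:ℝ)) continuousOn_const measurableSet_Ioo
    have e : (Set.Ioo 0 T).piecewise k (fun _ => (0:ℝ)) = K := Set.piecewise_eq_indicator
    rwa [e] at h
  have hM0 : ∀ x, |K x| ≤ |M| := fun x => by
    by_cases hx : x ∈ Set.Ioo 0 T
    · rw [hKd, Set.indicator_of_mem hx]; exact (hM x hx).trans (le_abs_self M)
    · rw [hKd, Set.indicator_of_notMem hx]; simp
  have hcw : ContinuousWithinAt (fun u => ∫ s, Q s * K (u - s)) (Set.Ici 0) u0 := by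
    refine (continuousAt_of_dominated (bound := fun s => |Q s| * |M|) ?_ ?_ ?_ ?_).continuousWithinAt
    · refine Eventually.of_forall fun u => ?_
      exact hQ.aestronglyMeasurable.mul
        (hKm.comp (measurable_const.sub measurable_id)).aestronglyMeasurable
    · refine Eventually.of_forall fun u => Eventually.of_forall fun s => ?_
      rw [norm_mul]
      exact mul_le_mul_of_nonneg_left (hM0 _) (abs_nonneg _)
    · exact hQ.abs.mul_const _
    · have : ∀ᵐ s : ℝ, s ≠ u0 := by simp [ae_iff]
      filter_upwards [this] with s hs
      by_cases hsT : s ∈ Set.Ioo 0 T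
      · refine continuousAt_const.mul ?_
        refine ContinuousAt.comp (g := K) (f := fun u => u - s) ?_ (by fun_prop)
        rcases lt_or_gt_of_ne hs with h | h
        · have hmem : Set.Ioo 0 T ∈ 𝓝 (u0 - s) :=
            Ioo_mem_nhds (by linarith) (by linarith [hsT.1])
          have : ContinuousAt k (u0 - s) := hc.continuousAt (Ioi_mem_nhds (by linarith))
          refine this.congr ?_
          filter_upwards [hmem] with x hx
          rw [hKd, Set.indicator_of_mem hx]
        · have : ContinuousAt (fun _ : ℝ => (0:ℝ)) (u0 - s) := continuousAt_const
          refine this.congr ?_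
          filter_upwards [Iio_mem_nhds (show u0 - s < 0 by linarith)] with x hx
          rw [hKd, Set.indicator_of_notMem fun h => absurd h.1 (not_lt.2 (le_of_lt hx))]
      · have : Q s = 0 := Set.indicator_of_notMem hsT _
        simp only [this, zero_mul]
        exact continuousAt_const
  refine hcw.congr_of_eventuallyEq ?_ ?_
  · filter_upwards [self_mem_nhdsWithin, mem_nhdsWithin_of_mem_nhds (Iio_mem_nhds (show u0 < T by linarith))]
      with u h1 h2
    rw [cv_comm, cv_full h1 (le_of_lt h2)]
  · rw [cv_comm, cv_full (T := T) hu0' (by linarith)]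

lemma cv_zero (k q : ℝ → ℝ) : cv k q 0 = 0 := by simp [cv]

lemma cv_tendsto {k q : ℝ → ℝ} (hk : LB k) (hc : ContinuousOn k (Set.Ioi 0)) (hq : LI q) :
    Tendsto (cv k q) (𝓝[>] 0) (𝓝 0) := by
  have := (cv_cont hk hc hq 0 Set.self_mem_Ici)
  rw [ContinuousWithinAt, cv_zero] at this
  exact this.mono_left (nhdsWithin_mono _ Set.Ioi_subset_Ici_self)

lemma prim_deriv {k : ℝ → ℝ} (hk : LI k) (hc : ContinuousOn k (Set.Ioi 0)) {u : ℝ} (hu : 0 < u) :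
    HasDerivAt (fun u => ∫ s in (0:ℝ)..u, k s) (k u) u :=
  intervalIntegral.integral_hasDerivAt_right (hk.ii le_rfl hu.le)
    (hc.stronglyMeasurableAtFilter isOpen_Ioi u hu) (hc.continuousAt (Ioi_mem_nhds hu))

lemma cv_deriv {k p q : ℝ → ℝ} {p0 : ℝ} (hk : LB k) (hc : ContinuousOn k (Set.Ioi 0)) (hq : LI q)
    (hp : ∀ x, 0 < x → p x = p0 + ∫ t in (0:ℝ)..x, q t) {u : ℝ} (hu : 0 < u) :
    HasDerivAt (cv k p) (p0 * k u + cv k q u) u := by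
  have hk' := hk.li' hc
  have h1 := (prim_deriv hk' hc hu).const_mul p0
  have h2 := prim_deriv (cv_LI hk' hq) ((cv_cont hk hc hq).mono Set.Ioi_subset_Ici_self) hu
  refine (h1.add h2).congr_of_eventuallyEq ?_
  filter_upwards [Ioi_mem_nhds hu] with x hx
  exact cv_prim hk' hq hp (le_of_lt hx)

lemma ftc0 {p q : ℝ → ℝ} {p0 : ℝ} (hd : ∀ x, 0 < x → HasDerivAt p (q x) x) (hq : LI q)
    (h0 : Tendsto p (𝓝[>] 0) (𝓝 p0)) : ∀ x, 0 < x → p x = p0 + ∫ t in (0:ℝ)..x, q t := by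
  intro x hx
  rw [intervalIntegral.integral_eq_sub_of_hasDerivAt_of_tendsto hx (fun y hy => hd y hy.1)
    (hq.ii le_rfl hx.le) h0 ((hd x hx).continuousAt.tendsto.mono_left nhdsWithin_le_nhds)]
  ring

lemma cv_bd {g p W : ℝ → ℝ} {c u : ℝ} (hu : 0 < u) (hW : IntegrableOn W (Set.Ioi 0))
    (hW0 : ∀ y, 0 < y → 0 ≤ W y)
    (h : ∀ y ∈ Set.Ioo 0 u, |c * (p y * g (u - y))| ≤ W y) :
    |c * cv g p u| ≤ ∫ y in Set.Ioi 0, W y := by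
  rw [cv_comm]
  unfold cv
  rw [intervalIntegral.integral_of_le hu.le, integral_Ioc_eq_integral_Ioo, ← integral_const_mul]
  calc |∫ y in Set.Ioo 0 u, c * (p y * g (u - y))| ≤ ∫ y in Set.Ioo 0 u, W y := by
        rw [← Real.norm_eq_abs]
        refine norm_integral_le_of_norm_le (hW.mono_set Set.Ioo_subset_Ioi_self) ?_
        filter_upwards [ae_restrict_mem measurableSet_Ioo] with y hy
        exact h y hy
    _ ≤ _ := by
        refine setIntegral_mono_set hW ?_ Set.Ioo_subset_Ioi_self.eventuallyLE
        filter_upwards [ae_restrict_mem measurableSet_Ioi] with y hy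
        exact hW0 y hy

lemma cv_bd0 {g p : ℝ → ℝ} {u A0 : ℝ} (hu : 0 < u) (hA0 : 0 ≤ A0)
    (hp : IntegrableOn (fun y => |p y|) (Set.Ioi 0))
    (h0 : ∀ s ∈ Set.Ioo 0 u, |g s| ≤ A0) :
    |cv g p u| ≤ A0 * ∫ y in Set.Ioi 0, |p y| := by
  have := cv_bd (g := g) (p := p) (c := 1) hu (hp.const_mul A0)
    (fun y _ => mul_nonneg hA0 (abs_nonneg _)) ?_
  · rwa [one_mul, integral_const_mul] at this
  · intro y hy
    have := h0 (u - y) ⟨by linarith [hy.2], by linarith [hy.1]⟩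
    rw [one_mul, abs_mul, mul_comm]
    exact mul_le_mul_of_nonneg_right this (abs_nonneg _)

lemma cv_bd1 {g p : ℝ → ℝ} {u A0 A1 : ℝ} (hu : 0 < u) (hA0 : 0 ≤ A0) (hA1 : 0 ≤ A1)
    (hp : IntegrableOn (fun y => |p y|) (Set.Ioi 0))
    (hp1 : IntegrableOn (fun y => y * |p y|) (Set.Ioi 0))
    (h0 : ∀ s ∈ Set.Ioo 0 u, |g s| ≤ A0) (h1 : ∀ s ∈ Set.Ioo 0 u, |s * g s| ≤ A1) :
    |u * cv g p u| ≤ A1 * (∫ y in Set.Ioi 0, |p y|) + A0 * (∫ y in Set.Ioi 0, y * |p y|) := by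
  have := cv_bd (g := g) (p := p) (c := u) hu ((hp.const_mul A1).add (hp1.const_mul A0))
    (fun y hy => by
      show 0 ≤ A1 * |p y| + A0 * (y * |p y|)
      positivity) ?_
  · have e := integral_add (hp.const_mul A1) (hp1.const_mul A0)
    rw [integral_const_mul, integral_const_mul] at e
    rw [← e]
    exact this
  · intro y hy
    have hs : u - y ∈ Set.Ioo 0 u := ⟨by linarith [hy.2], by linarith [hy.1]⟩
    have k0 := h0 _ hs
    have k1 := h1 _ hs
    rw [abs_mul, abs_of_pos hs.1] at k1
    rw [abs_mul, abs_mul, abs_of_pos hu]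
    show u * (|p y| * |g (u - y)|) ≤ A1 * |p y| + A0 * (y * |p y|)
    have e : u * (|p y| * |g (u - y)|) =
      ((u - y) * |g (u - y)|) * |p y| + |g (u - y)| * (y * |p y|) := by ring
    rw [e]
    have := hy.1
    gcongr

lemma cv_bd2 {g p : ℝ → ℝ} {u A0 A1 A2 : ℝ} (hu : 0 < u) (hA0 : 0 ≤ A0) (hA1 : 0 ≤ A1)
    (hA2 : 0 ≤ A2)
    (hp : IntegrableOn (fun y => |p y|) (Set.Ioi 0))
    (hp1 : IntegrableOn (fun y => y * |p y|) (Set.Ioi 0))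
    (hp2 : IntegrableOn (fun y => y ^ 2 * |p y|) (Set.Ioi 0))
    (h0 : ∀ s ∈ Set.Ioo 0 u, |g s| ≤ A0) (h1 : ∀ s ∈ Set.Ioo 0 u, |s * g s| ≤ A1)
    (h2 : ∀ s ∈ Set.Ioo 0 u, |s ^ 2 * g s| ≤ A2) :
    |u ^ 2 * cv g p u| ≤ A2 * (∫ y in Set.Ioi 0, |p y|) +
      2 * A1 * (∫ y in Set.Ioi 0, y * |p y|) + A0 * (∫ y in Set.Ioi 0, y ^ 2 * |p y|) := by
  have := cv_bd (g := g) (p := p) (c := u ^ 2) hu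
    (((hp.const_mul A2).add (hp1.const_mul (2 * A1))).add (hp2.const_mul A0))
    (fun y hy => by
      show 0 ≤ A2 * |p y| + 2 * A1 * (y * |p y|) + A0 * (y ^ 2 * |p y|)
      positivity) ?_
  · have e := integral_add ((hp.const_mul A2).add (hp1.const_mul (2 * A1))) (hp2.const_mul A0)
    have e' := integral_add (hp.const_mul A2) (hp1.const_mul (2 * A1))
    simp only [Pi.add_apply] at e
    rw [e', integral_const_mul, integral_const_mul, integral_const_mul] at e
    rw [← e]
    exact this
  · intro y hy
    have hs : u - y ∈ Set.Ioo 0 u := ⟨by linarith [hy.2], by linarith [hy.1]⟩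
    have k0 := h0 _ hs
    have k1 := h1 _ hs
    have k2 := h2 _ hs
    rw [abs_mul, abs_of_pos hs.1] at k1
    rw [abs_mul, abs_of_pos (pow_pos hs.1 2)] at k2
    rw [abs_mul, abs_mul, abs_of_pos (pow_pos hu 2)]
    show u ^ 2 * (|p y| * |g (u - y)|) ≤ A2 * |p y| + 2 * A1 * (y * |p y|) + A0 * (y ^ 2 * |p y|)
    have e : u ^ 2 * (|p y| * |g (u - y)|) =
      ((u - y) ^ 2 * |g (u - y)|) * |p y| + 2 * ((u - y) * |g (u - y)|) * (y * |p y|)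
        + |g (u - y)| * (y ^ 2 * |p y|) := by ring
    rw [e]
    have := hy.1
    gcongr

lemma ren_bd {g : ℝ → ℝ} {φ C : ℝ} (hφ1 : φ < 1) (hg : LB g)
    (h : ∀ u, 0 < u → ∀ B, 0 ≤ B → (∀ s ∈ Set.Ioo 0 u, |g s| ≤ B) → |g u| ≤ φ * B + C) :
    ∀ u, 0 < u → |g u| ≤ C / (1 - φ) := by
  intro u hu
  obtain ⟨M, hM⟩ := hg (u + 1)
  have hbdd : BddAbove ((fun x => |g x|) '' Set.Ioo 0 (u + 1)) :=
    ⟨M, by rintro _ ⟨x, hx, rfl⟩; exact hM x hx⟩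
  set S := sSup ((fun x => |g x|) '' Set.Ioo 0 (u + 1)) with hS
  have hle : ∀ x ∈ Set.Ioo 0 (u + 1), |g x| ≤ S := fun x hx => le_csSup hbdd ⟨x, hx, rfl⟩
  have hu' : u ∈ Set.Ioo 0 (u + 1) := ⟨hu, by linarith⟩
  have hS0 : 0 ≤ S := (abs_nonneg _).trans (hle u hu')
  have h2 : S ≤ φ * S + C := by
    refine csSup_le ⟨_, u, hu', rfl⟩ ?_
    rintro _ ⟨x, hx, rfl⟩
    exact h x hx.1 S hS0 fun s hs => hle s ⟨hs.1, hs.2.trans hx.2⟩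
  refine (hle u hu').trans ?_
  rw [le_div_iff₀ (by linarith)]
  linarith

lemma LB.mul {g h : ℝ → ℝ} (hg : LB g) (hh : LB h) : LB (fun u => h u * g u) := by
  intro T
  obtain ⟨M, hM⟩ := hg T
  obtain ⟨N, hN⟩ := hh T
  refine ⟨N * M, fun u hu => ?_⟩
  rw [abs_mul]
  exact mul_le_mul (hN u hu) (hM u hu) (abs_nonneg _) ((abs_nonneg _).trans (hN u hu))

lemma ren_all {g f w : ℝ → ℝ} {φ : ℝ} (hφ0 : 0 < φ) (hφ1 : φ < 1) (hg : LB g) (hw : LB w)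
    (hf_nonneg : ∀ u : ℝ, 0 < u → 0 ≤ f u)
    (hf : IntegrableOn f (Set.Ioi 0)) (hf_total : ∫ y in Set.Ioi (0:ℝ), f y = 1)
    (hZ1 : IntegrableOn (fun y => y * f y) (Set.Ioi 0))
    (hZ2 : IntegrableOn (fun y => y ^ 2 * f y) (Set.Ioi 0))
    (hw2 : ∃ M, ∀ u : ℝ, 0 < u → |u ^ 2 * w u| ≤ M)
    (heq : ∀ u, 0 < u → g u = φ * cv g f u + w u) :
    ∃ A, 0 ≤ A ∧ ∀ u, 0 < u → |g u| ≤ A ∧ |u * g u| ≤ A ∧ |u ^ 2 * g u| ≤ A := by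
  have hid : LB (fun u => u) := fun T => ⟨T, fun u hu => by rw [abs_of_pos hu.1]; exact hu.2.le⟩
  have fa : IntegrableOn (fun y => |f y|) (Set.Ioi 0) := hf.abs
  have fa1 : IntegrableOn (fun y => y * |f y|) (Set.Ioi 0) :=
    hZ1.congr_fun (fun y hy => by simp only [abs_of_nonneg (hf_nonneg y hy)]) measurableSet_Ioi
  have fa2 : IntegrableOn (fun y => y ^ 2 * |f y|) (Set.Ioi 0) :=
    hZ2.congr_fun (fun y hy => by simp only [abs_of_nonneg (hf_nonneg y hy)]) measurableSet_Ioi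
  have tot : ∫ y in Set.Ioi 0, |f y| = 1 := by
    rw [← hf_total]
    exact setIntegral_congr_fun measurableSet_Ioi fun y hy => abs_of_nonneg (hf_nonneg y hy)
  set J1 := ∫ y in Set.Ioi 0, y * |f y|
  set J2 := ∫ y in Set.Ioi 0, y ^ 2 * |f y|
  obtain ⟨M, hM⟩ := hw2
  obtain ⟨N, hN⟩ := hw 1
  have hM0 : 0 ≤ M := (abs_nonneg _).trans (hM 1 one_pos)
  set C := |N| + M with hC
  have hC0 : 0 ≤ C := by positivity
  have w0 : ∀ u, 0 < u → |w u| ≤ C := fun u hu => by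
    rcases lt_or_ge u 1 with h | h
    · have := hN u ⟨hu, h⟩
      linarith [le_abs_self N]
    · have h1 := hM u hu
      rw [abs_mul, abs_of_pos (pow_pos hu 2)] at h1
      have : 1 * |w u| ≤ u ^ 2 * |w u| := by
        gcongr
        nlinarith
      linarith [abs_nonneg N]
  have w1' : ∀ u, 0 < u → |u * w u| ≤ C + M := fun u hu => by
    have h1 := hM u hu
    rw [abs_mul, abs_of_pos (pow_pos hu 2)] at h1
    rw [abs_mul, abs_of_pos hu]
    have : u * |w u| ≤ (1 + u ^ 2) * |w u| := by
      gcongr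
      nlinarith [sq_nonneg (u - 1)]
    linarith [w0 u hu]
  have b0 := ren_bd (C := C) hφ1 hg (by
    intro u hu B hB hs
    rw [heq u hu]
    have h := cv_bd0 hu hB fa hs
    rw [tot, mul_one] at h
    refine (abs_add_le _ _).trans ?_
    rw [abs_mul, abs_of_pos hφ0]
    gcongr
    exact w0 u hu)
  set A0 := C / (1 - φ) with hA0
  have hA0' : 0 ≤ A0 := (abs_nonneg _).trans (b0 1 one_pos)
  have b1 := ren_bd (g := fun u => u * g u) (C := φ * (A0 * J1) + (C + M)) hφ1 (hg.mul hid) (by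
    intro u hu B hB hs
    rw [heq u hu]
    have h := cv_bd1 hu hA0' hB fa fa1 (fun s hs => b0 s hs.1) hs
    rw [tot, mul_one] at h
    have e : u * (φ * cv g f u + w u) = φ * (u * cv g f u) + u * w u := by ring
    rw [e]
    refine (abs_add_le _ _).trans ?_
    rw [abs_mul, abs_of_pos hφ0]
    have := w1' u hu
    have := mul_le_mul_of_nonneg_left h hφ0.le
    linarith)
  set A1 := (φ * (A0 * J1) + (C + M)) / (1 - φ) with hA1
  have hA1' : 0 ≤ A1 := (abs_nonneg _).trans (b1 1 one_pos)
  have hsq : LB (fun u => u ^ 2) := by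
    have := hid.mul hid
    simpa only [sq] using this
  have b2 := ren_bd (g := fun u => u ^ 2 * g u) (C := φ * (2 * A1 * J1 + A0 * J2) + M) hφ1 (hg.mul hsq) (by
    intro u hu B hB hs
    rw [heq u hu]
    have h := cv_bd2 hu hA0' hA1' hB fa fa1 fa2 (fun s hs => b0 s hs.1) (fun s hs => b1 s hs.1) hs
    rw [tot, mul_one] at h
    have e : u ^ 2 * (φ * cv g f u + w u) = φ * (u ^ 2 * cv g f u) + u ^ 2 * w u := by ring
    rw [e]
    refine (abs_add_le _ _).trans ?_
    rw [abs_mul, abs_of_pos hφ0]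
    have := hM u hu
    have := mul_le_mul_of_nonneg_left h hφ0.le
    linarith)
  set A2 := (φ * (2 * A1 * J1 + A0 * J2) + M) / (1 - φ)
  have hA2' : 0 ≤ A2 := (abs_nonneg _).trans (b2 1 one_pos)
  refine ⟨A0 + A1 + A2, by positivity, fun u hu => ⟨?_, ?_, ?_⟩⟩
  · linarith [b0 u hu]
  · linarith [b1 u hu]
  · linarith [b2 u hu]

lemma deriv_pack {h : ℝ → ℝ} {n : ℕ} (hh : ContDiffOn ℝ (n + 1) h (Set.Ioi 0)) :
    (∀ x, 0 < x → HasDerivAt h (deriv h x) x) ∧ ContDiffOn ℝ n (deriv h) (Set.Ioi 0) := by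
  have h1 := (contDiffOn_succ_iff_deriv_of_isOpen isOpen_Ioi).1 hh
  exact ⟨fun x hx => (h1.1.differentiableAt (Ioi_mem_nhds hx)).hasDerivAt, h1.2.2⟩

lemma contDiff_up {h h' : ℝ → ℝ} {n : ℕ} (hd : ∀ x, 0 < x → HasDerivAt h (h' x) x)
    (hh : ContDiffOn ℝ n h' (Set.Ioi 0)) : ContDiffOn ℝ (n + 1) h (Set.Ioi 0) := by
  refine (contDiffOn_succ_iff_deriv_of_isOpen isOpen_Ioi).2
    ⟨fun x hx => (hd x hx).differentiableAt.differentiableWithinAt, by simp, ?_⟩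
  exact hh.congr fun x hx => (hd x hx).deriv

/-- under conditions (1)-(6) on the defective renewal equation,
`m` is three times continuously differentiable on `(0,∞)` and
`‖u² m'''(u)‖ ≤ φ((I₀(f'') + |f'(0)|)‖u² m'(u)‖ + 2 I₁(f'')‖u m'(u)‖ + I₂(f'')‖m'‖)
 + φ f(0) ‖u² m''(u)‖ + ‖u² w₁''(u)‖ < ∞`,
all suprema being over `(0,∞)` and computed in `ℝ≥0∞`. -/
theorem stmt_12 (φ : ℝ) (hφ0 : 0 < φ) (hφ1 : φ < 1)
    (f F v m : ℝ → ℝ)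
    (hf_nonneg : ∀ u : ℝ, 0 < u → 0 ≤ f u)
    (hf_integrable : MeasureTheory.IntegrableOn f (Set.Ioi 0))
    (hf_total : ∫ y in Set.Ioi (0:ℝ), f y = 1)
    (hF_def : ∀ u : ℝ, 0 ≤ u → F u = ∫ y in (0:ℝ)..u, f y)
    (hFf : ∀ u : ℝ, 0 < u → HasDerivAt F (f u) u)
    (hv_loc : ∀ x : ℝ, 0 < x → ∃ M, ∀ u ∈ Set.Icc (0:ℝ) x, |v u| ≤ M)
    (hm_loc : ∀ x : ℝ, 0 < x → ∃ M, ∀ u ∈ Set.Icc (0:ℝ) x, |m u| ≤ M)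
    (hm_eq : ∀ u : ℝ, 0 ≤ u →
      m u = φ * (∫ y in (0:ℝ)..u, m (u - y) * f y) + v u)
    -- Condition 1: `Z` has finite variance
    (hZ1 : MeasureTheory.IntegrableOn (fun y => y * f y) (Set.Ioi 0))
    (hZ2 : MeasureTheory.IntegrableOn (fun y => y ^ 2 * f y) (Set.Ioi 0))
    -- Condition 2: `F, v ∈ C²₀([0,∞))`
    (hF_c : ContinuousOn F (Set.Ici 0)) (hF_cd : ContDiffOn ℝ 2 F (Set.Ioi 0))
    (hF_lim : ∀ k ≤ 2, ∃ L, Tendsto (iteratedDeriv k F) (𝓝[>] (0:ℝ)) (𝓝 L))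
    (hv_c : ContinuousOn v (Set.Ici 0)) (hv_cd : ContDiffOn ℝ 2 v (Set.Ioi 0))
    (hv_lim : ∀ k ≤ 2, ∃ L, Tendsto (iteratedDeriv k v) (𝓝[>] (0:ℝ)) (𝓝 L))
    (f0 f'0 v'0 : ℝ)
    (hf0 : Tendsto f (𝓝[>] (0:ℝ)) (𝓝 f0))
    (hv'0 : Tendsto (deriv v) (𝓝[>] (0:ℝ)) (𝓝 v'0))
    -- Condition 3: `f'` and `v''` belong to `C²([0,∞))`
    (hf_cd3 : ContDiffOn ℝ 3 f (Set.Ioi 0))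
    (hf'0 : Tendsto (deriv f) (𝓝[>] (0:ℝ)) (𝓝 f'0))
    (hv_cd4 : ContDiffOn ℝ 4 v (Set.Ioi 0))
    (hv''0 : ∃ L, Tendsto (iteratedDeriv 2 v) (𝓝[>] (0:ℝ)) (𝓝 L))
    -- Condition 4: `I₀(f'') < ∞` and `I₂(f'') < ∞`
    (h4a : MeasureTheory.IntegrableOn (fun y => |iteratedDeriv 2 f y|) (Set.Ioi 0))
    (h4b : MeasureTheory.IntegrableOn (fun y => y ^ 2 * |iteratedDeriv 2 f y|)
      (Set.Ioi 0))
    -- Condition 5: `‖u² w₁(u)‖ < ∞` and `‖u² w₂(u)‖ < ∞`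
    (h5a : ∃ M, ∀ u : ℝ, 0 < u → |u ^ 2 * w1 φ v f u| ≤ M)
    (h5b : ∃ M, ∀ u : ℝ, 0 < u → |u ^ 2 * w2 φ f0 v'0 v f u| ≤ M)
    -- Condition 6: `‖u² w₁''(u)‖ < ∞` and `‖u² w₂''(u)‖ < ∞`
    (h6a : ∃ M, ∀ u : ℝ, 0 < u → |u ^ 2 * iteratedDeriv 2 (w1 φ v f) u| ≤ M)
    (h6b : ∃ M, ∀ u : ℝ, 0 < u → |u ^ 2 * iteratedDeriv 2 (w2 φ f0 v'0 v f) u| ≤ M) :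
    ContDiffOn ℝ 3 m (Set.Ioi 0) ∧
    ∀ B : ℝ≥0∞,
      B = ENNReal.ofReal φ *
            (ENNReal.ofReal ((∫ y in Set.Ioi (0:ℝ), |iteratedDeriv 2 f y|) + |f'0|)
                * (⨆ u ∈ Set.Ioi (0:ℝ), (‖u ^ 2 * deriv m u‖₊ : ℝ≥0∞))
              + 2 * ENNReal.ofReal (∫ y in Set.Ioi (0:ℝ), y * |iteratedDeriv 2 f y|)
                * (⨆ u ∈ Set.Ioi (0:ℝ), (‖u * deriv m u‖₊ : ℝ≥0∞))
              + ENNReal.ofReal (∫ y in Set.Ioi (0:ℝ), y ^ 2 * |iteratedDeriv 2 f y|)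
                * (⨆ u ∈ Set.Ioi (0:ℝ), (‖deriv m u‖₊ : ℝ≥0∞)))
          + ENNReal.ofReal (φ * f0)
            * (⨆ u ∈ Set.Ioi (0:ℝ), (‖u ^ 2 * iteratedDeriv 2 m u‖₊ : ℝ≥0∞))
          + (⨆ u ∈ Set.Ioi (0:ℝ), (‖u ^ 2 * iteratedDeriv 2 (w1 φ v f) u‖₊ : ℝ≥0∞)) →
      (⨆ u ∈ Set.Ioi (0:ℝ), (‖u ^ 2 * iteratedDeriv 3 m u‖₊ : ℝ≥0∞)) ≤ B ∧ B < ⊤ := by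
    -- derivatives of f
  obtain ⟨df, cf1⟩ := deriv_pack (n := 2) (by exact_mod_cast hf_cd3)
  obtain ⟨df1, cf2⟩ := deriv_pack (n := 1) (by exact_mod_cast cf1)
  obtain ⟨dv, cv1⟩ := deriv_pack (n := 3) (by exact_mod_cast hv_cd4)
  obtain ⟨dv1, cv2⟩ := deriv_pack (n := 2) (by exact_mod_cast cv1)
  have it2 : ∀ h : ℝ → ℝ, iteratedDeriv 2 h = deriv (deriv h) := fun h => by
    rw [iteratedDeriv_succ, iteratedDeriv_one]
  have it3 : ∀ h : ℝ → ℝ, iteratedDeriv 3 h = deriv (deriv (deriv h)) := fun h => by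
    rw [iteratedDeriv_succ, it2]
  simp only [it2, it3] at *
  have fc : ContinuousOn f (Set.Ioi 0) := hf_cd3.continuousOn
  have f1c : ContinuousOn (deriv f) (Set.Ioi 0) := cf1.continuousOn
  have f2c : ContinuousOn (deriv (deriv f)) (Set.Ioi 0) := cf2.continuousOn
  have flb := lb_of_tendsto fc hf0
  have f1lb := lb_of_tendsto f1c hf'0
  have fli := flb.li' fc
  have f1li := f1lb.li' f1c
  have f2int : IntegrableOn (deriv (deriv f)) (Set.Ioi 0) := by
    refine (integrable_norm_iff (f2c.aestronglyMeasurable measurableSet_Ioi)).1 ?_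
    exact h4a
  have f2li : LI (deriv (deriv f)) := fun T => f2int.mono_set Set.Ioo_subset_Ioi_self
  have pf := ftc0 df f1li hf0
  have pf1 := ftc0 df1 f2li hf'0
  -- the function w1
  set W := w1 φ v f with hW
  have cW : ContDiffOn ℝ ((2:ℕ) + 1) W (Set.Ioi 0) := by
    have h1 : ContDiffOn ℝ 3 (fun u => φ * v 0 * f u + deriv v u) (Set.Ioi 0) :=
      (contDiffOn_const.mul hf_cd3).add cv1
    norm_num
    exact h1
  obtain ⟨dW, cW1⟩ := deriv_pack cW
  obtain ⟨dW1, cW2⟩ := deriv_pack (n := 1) (by exact_mod_cast cW1)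
  have W0 : Tendsto W (𝓝[>] 0) (𝓝 (φ * v 0 * f0 + v'0)) := (hf0.const_mul _).add hv'0
  obtain ⟨L2, hL2⟩ := hv''0
  have dWeq : ∀ u, 0 < u → deriv W u = φ * v 0 * deriv f u + deriv (deriv v) u := fun u hu =>
    (((df u hu).const_mul (φ * v 0)).add (dv1 u hu)).deriv
  have W1lim : Tendsto (deriv W) (𝓝[>] 0) (𝓝 (φ * v 0 * f'0 + L2)) := by
    refine ((hf'0.const_mul _).add hL2).congr' ?_
    filter_upwards [self_mem_nhdsWithin] with u hu
    exact (dWeq u hu).symm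
  set g0 := φ * v 0 * f0 + v'0 with hg0
  -- the equation for m
  have meq : ∀ u, 0 ≤ u → m u = φ * cv m f u + v u := by
    intro u hu
    rw [hm_eq u hu, cv_comm]
    simp only [cv, mul_comm]
  have m0 : m 0 = v 0 := by rw [meq 0 le_rfl, cv_zero]; ring
  have mlb : LB m := by
    intro T
    rcases lt_or_ge 0 T with h | h
    · obtain ⟨M, hM⟩ := hm_loc T h
      exact ⟨M, fun u hu => hM u ⟨hu.1.le, hu.2.le⟩⟩
    · exact ⟨0, fun u hu => absurd (hu.1.trans hu.2) (not_lt.2 h)⟩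
  have hfm : Measurable ((Set.Ioi 0).indicator f) := by
    have h := fc.measurable_piecewise (g := fun _ => (0:ℝ)) continuousOn_const measurableSet_Ioi
    have e : (Set.Ioi 0).piecewise f (fun _ => (0:ℝ)) = (Set.Ioi 0).indicator f :=
      Set.piecewise_eq_indicator
    rwa [e] at h
  have mli : LI m := by
    refine mlb.li fun T => ?_
    obtain ⟨M, hM⟩ := mlb T
    refine meas_sol (φ := φ) hfm (hv_c.mono fun x hx => hx.1.le) hM fun u hu => ?_
    rw [meq u hu.1.le, cv_ind hu.1.le hu.2.le]
  have mc0 : ContinuousOn m (Set.Ici 0) := by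
    have hprim : ∀ k : ℝ → ℝ, LI k → ContinuousOn (fun u => ∫ s in (0:ℝ)..u, k s) (Set.Ici 0) := by
      intro k hk u hu
      have hu' : (0:ℝ) ≤ u := hu
      have h1 := intervalIntegral.continuousOn_primitive_interval'
        (hk.ii le_rfl (show (0:ℝ) ≤ u + 1 by linarith)) Set.left_mem_uIcc
      rw [Set.uIcc_of_le (by linarith)] at h1
      refine (h1 u ⟨hu', by linarith⟩).mono_of_mem_nhdsWithin ?_
      rw [← Set.Ici_inter_Iic]
      exact Filter.inter_mem self_mem_nhdsWithin
        (mem_nhdsWithin_of_mem_nhds (Iic_mem_nhds (by linarith)))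
    have h2 : ContinuousOn (fun u => φ * (f0 * (∫ s in (0:ℝ)..u, m s)
        + ∫ t in (0:ℝ)..u, cv m (deriv f) t) + v u) (Set.Ici 0) :=
      (continuousOn_const.mul ((continuousOn_const.mul (hprim _ mli)).add
        (hprim _ (cv_LI mli f1li)))).add hv_c
    refine h2.congr fun u hu => ?_
    rw [meq u hu, cv_prim mli f1li pf hu]
  have mc : ContinuousOn m (Set.Ioi 0) := mc0.mono Set.Ioi_subset_Ici_self
  have mlim : Tendsto m (𝓝[>] 0) (𝓝 (v 0)) := by
    rw [← m0]
    exact (mc0 0 Set.self_mem_Ici).mono_left (nhdsWithin_mono _ Set.Ioi_subset_Ici_self)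
  -- generic derivative transfer
  have dsol : ∀ k w : ℝ → ℝ, (∀ u, 0 < u → k u = φ * cv k f u + w u) → ∀ u c w', 0 < u →
      HasDerivAt (cv k f) c u → HasDerivAt w w' u → HasDerivAt k (φ * c + w') u := by
    intro k w hk u c w' hu h1 h2
    refine ((h1.const_mul φ).add h2).congr_of_eventuallyEq ?_
    filter_upwards [Ioi_mem_nhds hu] with x hx
    exact hk x hx
  -- first derivative
  have dm : ∀ u, 0 < u → HasDerivAt m (φ * (f0 * m u + cv m (deriv f) u) + deriv v u) u :=
    fun u hu => dsol m v (fun x hx => meq x hx.le) u _ _ hu (cv_deriv mlb mc f1li pf hu) (dv u hu)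
  set g := deriv m with hg
  have geq1 : ∀ u, 0 < u → g u = φ * (f0 * m u + cv m (deriv f) u) + deriv v u :=
    fun u hu => (dm u hu).deriv
  have dm' : ∀ u, 0 < u → HasDerivAt m (g u) u := fun u hu => by rw [geq1 u hu]; exact dm u hu
  have gc : ContinuousOn g (Set.Ioi 0) := by
    have h2 : ContinuousOn (fun u => φ * (f0 * m u + cv m (deriv f) u) + deriv v u) (Set.Ioi 0) :=
      (continuousOn_const.mul ((continuousOn_const.mul mc).add
        ((cv_cont mlb mc f1li).mono Set.Ioi_subset_Ici_self))).add cv1.continuousOn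
    exact h2.congr fun u hu => geq1 u hu
  have glim : Tendsto g (𝓝[>] 0) (𝓝 g0) := by
    have h2 := (((mlim.const_mul f0).add (cv_tendsto mlb mc f1li)).const_mul φ).add hv'0
    have e : φ * (f0 * v 0 + 0) + v'0 = g0 := by rw [hg0]; ring
    rw [e] at h2
    refine h2.congr' ?_
    filter_upwards [self_mem_nhdsWithin] with u hu
    exact (geq1 u hu).symm
  have glb := lb_of_tendsto gc glim
  have gli := glb.li' gc
  have geq : ∀ u, 0 < u → g u = φ * cv g f u + W u := by
    intro u hu
    have h1 := cv_deriv flb fc gli (ftc0 dm' gli mlim) hu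
    have e : cv f m = cv m f := funext fun x => cv_comm _ _ _
    rw [e] at h1
    have h2 := (dsol m v (fun x hx => meq x hx.le) u _ _ hu h1 (dv u hu)).deriv
    rw [← hg] at h2
    rw [h2, hW, w1, cv_comm f g]
    ring
  -- second derivative
  have dg : ∀ u, 0 < u → HasDerivAt g (φ * (f0 * g u + cv g (deriv f) u) + deriv W u) u :=
    fun u hu => dsol g W geq u _ _ hu (cv_deriv glb gc f1li pf hu) (dW u hu)
  set k := deriv g with hk
  have keq1 : ∀ u, 0 < u → k u = φ * (f0 * g u + cv g (deriv f) u) + deriv W u :=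
    fun u hu => (dg u hu).deriv
  have dg' : ∀ u, 0 < u → HasDerivAt g (k u) u := fun u hu => by rw [keq1 u hu]; exact dg u hu
  have kc : ContinuousOn k (Set.Ioi 0) := by
    have h2 : ContinuousOn (fun u => φ * (f0 * g u + cv g (deriv f) u) + deriv W u) (Set.Ioi 0) :=
      (continuousOn_const.mul ((continuousOn_const.mul gc).add
        ((cv_cont glb gc f1li).mono Set.Ioi_subset_Ici_self))).add cW1.continuousOn
    exact h2.congr fun u hu => keq1 u hu
  have klim := (((glim.const_mul f0).add (cv_tendsto glb gc f1li)).const_mul φ).add W1lim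
  have klim' : Tendsto k (𝓝[>] 0) (𝓝 (φ * (f0 * g0 + 0) + (φ * v 0 * f'0 + L2))) := by
    refine klim.congr' ?_
    filter_upwards [self_mem_nhdsWithin] with u hu
    exact (keq1 u hu).symm
  have klb := lb_of_tendsto kc klim'
  have kli := klb.li' kc
  have keq : ∀ u, 0 < u → k u = φ * cv k f u + w2 φ f0 v'0 v f u := by
    intro u hu
    have h1 := cv_deriv flb fc kli (ftc0 dg' kli glim) hu
    have e : cv f g = cv g f := funext fun x => cv_comm _ _ _
    rw [e] at h1
    have h2 := (dsol g W geq u _ _ hu h1 (dW u hu)).deriv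
    rw [← hk] at h2
    rw [h2, w2, cv_comm f k]
    ring
  -- third derivative
  have dk : ∀ u, 0 < u → HasDerivAt k (φ * (f0 * k u + (f'0 * g u + cv g (deriv (deriv f)) u))
      + deriv (deriv W) u) u := by
    intro u hu
    have h1 := cv_deriv glb gc f2li pf1 hu
    have h2 := ((((dg' u hu).const_mul f0).add h1).const_mul φ).add (dW1 u hu)
    refine h2.congr_of_eventuallyEq ?_
    filter_upwards [Ioi_mem_nhds hu] with x hx
    exact keq1 x hx
  have leq : ∀ u, 0 < u → deriv k u = φ * (f0 * k u + (f'0 * g u + cv g (deriv (deriv f)) u))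
      + deriv (deriv W) u := fun u hu => (dk u hu).deriv
  have lc : ContinuousOn (deriv k) (Set.Ioi 0) := by
    have h2 : ContinuousOn (fun u => φ * (f0 * k u + (f'0 * g u + cv g (deriv (deriv f)) u))
      + deriv (deriv W) u) (Set.Ioi 0) :=
      (continuousOn_const.mul ((continuousOn_const.mul kc).add ((continuousOn_const.mul gc).add
        ((cv_cont glb gc f2li).mono Set.Ioi_subset_Ici_self)))).add cW2.continuousOn
    exact h2.congr fun u hu => leq u hu
  have dk' : ∀ u, 0 < u → HasDerivAt k (deriv k u) u := fun u hu => by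
    rw [leq u hu]; exact dk u hu
  have cd1 := contDiff_up (n := 0) dk' (by simpa using lc)
  have cd2 := contDiff_up (n := 1) dg' (by simpa using cd1)
  have cd3 := contDiff_up (n := 2) dm' (by norm_num at cd2 ⊢; exact cd2)
  refine ⟨by norm_num at cd3; exact cd3, ?_⟩
  -- bounds
  have Wlb := lb_of_tendsto cW.continuousOn W0
  have w2lb : LB (w2 φ f0 v'0 v f) := by
    refine lb_of_tendsto (L := φ * g0 * f0 + (φ * v 0 * f'0 + L2)) ?_ ?_
    · exact (continuousOn_const.mul fc).add cW1.continuousOn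
    · exact (hf0.const_mul _).add W1lim
  obtain ⟨A, hA0, hA⟩ := ren_all hφ0 hφ1 glb Wlb hf_nonneg hf_integrable hf_total hZ1 hZ2 h5a geq
  obtain ⟨D, hD0, hD⟩ := ren_all hφ0 hφ1 klb w2lb hf_nonneg hf_integrable hf_total hZ1 hZ2 h5b keq
  obtain ⟨E, hE⟩ := h6a
  have h4c : IntegrableOn (fun y => y * |deriv (deriv f) y|) (Set.Ioi 0) := by
    refine Integrable.mono' (h4a.add h4b) ?_ ?_
    · exact (continuousOn_id.mul f2c.abs).aestronglyMeasurable measurableSet_Ioi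
    · filter_upwards [ae_restrict_mem measurableSet_Ioi] with y hy
      have hy' : (0:ℝ) < y := hy
      show ‖y * |deriv (deriv f) y|‖ ≤ |deriv (deriv f) y| + y ^ 2 * |deriv (deriv f) y|
      rw [Real.norm_eq_abs, abs_mul, abs_abs, abs_of_pos hy']
      have : y * |deriv (deriv f) y| ≤ (1 + y ^ 2) * |deriv (deriv f) y| := by
        gcongr
        nlinarith [sq_nonneg (y - 1)]
      linarith
  have f0nn : 0 ≤ f0 := by
    refine ge_of_tendsto hf0 ?_
    filter_upwards [self_mem_nhdsWithin] with u hu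
    exact hf_nonneg u hu
  set I0 := ∫ y in Set.Ioi (0:ℝ), |deriv (deriv f) y| with hI0
  set I1 := ∫ y in Set.Ioi (0:ℝ), y * |deriv (deriv f) y| with hI1
  set I2 := ∫ y in Set.Ioi (0:ℝ), y ^ 2 * |deriv (deriv f) y| with hI2
  have I0nn : 0 ≤ I0 := integral_nonneg fun y => abs_nonneg _
  have I1nn : 0 ≤ I1 := setIntegral_nonneg measurableSet_Ioi fun y hy =>
    mul_nonneg (le_of_lt hy) (abs_nonneg _)
  have I2nn : 0 ≤ I2 := integral_nonneg fun y => mul_nonneg (sq_nonneg _) (abs_nonneg _)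
  -- suprema
  have sup : ∀ h : ℝ → ℝ, ∀ C : ℝ, (∀ u, 0 < u → |h u| ≤ C) →
      ∃ S : ℝ, 0 ≤ S ∧ (⨆ u ∈ Set.Ioi (0:ℝ), (‖h u‖₊ : ℝ≥0∞)) = ENNReal.ofReal S ∧
        ∀ u, 0 < u → |h u| ≤ S := by
    intro h C hC
    have hfin : (⨆ u ∈ Set.Ioi (0:ℝ), (‖h u‖₊ : ℝ≥0∞)) ≠ ⊤ := by
      refine ne_top_of_le_ne_top (b := ENNReal.ofReal C) ENNReal.ofReal_ne_top ?_
      refine iSup₂_le fun u hu => ?_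
      refine le_of_eq_of_le (ofReal_norm _).symm ?_
      exact ENNReal.ofReal_le_ofReal (hC u hu)
    refine ⟨_, ENNReal.toReal_nonneg, (ENNReal.ofReal_toReal hfin).symm, fun u hu => ?_⟩
    have h1 : (‖h u‖₊ : ℝ≥0∞) ≤ _ := le_iSup₂ (f := fun u (_ : u ∈ Set.Ioi (0:ℝ)) =>
      (‖h u‖₊ : ℝ≥0∞)) u hu
    have := ENNReal.toReal_mono hfin h1
    simpa using this
  obtain ⟨S2, hS2, eS2, bS2⟩ := sup (fun u => u ^ 2 * g u) A fun u hu => (hA u hu).2.2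
  obtain ⟨S1, hS1, eS1, bS1⟩ := sup (fun u => u * g u) A fun u hu => (hA u hu).2.1
  obtain ⟨S0, hS0, eS0, bS0⟩ := sup (fun u => g u) A fun u hu => (hA u hu).1
  obtain ⟨R, hR, eR, bR⟩ := sup (fun u => u ^ 2 * k u) D fun u hu => (hD u hu).2.2
  obtain ⟨Q, hQ, eQ, bQ⟩ := sup (fun u => u ^ 2 * deriv (deriv W) u) E hE
  intro B hB
  rw [eS2, eS1, eS0, eR, eQ] at hB
  have hB' : B = ENNReal.ofReal (φ * ((I0 + |f'0|) * S2 + 2 * I1 * S1 + I2 * S0)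
      + φ * f0 * R + Q) := by
    have two : (2:ℝ≥0∞) = ENNReal.ofReal 2 := by simp
    rw [hB, two, ← ENNReal.ofReal_mul (by positivity : 0 ≤ I0 + |f'0|),
      ← ENNReal.ofReal_mul (by positivity : (0:ℝ) ≤ 2),
      ← ENNReal.ofReal_mul (by positivity : 0 ≤ 2 * I1), ← ENNReal.ofReal_mul I2nn,
      ← ENNReal.ofReal_add (by positivity) (by positivity),
      ← ENNReal.ofReal_add (by positivity) (by positivity), ← ENNReal.ofReal_mul hφ0.le,
      ← ENNReal.ofReal_mul (by positivity : 0 ≤ φ * f0),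
      ← ENNReal.ofReal_add (by positivity) (by positivity),
      ← ENNReal.ofReal_add (by positivity) hQ]
  refine ⟨?_, by rw [hB']; exact ENNReal.ofReal_lt_top⟩
  rw [hB']
  refine iSup₂_le fun u hu => ?_
  have hu' : (0:ℝ) < u := hu
  refine le_of_eq_of_le (ofReal_norm _).symm ?_
  refine ENNReal.ofReal_le_ofReal ?_
  rw [Real.norm_eq_abs, leq u hu']
  have hcv := cv_bd2 hu' hS0 hS1 hS2 h4a h4c h4b (fun s hs => bS0 s hs.1) (fun s hs => bS1 s hs.1)
    (fun s hs => bS2 s hs.1)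
  have e : u ^ 2 * (φ * (f0 * k u + (f'0 * g u + cv g (deriv (deriv f)) u)) + deriv (deriv W) u)
    = φ * (f'0 * (u ^ 2 * g u) + u ^ 2 * cv g (deriv (deriv f)) u) + φ * f0 * (u ^ 2 * k u)
      + u ^ 2 * deriv (deriv W) u := by ring
  rw [e]
  have t1 : |φ * (f'0 * (u ^ 2 * g u) + u ^ 2 * cv g (deriv (deriv f)) u)|
      ≤ φ * ((I0 + |f'0|) * S2 + 2 * I1 * S1 + I2 * S0) := by
    rw [abs_mul, abs_of_pos hφ0]
    refine mul_le_mul_of_nonneg_left ?_ hφ0.le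
    refine (abs_add_le _ _).trans ?_
    rw [abs_mul]
    have := mul_le_mul_of_nonneg_left (bS2 u hu') (abs_nonneg f'0)
    linarith
  have t2 : |φ * f0 * (u ^ 2 * k u)| ≤ φ * f0 * R := by
    rw [abs_mul, abs_of_nonneg (by positivity : 0 ≤ φ * f0)]
    exact mul_le_mul_of_nonneg_left (bR u hu') (by positivity)
  have t3 := bQ u hu'
  refine (abs_add_le _ _).trans (add_le_add ((abs_add_le _ _).trans (add_le_add t1 t2)) t3)
end
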